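/- arXiv:2104.03260 — 3 statements merged into one kernel-verified Lean document; each statement's English description precedes it below -/
import Mathlib

section
/- For every ε > 0 there exists K such that for all k ≥ K and all integers n ≥ 2k + 100·ln k, the number of non-trivial intersecting families of k-element subsets of [n] is at most ε · 2^{\binom{n-1}{k-1}}. In particular, since the number of trivial intersecting families is at least 2^{\binom{n-1}{k-1}}, almost all intersecting families in \binom{[n]}{k} are trivial. -/
section helpers
open Finset


theorem container {β γ : Type*} [DecidableEq β] [DecidableEq γ] (nb : β → Finset γ)
    (F : Finset β) (ψ : ℕ) (hψ : 0 < ψ) :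
    ∃ T ⊆ F, T.card * ψ ≤ (T.biUnion nb).card ∧
      ∀ v ∈ F, (nb v \ T.biUnion nb).card < ψ := by
  classical
  let S := F.powerset.filter (fun T => T.card * ψ ≤ (T.biUnion nb).card)
  have hS : S.Nonempty := ⟨∅, by simp [S]⟩
  obtain ⟨T, hT, hmax⟩ := S.exists_max_image Finset.card hS
  simp only [S, mem_filter, mem_powerset] at hT hmax
  refine ⟨T, hT.1, hT.2, fun v hv => ?_⟩
  by_contra hcon
  push Not at hcon
  have hvT : v ∉ T := by
    intro hvT
    have : nb v \ T.biUnion nb = ∅ := by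
      rw [sdiff_eq_empty_iff_subset]
      exact subset_biUnion_of_mem nb hvT
    rw [this] at hcon
    simp at hcon
    omega
  have h1 := hmax (insert v T) ⟨by
    intro a ha
    rcases mem_insert.1 ha with rfl | h
    · exact hv
    · exact hT.1 h, by
    rw [card_insert_of_notMem hvT, biUnion_insert, ← sdiff_union_self_eq_union,
      card_union_of_disjoint sdiff_disjoint]
    have := hT.2
    nlinarith⟩
  rw [card_insert_of_notMem hvT] at h1
  omega

theorem count_small {β : Type*} [DecidableEq β] (U : Finset β) (b : ℕ) :
    (U.powerset.filter (fun T => T.card ≤ b)).card ≤ (U.card + 1) ^ b := by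
  have h : U.powerset.filter (fun T => T.card ≤ b) =
      (range (b+1)).biUnion (fun i => U.powersetCard i) := by
    ext T
    simp only [mem_filter, mem_powerset, mem_biUnion, mem_range, mem_powersetCard]
    constructor
    · rintro ⟨h1, h2⟩; exact ⟨T.card, by omega, h1, rfl⟩
    · rintro ⟨i, h1, h2, h3⟩; exact ⟨h2, by omega⟩
  rw [h, add_pow]
  refine card_biUnion_le.trans (sum_le_sum fun i hi => ?_)
  rw [card_powersetCard]
  have hi' : i ≤ b := by simpa [Nat.lt_succ_iff] using hi
  have h2 : U.card.choose i ≤ U.card ^ i := by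
    exact Nat.choose_le_pow U.card i
  have h3 : 0 < b.choose i := Nat.choose_pos hi'
  simp only [one_pow, mul_one]
  calc _ ≤ U.card ^ i := h2
    _ ≤ _ := Nat.le_mul_of_pos_right _ h3

/-- Keevash form of the Kruskal-Katona theorem (Lovász version). -/
theorem kk {α : Type*} [DecidableEq α] (r : ℕ) : ∀ (x : ℕ) (A G : Finset (Finset α)),
    r + 1 ≤ x → (∀ S ∈ A, S.card = r + 2) → (∀ S ∈ G, S.card = r + 1) →
    (∀ S ∈ A, ∀ a ∈ S, S.erase a ∈ G) → G.card ≤ x.choose (r+1) →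
    (r+2) * A.card ≤ (x - (r+1)) * G.card := by
  induction r with
  | zero => ?_
  | succ r ih => ?_
  all_goals
    intro x A G hx hA hG hsh hcard
    obtain ⟨x, rfl⟩ : ∃ y, x = y + 1 := ⟨x - 1, by omega⟩
    have hdc : ∀ (H : Finset (Finset α)) (c : ℕ) (W : Finset α), (∀ S ∈ H, S.card = c) →
        (∀ S ∈ H, S ⊆ W) → ∑ v ∈ W, (H.filter (fun S => v ∈ S)).card = c * H.card := by
      intro H c W h1 h2
      simp_rw [card_filter]
      rw [sum_comm]
      rw [mul_comm, ← smul_eq_mul, ← sum_const]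
      refine sum_congr rfl fun S hS => ?_
      rw [← card_filter, ← h1 S hS]
      congr 1
      ext v
      simp only [mem_filter]
      exact ⟨fun h => h.2, fun h => ⟨h2 S hS h, h⟩⟩
    let W := A.sup id ∪ G.sup id
    have hWA : ∀ S ∈ A, S ⊆ W := fun S hS => (le_sup (f := id) hS).trans subset_union_left
    have hWG : ∀ S ∈ G, S ⊆ W := fun S hS => (le_sup (f := id) hS).trans subset_union_right
    have e1 := hdc A _ W hA hWA
    have e2 := hdc G _ W hG hWG
    -- links
    have hle1 : ∀ v, (A.filter (fun S => v ∈ S)).card + (G.filter (fun S => v ∈ S)).card ≤ G.card := by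
      intro v
      rw [← card_filter_add_card_filter_not (s := G) (fun S => v ∈ S), add_comm]
      refine Nat.add_le_add_left (card_le_card_of_injOn (fun S : Finset α => S.erase v) ?_ ?_) _
      · intro S hS
        simp only [coe_filter, Set.mem_ofPred_eq] at hS ⊢
        exact ⟨hsh S hS.1 v hS.2, by simp⟩
      · intro S hS T hT h
        simp only [coe_filter, Set.mem_ofPred_eq] at hS hT h
        rw [← insert_erase hS.2, ← insert_erase hT.2, h]
  · have key : ∀ v, (0+1) * (A.filter (fun S => v ∈ S)).card ≤
        (x + 1 - (0 + 1)) * (G.filter (fun S => v ∈ S)).card := by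
      intro v
      rcases Nat.eq_zero_or_pos (G.filter (fun S => v ∈ S)).card with h0 | h0
      · have : A.filter (fun S => v ∈ S) = ∅ := by
          rw [filter_eq_empty_iff]
          intro S hS hv
          obtain ⟨w, hw, hwv⟩ : ∃ w ∈ S, w ≠ v := by
            apply Finset.exists_mem_ne
            rw [hA S hS]; norm_num
          rw [card_eq_zero, filter_eq_empty_iff] at h0
          exact h0 (hsh S hS w hw) (mem_erase.2 ⟨hwv.symm, hv⟩)
        rw [this]; simp
      · have := hle1 v
        simp at hcard
        simp
        nlinarith
    have := sum_le_sum (fun v (_ : v ∈ W) => key v)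
    rw [← mul_sum, ← mul_sum, e1, e2] at this
    simpa using this
  · have key : ∀ v, (r+1+1) * (A.filter (fun S => v ∈ S)).card ≤
        (x + 1 - (r + 1+1)) * (G.filter (fun S => v ∈ S)).card := by
      intro v
      rcases le_total (x.choose (r+1)) (G.filter (fun S => v ∈ S)).card with h0 | h0
      · have h1 := hle1 v
        have h2 := Nat.add_one_mul_choose_eq x (r+1)
        obtain ⟨z, hz⟩ : ∃ z, x = z + (r+1) := ⟨x - (r+1), by omega⟩
        have h3 : x + 1 - (r+1+1) = z := by omega
        rw [h3]
        have h4 : (x+1) = z + (r+1+1) := by omega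
        rw [h4] at h2 hcard
        nlinarith
      · let A' := (A.filter (fun S => v ∈ S)).image (fun S => S.erase v)
        let G' := (G.filter (fun S => v ∈ S)).image (fun S => S.erase v)
        have inj : ∀ H : Finset (Finset α), Set.InjOn (fun S : Finset α => S.erase v)
            ((H.filter (fun S => v ∈ S) : Finset (Finset α)) : Set (Finset α)) := by
          intro H S hS T hT h
          simp only [coe_filter, Set.mem_ofPred_eq] at hS hT h
          rw [← insert_erase hS.2, ← insert_erase hT.2, h]
        have cA : A'.card = (A.filter (fun S => v ∈ S)).card := card_image_of_injOn (inj A)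
        have cG : G'.card = (G.filter (fun S => v ∈ S)).card := card_image_of_injOn (inj G)
        rw [← cA, ← cG]
        have := ih x A' G' (by omega) ?_ ?_ ?_ (by rw [cG]; exact h0)
        · have h3 : x + 1 - (r+1+1) = x - (r+1) := by omega
          rw [h3]; exact this
        · intro S hS
          simp only [A', mem_image, mem_filter] at hS
          obtain ⟨T, ⟨hT, hv⟩, rfl⟩ := hS
          rw [card_erase_of_mem hv, hA T hT]; omega
        · intro S hS
          simp only [G', mem_image, mem_filter] at hS
          obtain ⟨T, ⟨hT, hv⟩, rfl⟩ := hS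
          rw [card_erase_of_mem hv, hG T hT]; omega
        · intro S hS a ha
          simp only [A', G', mem_image, mem_filter] at hS ⊢
          obtain ⟨T, ⟨hT, hv⟩, rfl⟩ := hS
          refine ⟨T.erase a, ⟨hsh T hT a (mem_of_mem_erase ha), ?_⟩, erase_right_comm⟩
          exact mem_erase.2 ⟨(ne_of_mem_erase ha).symm, hv⟩
    have := sum_le_sum (fun v (_ : v ∈ W) => key v)
    rw [← mul_sum, ← mul_sum, e1, e2] at this
    have h5 : 0 < r + 1 + 1 := by omega
    refine Nat.le_of_mul_le_mul_left (c := _) ?_ h5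
    calc _ ≤ _ := this
      _ = _ := by ring

theorem kk_chain {α : Type*} [DecidableEq α] (W : Finset α) (x t0 : ℕ) (ht0 : 1 ≤ t0)
    (C : Finset (Finset α)) (hcard : C.card ≤ x.choose t0)
    (t : ℕ) (ht : t0 ≤ t) : t ≤ x →
    ((W.powersetCard t).filter (fun S => ∀ u ⊆ S, u.card = t0 → u ∈ C)).card ≤ x.choose t ∧
    ((W.powersetCard t).filter (fun S => ∀ u ⊆ S, u.card = t0 → u ∈ C)).card * x.choose t0
      ≤ C.card * x.choose t := by
  induction t, ht using Nat.le_induction with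
  | base =>
    intro _
    have h : ((W.powersetCard t0).filter (fun S => ∀ u ⊆ S, u.card = t0 → u ∈ C)) ⊆ C := by
      intro S hS
      simp only [mem_filter, mem_powersetCard] at hS
      exact hS.2 S le_rfl hS.1.2
    have := card_le_card h
    exact ⟨this.trans hcard, Nat.mul_le_mul_right _ this⟩
  | succ t ht ih =>
    intro htx
    obtain ⟨i1, i2⟩ := ih (by omega)
    set A := ((W.powersetCard (t+1)).filter (fun S => ∀ u ⊆ S, u.card = t0 → u ∈ C))
    set G := ((W.powersetCard t).filter (fun S => ∀ u ⊆ S, u.card = t0 → u ∈ C))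
    obtain ⟨r, rfl⟩ : ∃ r, t = r + 1 := ⟨t - 1, by omega⟩
    have hk := kk r x A G (by omega) ?_ ?_ ?_ i1
    · have h2 := Nat.choose_succ_right_eq x (r+1)
      have hp : 0 < r + 1 + 1 := by omega
      constructor
      · refine Nat.le_of_mul_le_mul_left ?_ hp
        calc _ ≤ _ := hk
          _ ≤ (x - (r+1)) * x.choose (r+1) := Nat.mul_le_mul_left _ i1
          _ = _ := by rw [mul_comm, ← h2, mul_comm]
      · refine Nat.le_of_mul_le_mul_left ?_ hp
        calc (r+1+1) * (A.card * x.choose t0) = ((r+2) * A.card) * x.choose t0 := by ring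
          _ ≤ ((x - (r+1)) * G.card) * x.choose t0 := Nat.mul_le_mul_right _ hk
          _ = (x - (r+1)) * (G.card * x.choose t0) := by ring
          _ ≤ (x - (r+1)) * (C.card * x.choose (r+1)) := Nat.mul_le_mul_left _ i2
          _ = C.card * (x.choose (r+1) * (x - (r+1))) := by ring
          _ = _ := by rw [← h2]; ring
    · intro S hS
      simp only [A, mem_filter, mem_powersetCard] at hS
      exact hS.1.2
    · intro S hS
      simp only [G, mem_filter, mem_powersetCard] at hS
      exact hS.1.2
    · intro S hS a ha
      simp only [A, G, mem_filter, mem_powersetCard] at hS ⊢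
      refine ⟨⟨(erase_subset _ _).trans hS.1.1, ?_⟩, fun u hu => hS.2 u (hu.trans (erase_subset _ _))⟩
      rw [card_erase_of_mem ha, hS.1.2]; omega

set_option maxHeartbeats 1000000 in
theorem num3_real (p s f g c b ψ DB P Q DA P2 P1 R2 R1 R : ℝ)
    (hp : 0 ≤ p) (hs : 0 ≤ s) (hf : 0 ≤ f) (hsf : 1 ≤ s + f) (hg : 0 ≤ g) (hc : 0 ≤ c)
    (hDB : 0 < DB) (hP : 0 < P) (hQ : 0 < Q)
    (e1 : P * DB = Q * DA)
    (e2 : P2 * (2*p+2+3*s+f) = P1 * (p+1+2*s+f))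
    (e3 : P1 * (2*p+3+3*s+f) = P * (p+2+2*s+f))
    (e4 : R2 * (2*p+2+3*s+f) = R1 * (p+1))
    (e5 : R1 * (2*p+3+3*s+f) = R * (p+2))
    (e6 : R * (p+2) = Q * (p+2+3*s+f))
    (h1 : c * DB ≤ g * DA + c * ψ) (h3 : 16 * g ≤ Q) (h4 : 4 * (2*p+4+3*s+f) * ψ ≤ DB) :
    c ≤ P2 ∧ (b * P2 ≤ c * R2 → 2 * (2*p+4+3*s+f) * b + g ≤ 2 * (2*p+4+3*s+f) * g) := by
  obtain ⟨n, hn⟩ : ∃ n, n = 2*p+4+3*s+f := ⟨_, rfl⟩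
  obtain ⟨u, hu⟩ : ∃ u, u = p+2+3*s+f := ⟨_, rfl⟩
  obtain ⟨U, hU⟩ : ∃ U, U = p+2+2*s+f := ⟨_, rfl⟩
  rw [← hn] at h4 ⊢
  rw [← hu] at e6
  rw [← hU] at e3
  have hn1 : 5 ≤ n := by rw [hn]; linarith
  have hm : 2*p+3+3*s+f = n - 1 := by rw [hn]; ring
  have hm2 : 2*p+2+3*s+f = n - 2 := by rw [hn]; ring
  have hU1 : p+1+2*s+f = U - 1 := by rw [hU]; ring
  rw [hm2, hU1] at e2
  rw [hm] at e3 e5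
  rw [hm2] at e4
  have a1 : c * (4*n-1) * DB ≤ 4*n*g*DA := by
    have : c * (4 * n * ψ) ≤ c * DB := mul_le_mul_of_nonneg_left h4 hc
    have : 4 * n * (c*DB) ≤ 4 * n * (g * DA + c * ψ) := mul_le_mul_of_nonneg_left h1 (by linarith)
    linarith
  have a2 : c * (4*n-1) * Q ≤ 4*n*g*P := by
    refine le_of_mul_le_mul_right ?_ hDB
    calc c * (4*n-1) * Q * DB = Q * (c * (4*n-1) * DB) := by ring
      _ ≤ Q * (4*n*g*DA) := mul_le_mul_of_nonneg_left a1 hQ.le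
      _ = 4*n*g*(Q * DA) := by ring
      _ = 4*n*g*P*DB := by rw [← e1]; ring
  have a3 : 8 * c ≤ P := by
    have h5 : 16 * (c * (4*n-1)) ≤ 4*n*P := by
      refine le_of_mul_le_mul_right ?_ hQ
      have : (4 * n * P) * (16 * g) ≤ (4 * n * P) * Q := mul_le_mul_of_nonneg_left h3 (by positivity)
      linarith
    have h6 : c * (2 * n) ≤ c * (4 * n - 1) := mul_le_mul_of_nonneg_left (by linarith) hc
    have h7 : n * (8 * c) ≤ n * P := by linarith
    exact le_of_mul_le_mul_left h7 (by linarith)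
  have q1 : P2 * ((n-1)*(n-2)) = P * (U * (U-1)) := by
    calc P2 * ((n-1)*(n-2)) = (P2 * (n-2)) * (n-1) := by ring
      _ = (P1 * (n-1)) * (U-1) := by rw [e2]; ring
      _ = _ := by rw [e3]; ring
  have q2 : R2 * ((n-1)*(n-2)) = Q * (u * (p+1)) := by
    calc R2 * ((n-1)*(n-2)) = (R2 * (n-2)) * (n-1) := by ring
      _ = (R1 * (n-1)) * (p+1) := by rw [e4]; ring
      _ = (R * (p+2)) * (p+1) := by rw [e5]
      _ = _ := by rw [e6]; ring
  have hnn : 0 < (n-1)*(n-2) := by apply mul_pos <;> linarith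
  have hUn : n ≤ 2 * U := by rw [hn, hU]; linarith
  have hE : (n-1)*(n-2) ≤ 8 * (U*(U-1)) := by nlinarith
  constructor
  · refine le_of_mul_le_mul_right ?_ hnn
    rw [q1]
    nlinarith
  · intro h
    have hE0 : 0 < U * (U-1) := by linarith
    have t1 : b * (P * (U*(U-1))) ≤ c * (Q * (u * (p+1))) := by
      rw [← q1, ← q2]
      calc b * (P2 * ((n-1)*(n-2))) = (b * P2) * ((n-1)*(n-2)) := by ring
        _ ≤ (c * R2) * ((n-1)*(n-2)) := mul_le_mul_of_nonneg_right h hnn.le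
        _ = _ := by ring
    have hu0 : 0 < u := by rw [hu]; linarith
    have hk : u * (p+1) + u ≤ U * (U-1) := by
      have i1 : U = u - s := by rw [hU, hu]; ring
      have i2 : p = u - 2 - 3 * s - f := by rw [hu]; ring
      have i3 : 0 ≤ u * (s + f - 1) := mul_nonneg hu0.le (by linarith)
      rw [i1, i2]
      nlinarith [sq_nonneg s]
    have hUu : U * (U-1) ≤ n * u := by
      have j1 : U ≤ u := by rw [hu, hU]; linarith
      have j2 : U - 1 ≤ n := by rw [hn, hU]; linarith
      rw [mul_comm n u]
      exact mul_le_mul j1 j2 (by linarith) hu0.le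
    have t2 : b * (U*(U-1)) * (4*n-1) ≤ 4*n*g*(u*(p+1)) := by
      refine le_of_mul_le_mul_right ?_ hP
      calc b * (U*(U-1)) * (4*n-1) * P = (b * (P * (U*(U-1)))) * (4*n-1) := by ring
        _ ≤ (c * (Q * (u * (p+1)))) * (4*n-1) := mul_le_mul_of_nonneg_right t1 (by linarith)
        _ = (c * (4*n-1) * Q) * (u*(p+1)) := by ring
        _ ≤ (4*n*g*P) * (u*(p+1)) := mul_le_mul_of_nonneg_right a2 (by positivity)
        _ = _ := by ring
    have t3 : n * (u*(p+1)) ≤ (n-1) * (U*(U-1)) := by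
      have j3 : n * (u * (p+1) + u) ≤ n * (U * (U-1)) := mul_le_mul_of_nonneg_left hk (by linarith)
      linarith
    have t4 : b * (4*n-1) ≤ 4*g*(n-1) := by
      refine le_of_mul_le_mul_right ?_ hE0
      have : (4 * g) * (n * (u*(p+1))) ≤ (4*g) * ((n-1) * (U*(U-1))) :=
        mul_le_mul_of_nonneg_left t3 (by positivity)
      linarith
    have t5 : (4*n-1) * (2*n*b+g) ≤ (4*n-1)*(2*n*g) := by
      have j4 := mul_le_mul_of_nonneg_left t4 (by linarith : 0 ≤ 2 * n)
      have j5 : 0 ≤ n * g := mul_nonneg (by linarith) hg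
      linarith
    exact le_of_mul_le_mul_left t5 (by linarith)

set_option maxHeartbeats 2000000 in
/-- numeric core of the near-star part -/
theorem num3 (p s d g c b ψ : ℕ) (hs : 3 * s ≤ d) (hd : 1 ≤ d)
    (h1 : c * ((p+1+s).choose (p+1)) ≤ g * (p+2+d).choose s + c * ψ)
    (h3 : 16 * g ≤ (2*p+3+d).choose (p+1))
    (h4 : 4 * (2*p+4+d) * ψ ≤ (p+1+s).choose (p+1)) :
    c ≤ (2*p+1+d).choose (p+1+s) ∧
    (b * (2*p+1+d).choose (p+1+s) ≤ c * (2*p+1+d).choose (p+1+d) →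
      2 * (2*p+4+d) * b + g ≤ 2 * (2*p+4+d) * g) := by
  have e1 := Nat.choose_mul (n := 2*p+3+d) (k := p+1+s) (s := p+1) (by omega)
  have e2 := Nat.choose_mul_succ_eq (2*p+1+d) (p+1+s)
  have e3 := Nat.choose_mul_succ_eq (2*p+2+d) (p+1+s)
  have e4 := Nat.choose_mul_succ_eq (2*p+1+d) (p+1+d)
  have e5 := Nat.choose_mul_succ_eq (2*p+2+d) (p+1+d)
  have e6 := Nat.choose_succ_right_eq (2*p+3+d) (p+1)
  have e7 : (2*p+3+d).choose (p+1+d) = (2*p+3+d).choose (p+2) := by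
    rw [← Nat.choose_symm_of_eq_add]; omega
  have r1 : 2*p+3+d-(p+1) = p+2+d := by omega
  have r2 : p+1+s-(p+1) = s := by omega
  have r3 : 2*p+1+d+1 = 2*p+2+d := by omega
  have r4 : 2*p+2+d+1 = 2*p+3+d := by omega
  have r5 : 2*p+2+d - (p+1+s) = p+1+d-s := by omega
  have r6 : 2*p+3+d - (p+1+s) = p+2+d-s := by omega
  have r7 : 2*p+2+d - (p+1+d) = p+1 := by omega
  have r8 : 2*p+3+d - (p+1+d) = p+2 := by omega
  rw [r1, r2] at e1
  rw [r3, r5] at e2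
  rw [r4, r6] at e3
  rw [r3, r7] at e4
  rw [r4, r8, e7] at e5
  rw [r1] at e6
  have hDB : 0 < (p+1+s).choose (p+1) := Nat.choose_pos (by omega)
  have hP : 0 < (2*p+3+d).choose (p+1+s) := Nat.choose_pos (by omega)
  have hQ : 0 < (2*p+3+d).choose (p+1) := Nat.choose_pos (by omega)
  obtain ⟨f, rfl⟩ : ∃ f, d = 3 * s + f := ⟨d - 3*s, by omega⟩
  have r9 : p + 1 + (3*s+f) - s = p + 1 + 2 * s + f := by omega
  have r10 : p + 2 + (3*s+f) - s = p + 2 + 2 * s + f := by omega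
  rw [r9] at e2
  rw [r10] at e3
  have := num3_real p s f g c b ψ ((p+1+s).choose (p+1) : ℕ) ((2*p+3+(3*s+f)).choose (p+1+s) : ℕ)
    ((2*p+3+(3*s+f)).choose (p+1) : ℕ) ((p+2+(3*s+f)).choose s : ℕ)
    ((2*p+1+(3*s+f)).choose (p+1+s) : ℕ) ((2*p+2+(3*s+f)).choose (p+1+s) : ℕ)
    ((2*p+1+(3*s+f)).choose (p+1+(3*s+f)) : ℕ) ((2*p+2+(3*s+f)).choose (p+1+(3*s+f)) : ℕ)
    ((2*p+3+(3*s+f)).choose (p+2) : ℕ)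
    (by positivity) (by positivity) (by positivity) (by exact_mod_cast (by omega : 1 ≤ s + f))
    (by positivity) (by positivity)
    (Nat.cast_pos.2 hDB) (Nat.cast_pos.2 hP) (Nat.cast_pos.2 hQ) (by exact_mod_cast e1)
    (by have := congrArg (Nat.cast (R := ℝ)) e2; push_cast at this ⊢; linarith)
    (by have := congrArg (Nat.cast (R := ℝ)) e3; push_cast at this ⊢; linarith)
    (by have := congrArg (Nat.cast (R := ℝ)) e4; push_cast at this ⊢; linarith)
    (by have := congrArg (Nat.cast (R := ℝ)) e5; push_cast at this ⊢; linarith)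
    (by have := congrArg (Nat.cast (R := ℝ)) e6; push_cast at this ⊢; linarith)
    (by exact_mod_cast h1) (by exact_mod_cast h3)
    (by have := (Nat.cast_le (α := ℝ)).2 h4; push_cast at this ⊢; linarith)
  constructor
  · exact_mod_cast this.1
  · intro h
    have h' := this.2 (by exact_mod_cast h)
    have h2 : ((2 * (2*p+4+(3*s+f)) * b + g : ℕ) : ℝ) ≤ (2 * (2*p+4+(3*s+f)) * g : ℕ) := by
      push_cast
      linarith
    exact_mod_cast h2

section
variable {α : Type*} [DecidableEq α]

def gp (p : ℕ) (T : Finset (Finset α)) : Finset (Finset α) :=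
  T.biUnion (fun u => u.powersetCard (p+1))

def cp (W : Finset α) (p s ψ : ℕ) (T : Finset (Finset α)) : Finset (Finset α) :=
  (W.powersetCard (p+1+s)).filter (fun u => (u.powersetCard (p+1) \ gp p T).card < ψ)

def bp (W : Finset α) (p s ψ : ℕ) (T : Finset (Finset α)) : Finset (Finset α) :=
  (W.powersetCard (p+2)).filter (fun v => ∀ u ⊆ W \ v, u.card = p+1+s → u ∈ cp W p s ψ T)

theorem card_supersets_le (W w : Finset α) (q s : ℕ) (hw : w ⊆ W) (hq : w.card = q) :
    ((W.powersetCard (q+s)).filter (fun u => w ⊆ u)).card ≤ (W.card - q).choose s := by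
  have : ((W \ w).powersetCard s).card = (W.card - q).choose s := by
    rw [card_powersetCard, card_sdiff_of_subset hw, hq]
  rw [← this]
  refine card_le_card_of_injOn (fun u => u \ w) ?_ ?_
  · intro u hu
    simp only [coe_filter, mem_powersetCard, Set.mem_ofPred_eq, mem_coe] at hu ⊢
    refine ⟨sdiff_subset_sdiff hu.1.1 le_rfl, ?_⟩
    rw [card_sdiff_of_subset hu.2]; omega
  · intro u hu v hv h
    simp only [coe_filter, mem_powersetCard, Set.mem_ofPred_eq] at hu hv h
    rw [← sdiff_union_of_subset hu.2, ← sdiff_union_of_subset hv.2, h]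

theorem card_bp (W : Finset α) (p s d ψ : ℕ) (hW : W.card = 2*p+3+d) (hs : 3 * s ≤ d) (hd : 1 ≤ d)
    (h4 : 4 * (2*p+4+d) * ψ ≤ (p+1+s).choose (p+1))
    (T : Finset (Finset α)) (hT : T ⊆ W.powersetCard (p+1+s))
    (h3 : 16 * (gp p T).card ≤ (2*p+3+d).choose (p+1)) :
    2 * (2*p+4+d) * (bp W p s ψ T).card + (gp p T).card ≤ 2 * (2*p+4+d) * (gp p T).card := by
  have hg : ∀ w ∈ gp p T, w ⊆ W ∧ w.card = p+1 := by
    intro w hw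
    simp only [gp, mem_biUnion, mem_powersetCard] at hw
    obtain ⟨u, hu, h1, h2⟩ := hw
    exact ⟨h1.trans (mem_powersetCard.1 (hT hu)).1, h2⟩
  have h1 : (cp W p s ψ T).card * ((p+1+s).choose (p+1)) ≤
      (gp p T).card * (p+2+d).choose s + (cp W p s ψ T).card * ψ := by
    have a1 : ∀ u ∈ cp W p s ψ T, (p+1+s).choose (p+1) ≤
        ((gp p T).filter (fun w => w ⊆ u)).card + ψ := by
      intro u hu
      simp only [cp, mem_filter, mem_powersetCard] at hu
      have : (u.powersetCard (p+1)).card = (p+1+s).choose (p+1) := by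
        rw [card_powersetCard, hu.1.2]
      rw [← this, ← card_inter_add_card_sdiff (u.powersetCard (p+1)) (gp p T)]
      refine Nat.add_le_add (card_le_card ?_) hu.2.le
      intro w hw
      simp only [mem_inter, mem_powersetCard, mem_filter] at hw ⊢
      exact ⟨hw.2, hw.1.1⟩
    have a2 := sum_le_sum a1
    rw [sum_const, sum_add_distrib, sum_const, smul_eq_mul, smul_eq_mul] at a2
    refine a2.trans (Nat.add_le_add_right ?_ _)
    simp_rw [card_filter]
    rw [sum_comm]
    rw [← smul_eq_mul, ← sum_const]
    refine sum_le_sum fun w hw => ?_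
    rw [← card_filter]
    have := card_supersets_le W w (p+1) s (hg w hw).1 (hg w hw).2
    rw [hW, show 2*p+3+d-(p+1) = p+2+d by omega] at this
    refine le_trans (card_le_card ?_) this
    exact filter_subset_filter _ (filter_subset _ _)
  have hn := num3 p s d (gp p T).card (cp W p s ψ T).card (bp W p s ψ T).card ψ hs hd h1 h3 h4
  refine hn.2 ?_
  have hk := (kk_chain W (2*p+1+d) (p+1+s) (by omega) (cp W p s ψ T) hn.1 (p+1+d) (by omega)
    (by omega)).2
  refine le_trans (Nat.mul_le_mul_right _ ?_) hk
  refine card_le_card_of_injOn (fun v => W \ v) ?_ ?_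
  · intro v hv
    simp only [bp, coe_filter, mem_powersetCard, Set.mem_ofPred_eq] at hv ⊢
    refine ⟨⟨sdiff_subset, ?_⟩, hv.2⟩
    rw [card_sdiff_of_subset hv.1.1, hv.1.2, hW]; omega
  · intro u hu v hv h
    simp only [bp, coe_filter, mem_powersetCard, Set.mem_ofPred_eq] at hu hv h
    rw [← Finset.sdiff_sdiff_eq_self hu.1.1, ← Finset.sdiff_sdiff_eq_self hv.1.1, h]

end

theorem sum_pow_nonempty_le {β : Type*} [DecidableEq β] (U : Finset β) (n : ℕ) (hU : U.card ≤ 2 ^ n)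
    (𝒯 : Finset (Finset β)) (h : ∀ T ∈ 𝒯, T ⊆ U ∧ T ≠ ∅) :
    ∑ T ∈ 𝒯, ((1/2:ℝ) ^ (2*n)) ^ T.card ≤ 2 / 2 ^ n := by
  set z : ℝ := (1/2:ℝ)^(2*n) with hz
  have hz0 : 0 ≤ z := by positivity
  have h1 : ∑ T ∈ U.powerset, z ^ T.card = (z + 1) ^ U.card := by
    have := Finset.sum_pow_mul_eq_add_pow z 1 U
    simpa using this
  have h2 : 1 + ∑ T ∈ 𝒯, z ^ T.card ≤ (z+1)^U.card := by
    rw [← h1]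
    have : (∅ : Finset β) ∉ 𝒯 := fun hh => (h _ hh).2 rfl
    have h3 : ∑ T ∈ insert ∅ 𝒯, z ^ T.card ≤ ∑ T ∈ U.powerset, z ^ T.card := by
      refine sum_le_sum_of_subset_of_nonneg ?_ (fun _ _ _ => by positivity)
      intro T hT
      rcases mem_insert.1 hT with rfl | hT
      · simp
      · exact mem_powerset.2 (h T hT).1
    rw [sum_insert this] at h3
    simpa using h3
  have h4 : (z+1)^U.card ≤ Real.exp (z * 2 ^ n) := by
    calc (z+1)^U.card ≤ (Real.exp z)^U.card := by
          gcongr; exact Real.add_one_le_exp z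
      _ = Real.exp (U.card * z) := by rw [← Real.exp_nat_mul]
      _ ≤ _ := by
        apply Real.exp_le_exp.2
        rw [mul_comm]
        gcongr
        exact_mod_cast hU
  have h5 : z * 2 ^ n = 1 / 2 ^ n := by
    rw [hz, pow_mul']; field_simp
    rw [← mul_pow, ← mul_pow]; norm_num
  have h6 : (1:ℝ) / 2 ^ n ≤ 1 := by
    rw [div_le_one (by positivity)]; exact one_le_pow₀ (by norm_num)
  rw [h5] at h4
  have h7 := Real.abs_exp_sub_one_sub_id_le (x := 1 / 2 ^ n) (by rw [abs_of_nonneg (by positivity)]; exact h6)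
  have h8 := (abs_le.1 h7).2
  have h9 : (1 / 2 ^ n : ℝ)^2 ≤ 1 / 2 ^ n := by
    have : (0:ℝ) ≤ 1 / 2 ^ n := by positivity
    nlinarith
  have : (2:ℝ) / 2 ^ n = 1 / 2 ^ n + 1 / 2 ^ n := by ring
  linarith

theorem card_families_le {β γ : Type*} [DecidableEq β] [DecidableEq γ] (𝓕 : Finset (Finset β)) (𝒯 : Finset γ)
    (U : γ → Finset β) (h : ∀ F ∈ 𝓕, ∃ T ∈ 𝒯, F ⊆ U T) :
    𝓕.card ≤ ∑ T ∈ 𝒯, 2 ^ (U T).card := by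
  have : 𝓕 ⊆ 𝒯.biUnion (fun T => (U T).powerset) := by
    intro F hF
    obtain ⟨T, hT, h1⟩ := h F hF
    exact mem_biUnion.2 ⟨T, hT, mem_powerset.2 h1⟩
  refine (card_le_card this).trans (card_biUnion_le.trans (sum_le_sum fun T _ => ?_))
  rw [card_powerset]

theorem part3 (n p s d : ℕ) (hn : n = 2*p+4+d) (hs : 3 * s ≤ d) (hd : 1 ≤ d)
    (h4 : 4 * n * (4 * n ^ 2) ≤ (p+1+s).choose (p+1))
    (hN : 64 * n ≤ (n-1).choose (p+1)) (x : Fin n)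
    (𝓕 : Finset (Finset (Finset (Fin n))))
    (hF : ∀ F ∈ 𝓕, (∀ A ∈ F, A.card = p+2) ∧ (∀ A ∈ F, ∀ B ∈ F, (A ∩ B).Nonempty) ∧
      (∃ A ∈ F, x ∉ A) ∧ 32 * n * (F.filter (fun A => x ∉ A)).card ≤ (n-1).choose (p+1)) :
    (𝓕.card : ℝ) ≤ 2 ^ ((n-1).choose (p+1)) * (3 / 2 ^ n) := by
  classical
  set N := (n-1).choose (p+1) with hNdef
  have hn1 : n - 1 = 2*p+3+d := by omega
  let W : Finset (Fin n) := univ.erase x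
  have hW : W.card = n - 1 := by simp [W]
  have hW' : W.card = 2*p+3+d := by omega
  let gB : Finset (Finset (Fin n)) → Finset (Finset (Fin n)) := fun B =>
    (W.powersetCard (p+1)).filter (fun w => ∃ v ∈ B, Disjoint w v)
  let ψ := 4 * n ^ 2
  have hψ : 0 < ψ := by have : 0 < n := by omega
                        positivity
  have hL : (W.powersetCard (p+1)).card = N := by rw [card_powersetCard, hW]
  have hpow : ∀ r, (W.powersetCard r).card + 1 ≤ 2 ^ n := by
    intro r
    have h1 : (W.powersetCard r).card ≤ W.powerset.card := card_le_card (fun u hu => mem_powerset.2 (mem_powersetCard.1 hu).1)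
    rw [card_powerset, hW] at h1
    obtain ⟨m, rfl⟩ : ∃ m, n = m + 1 := ⟨n-1, by omega⟩
    simp only [Nat.add_sub_cancel] at h1
    have : 1 ≤ 2 ^ m := Nat.one_le_two_pow
    rw [pow_succ]; omega
  let U1 : Finset (Finset (Fin n)) → Finset (Finset (Fin n)) := fun T =>
    ((W.powersetCard (p+1)) \ gp p T).image (insert x) ∪ bp W p s ψ T
  let U2 : Finset (Finset (Fin n)) → Finset (Finset (Fin n)) := fun B =>
    ((W.powersetCard (p+1)) \ gB B).image (insert x) ∪ B
  let 𝒯1 := ((W.powersetCard (p+1+s)).powerset).filter (fun T => T ≠ ∅ ∧ T.card * ψ ≤ (gp p T).card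
    ∧ 16 * (gp p T).card ≤ N)
  let 𝒯2 := ((W.powersetCard (p+2)).powerset).filter (fun B => 32 * n * B.card ≤ N ∧ N < 16 * (gB B).card)
  -- classification
  have hclass : ∀ F ∈ 𝓕, (∃ T ∈ 𝒯1, F ⊆ U1 T) ∨ (∃ B ∈ 𝒯2, F ⊆ U2 B) := by
    intro F hFF
    obtain ⟨hk, hinter, ⟨A0, hA0, hxA0⟩, hsm⟩ := hF F hFF
    let B := F.filter (fun A => x ∉ A)
    let Cs := (W.powersetCard (p+1+s)).filter (fun u => ∃ v ∈ B, Disjoint u v)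
    have hBW : ∀ v ∈ B, v ⊆ W := by
      intro v hv a ha
      simp only [B, mem_filter] at hv
      refine mem_erase.2 ⟨?_, mem_univ _⟩
      rintro rfl; exact hv.2 ha
    have hBL : B ⊆ W.powersetCard (p+2) := by
      intro v hv
      exact mem_powersetCard.2 ⟨hBW v hv, hk v (mem_filter.1 hv).1⟩
    obtain ⟨T, hTC, hT1, hT2⟩ := container (fun u : Finset (Fin n) => u.powersetCard (p+1)) Cs ψ hψ
    have hgT : gp p T ⊆ gB B := by
      intro w hw
      simp only [gp, mem_biUnion, mem_powersetCard] at hw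
      obtain ⟨u, hu, h1, h2⟩ := hw
      have := hTC hu
      simp only [Cs, mem_filter, mem_powersetCard] at this
      obtain ⟨⟨h5, -⟩, v, hv, hd⟩ := this
      exact mem_filter.2 ⟨mem_powersetCard.2 ⟨h1.trans h5, h2⟩, v, hv, hd.mono_left h1⟩
    have hstar : ∀ A ∈ F, x ∈ A → A ∈ ((W.powersetCard (p+1)) \ gB B).image (insert x) := by
      intro A hA hx
      refine mem_image.2 ⟨A.erase x, mem_sdiff.2 ⟨mem_powersetCard.2 ⟨?_, ?_⟩, ?_⟩, insert_erase hx⟩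
      · exact erase_subset_erase _ (subset_univ _)
      · rw [card_erase_of_mem hx, hk A hA]; omega
      · intro hcon
        simp only [gB, mem_filter] at hcon
        obtain ⟨-, v, hv, hd⟩ := hcon
        simp only [B, mem_filter] at hv
        obtain ⟨a, ha⟩ := hinter A hA v hv.1
        rw [mem_inter] at ha
        refine disjoint_left.1 hd (mem_erase.2 ⟨?_, ha.1⟩) ha.2
        rintro rfl; exact hv.2 ha.2
    by_cases hbig : 16 * (gp p T).card ≤ N
    · left
      refine ⟨T, ?_, ?_⟩
      · simp only [𝒯1, mem_filter, mem_powerset]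
        refine ⟨hTC.trans (filter_subset _ _), ?_, hT1, hbig⟩
        rintro rfl
        -- Cs nonempty
        have hA0B : A0 ∈ B := mem_filter.2 ⟨hA0, hxA0⟩
        have hc : p+1+s ≤ (W \ A0).card := by
          rw [card_sdiff_of_subset (hBW A0 hA0B), hk A0 hA0, hW']; omega
        obtain ⟨u, hu1, hu2⟩ := exists_subset_card_eq hc
        have huC : u ∈ Cs := by
          refine mem_filter.2 ⟨mem_powersetCard.2 ⟨hu1.trans sdiff_subset, hu2⟩, A0, hA0B, ?_⟩
          exact disjoint_of_subset_left hu1 sdiff_disjoint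
        have := hT2 u huC
        simp only [biUnion_empty, sdiff_empty, card_powersetCard, hu2] at this
        have h5 : 1 * ψ ≤ 4 * n * ψ := Nat.mul_le_mul_right _ (by omega)
        simp only [ψ] at this h5
        omega
      · intro A hA
        by_cases hx : x ∈ A
        · refine mem_union_left _ (image_subset_image (sdiff_subset_sdiff le_rfl hgT) (hstar A hA hx))
        · refine mem_union_right _ (mem_filter.2 ⟨hBL (mem_filter.2 ⟨hA, hx⟩), fun u hu huc => ?_⟩)
          have huW : u ∈ W.powersetCard (p+1+s) := mem_powersetCard.2 ⟨hu.trans sdiff_subset, huc⟩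
          refine mem_filter.2 ⟨huW, hT2 u (mem_filter.2 ⟨huW, A, mem_filter.2 ⟨hA, hx⟩, ?_⟩)⟩
          exact disjoint_of_subset_left hu sdiff_disjoint
    · right
      refine ⟨B, ?_, ?_⟩
      · simp only [𝒯2, mem_filter, mem_powerset]
        refine ⟨hBL, hsm, ?_⟩
        have := card_le_card hgT
        omega
      · intro A hA
        by_cases hx : x ∈ A
        · exact mem_union_left _ (hstar A hA hx)
        · exact mem_union_right _ (mem_filter.2 ⟨hA, hx⟩)
  let 𝓕1 := 𝓕.filter (fun F => ∃ T ∈ 𝒯1, F ⊆ U1 T)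
  let 𝓕2 := 𝓕.filter (fun F => ∃ T ∈ 𝒯2, F ⊆ U2 T)
  have hcardle : 𝓕.card ≤ 𝓕1.card + 𝓕2.card := by
    refine le_trans (card_le_card ?_) (card_union_le _ _)
    intro F hFF
    rcases hclass F hFF with h | h
    · exact mem_union_left _ (mem_filter.2 ⟨hFF, h⟩)
    · exact mem_union_right _ (mem_filter.2 ⟨hFF, h⟩)
  have c1 := card_families_le 𝓕1 𝒯1 U1 (fun F hF => (mem_filter.1 hF).2)
  have c2 := card_families_le 𝓕2 𝒯2 U2 (fun F hF => (mem_filter.1 hF).2)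
  have b1 : (𝓕1.card : ℝ) ≤ 2 ^ N * (2 / 2 ^ n) := by
    have hU1 : ∀ T ∈ 𝒯1, (U1 T).card + 2 * n * T.card ≤ N := by
      intro T hT
      simp only [𝒯1, mem_filter, mem_powerset] at hT
      obtain ⟨hT1, hT2, hT3, hT4⟩ := hT
      have hb := card_bp W p s d ψ hW' hs hd (by rw [← hn]; exact h4) T hT1
        (by rw [← hn1]; exact hT4)
      rw [← hn] at hb
      have hsub : gp p T ⊆ W.powersetCard (p+1) := by
        intro w hw
        simp only [gp, mem_biUnion, mem_powersetCard] at hw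
        obtain ⟨u, hu, h1, h2⟩ := hw
        exact mem_powersetCard.2 ⟨h1.trans (mem_powersetCard.1 (hT1 hu)).1, h2⟩
      have hcu : (U1 T).card ≤ (N - (gp p T).card) + (bp W p s ψ T).card := by
        refine (card_union_le _ _).trans (Nat.add_le_add_right (card_image_le.trans ?_) _)
        rw [card_sdiff_of_subset hsub, hL]
      have hgN : (gp p T).card ≤ N := by omega
      have h5 : (bp W p s ψ T).card + 2 * n * T.card ≤ (gp p T).card := by
        have hpos : 0 < 2 * n := by omega
        refine Nat.le_of_mul_le_mul_left ?_ hpos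
        have : 2 * n * (2 * n * T.card) = T.card * ψ := by simp only [ψ]; ring
        rw [mul_add, this]
        omega
      omega
    calc (𝓕1.card : ℝ) ≤ ∑ T ∈ 𝒯1, (2:ℝ) ^ (U1 T).card := by exact_mod_cast c1
      _ ≤ ∑ T ∈ 𝒯1, 2 ^ N * ((1/2:ℝ) ^ (2*n)) ^ T.card := by
        refine sum_le_sum fun T hT => ?_
        rw [← pow_mul, one_div, inv_pow, ← div_eq_mul_inv, le_div_iff₀ (by positivity), ← pow_add]
        exact pow_le_pow_right₀ (by norm_num) (hU1 T hT)
      _ = 2 ^ N * ∑ T ∈ 𝒯1, ((1/2:ℝ) ^ (2*n)) ^ T.card := by rw [mul_sum]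
      _ ≤ _ := by
        refine mul_le_mul_of_nonneg_left ?_ (by positivity)
        refine sum_pow_nonempty_le (W.powersetCard (p+1+s)) n (by have := hpow (p+1+s); omega) 𝒯1 ?_
        intro T hT
        simp only [𝒯1, mem_filter, mem_powerset] at hT
        exact ⟨hT.1, hT.2.1⟩
  have b2 : (𝓕2.card : ℝ) ≤ 2 ^ N * (1 / 2 ^ n) := by
    let b := N / (32 * n)
    have hb : 32 * n * b ≤ N := Nat.mul_div_le _ _
    have hU2 : ∀ B ∈ 𝒯2, (U2 B).card + n * b + n ≤ N := by
      intro B hB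
      simp only [𝒯2, mem_filter, mem_powerset] at hB
      obtain ⟨hB1, hB2, hB3⟩ := hB
      have hcu : (U2 B).card ≤ (N - (gB B).card) + B.card := by
        refine (card_union_le _ _).trans (Nat.add_le_add_right (card_image_le.trans ?_) _)
        rw [card_sdiff_of_subset (filter_subset _ _), hL]
      have hgN : (gB B).card ≤ N := by rw [← hL]; exact card_le_card (filter_subset _ _)
      have h5 : 32 * 4 * B.card ≤ 32 * n * B.card := Nat.mul_le_mul_right _ (by omega)
      have h6 : 32 * n * b = 32 * (n * b) := by ring
      omega
    have hc2 : 𝒯2.card ≤ 2 ^ (n * b) := by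
      have : 𝒯2 ⊆ ((W.powersetCard (p+2)).powerset).filter (fun T => T.card ≤ b) := by
        intro B hB
        simp only [𝒯2, mem_filter, mem_powerset] at hB ⊢
        refine ⟨hB.1, ?_⟩
        rw [Nat.le_div_iff_mul_le (by omega), mul_comm]
        exact hB.2.1
      refine (card_le_card this).trans ((count_small _ _).trans ?_)
      rw [pow_mul]
      exact Nat.pow_le_pow_left (hpow _) _
    have c3 : 𝓕2.card * 2 ^ n ≤ 2 ^ N := by
      calc 𝓕2.card * 2 ^ n ≤ (∑ B ∈ 𝒯2, 2 ^ (U2 B).card) * 2 ^ n := Nat.mul_le_mul_right _ c2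
        _ ≤ (∑ B ∈ 𝒯2, 2 ^ (N - n * b - n)) * 2 ^ n := by
          refine Nat.mul_le_mul_right _ (sum_le_sum fun B hB => Nat.pow_le_pow_right (by norm_num) ?_)
          have := hU2 B hB
          omega
        _ = 𝒯2.card * (2 ^ (N - n * b - n) * 2 ^ n) := by rw [sum_const, smul_eq_mul]; ring
        _ ≤ 2 ^ (n*b) * (2 ^ (N - n * b - n) * 2 ^ n) := Nat.mul_le_mul_right _ hc2
        _ = 2 ^ N := by
          rw [← pow_add, ← pow_add]
          congr 1
          have h6 : 32 * n * b = 32 * (n * b) := by ring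
          omega
    rw [mul_one_div, le_div_iff₀ (by positivity)]
    exact_mod_cast c3
  have : (𝓕.card : ℝ) ≤ 𝓕1.card + 𝓕2.card := by exact_mod_cast hcardle
  have e : (2:ℝ) ^ N * (3 / 2 ^ n) = 2 ^ N * (2 / 2 ^ n) + 2 ^ N * (1 / 2 ^ n) := by ring
  linarith

section permavg

/-- average over permutations -/
noncomputable def pE {n : ℕ} (f : Equiv.Perm (Fin n) → ℝ) : ℝ := (∑ σ, f σ) / (n.factorial : ℝ)

open Classical in
/-- indicator -/
noncomputable def pI (p : Prop) : ℝ := if p then 1 else 0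

theorem pI_true {p : Prop} (h : p) : pI p = 1 := by simp [pI, h]
theorem pI_false {p : Prop} (h : ¬ p) : pI p = 0 := by simp [pI, h]
theorem pI_nonneg (p : Prop) : 0 ≤ pI p := by unfold pI; split_ifs <;> norm_num
theorem pI_le_one (p : Prop) : pI p ≤ 1 := by unfold pI; split_ifs <;> norm_num
theorem pI_mono {p q : Prop} (h : p → q) : pI p ≤ pI q := by
  unfold pI; split_ifs <;> first | (norm_num; done) | tauto
theorem pI_add {p q r : Prop} (h : p → q ∨ r) : pI p ≤ pI q + pI r := by
  unfold pI; split_ifs <;> first | (norm_num; done) | tauto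
theorem sum_pI {ι : Type*} (s : Finset ι) (p : ι → Prop) [DecidablePred p] :
    ∑ i ∈ s, pI (p i) = ((s.filter p).card : ℝ) := by
  rw [card_filter]; push_cast
  refine sum_congr rfl fun i _ => ?_
  unfold pI; split_ifs <;> simp

theorem pE_mono {n : ℕ} {f g : Equiv.Perm (Fin n) → ℝ} (h : ∀ σ, f σ ≤ g σ) : pE f ≤ pE g := by
  unfold pE
  exact div_le_div_of_nonneg_right (sum_le_sum fun σ _ => h σ) (by positivity)

theorem pE_const {n : ℕ} (c : ℝ) : pE (fun _ : Equiv.Perm (Fin n) => c) = c := by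
  unfold pE
  have : (n.factorial : ℝ) ≠ 0 := by positivity
  simp [Fintype.card_perm]
  field_simp

theorem pE_add {n : ℕ} (f g : Equiv.Perm (Fin n) → ℝ) : pE (fun σ => f σ + g σ) = pE f + pE g := by
  unfold pE; rw [sum_add_distrib, add_div]

theorem pE_sub {n : ℕ} (f g : Equiv.Perm (Fin n) → ℝ) : pE (fun σ => f σ - g σ) = pE f - pE g := by
  unfold pE; rw [sum_sub_distrib, sub_div]

theorem pE_mul {n : ℕ} (c : ℝ) (f : Equiv.Perm (Fin n) → ℝ) : pE (fun σ => c * f σ) = c * pE f := by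
  unfold pE; rw [← mul_sum, mul_div_assoc]

theorem pE_sum {n : ℕ} {ι : Type*} (s : Finset ι) (f : ι → Equiv.Perm (Fin n) → ℝ) :
    pE (fun σ => ∑ i ∈ s, f i σ) = ∑ i ∈ s, pE (f i) := by
  unfold pE; rw [sum_comm, sum_div]

theorem pE_inv {n : ℕ} (e : Equiv.Perm (Fin n)) (f : Equiv.Perm (Fin n) → ℝ) :
    pE (fun σ => f (σ * e)) = pE f := by
  unfold pE
  congr 1
  exact Equiv.sum_comp (Equiv.mulRight e) f

theorem pE_nonneg {n : ℕ} {f : Equiv.Perm (Fin n) → ℝ} (h : ∀ σ, 0 ≤ f σ) : 0 ≤ pE f := by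
  have := pE_mono h
  rwa [pE_const] at this

theorem perm_ext {n : ℕ} (A B B' : Finset (Fin n)) (h : Disjoint A B) (h' : Disjoint A B')
    (hc : B.card = B'.card) : ∃ e : Equiv.Perm (Fin n), (∀ a ∈ A, e a = a) ∧ B.image e = B' := by
  classical
  let φ := Finset.equivOfCardEq hc
  let f : Fin n → Fin n := fun x => if hx : x ∈ B then φ ⟨x, hx⟩ else x
  have hfB : ∀ x (hx : x ∈ B), f x = φ ⟨x, hx⟩ := fun x hx => by simp [f, hx]
  have hfA : ∀ x ∈ A, f x = x := fun x hx => by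
    have : x ∉ B := fun hh => (disjoint_left.1 h hx hh)
    simp [f, this]
  have hmem : ∀ x (hx : x ∈ B), f x ∈ B' := fun x hx => by rw [hfB x hx]; exact (φ ⟨x, hx⟩).2
  have hinj : Set.InjOn f ((A ∪ B : Finset (Fin n)) : Set (Fin n)) := by
    intro x hx y hy hxy
    simp only [coe_union, Set.mem_union, mem_coe] at hx hy
    rcases hx with hx | hx <;> rcases hy with hy | hy
    · rwa [hfA x hx, hfA y hy] at hxy
    · rw [hfA x hx] at hxy
      exact absurd (hxy ▸ hmem y hy) (disjoint_left.1 h' hx)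
    · rw [hfA y hy] at hxy
      exact absurd (hxy ▸ hmem x hx) (disjoint_left.1 h' hy)
    · rw [hfB x hx, hfB y hy] at hxy
      have := φ.injective (Subtype.ext hxy)
      simpa using this
  obtain ⟨g, hg⟩ := Finset.exists_equiv_extend_of_card_eq (t := (univ : Finset (Fin n))) (by simp)
    (s := A ∪ B) (f := f) (subset_univ _) hinj
  let e : Equiv.Perm (Fin n) := g.trans (Equiv.subtypeUnivEquiv (fun x => mem_univ x))
  have he : ∀ x ∈ A ∪ B, e x = f x := fun x hx => hg x hx
  refine ⟨e, fun a ha => ?_, ?_⟩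
  · rw [he a (mem_union_left _ ha), hfA a ha]
  · apply eq_of_subset_of_card_le
    · intro y hy
      obtain ⟨x, hx, rfl⟩ := mem_image.1 hy
      rw [he x (mem_union_right _ hx)]; exact hmem x hx
    · rw [card_image_of_injective _ e.injective, hc]

theorem im_mul {n : ℕ} (σ e : Equiv.Perm (Fin n)) (I : Finset (Fin n)) :
    I.image (σ * e : Equiv.Perm (Fin n)) = (I.image e).image σ := by
  rw [image_image]; rfl

theorem im_card {n : ℕ} (σ : Equiv.Perm (Fin n)) (I : Finset (Fin n)) :
    (I.image σ).card = I.card := card_image_of_injective _ σ.injective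

theorem im_fix {n : ℕ} (e : Equiv.Perm (Fin n)) (I : Finset (Fin n)) (h : ∀ a ∈ I, e a = a) :
    I.image e = I := by
  ext x; simp only [mem_image]
  constructor
  · rintro ⟨a, ha, rfl⟩; rwa [h a ha]
  · intro hx; exact ⟨x, hx, h x hx⟩

theorem im_disj {n : ℕ} (e : Equiv.Perm (Fin n)) (I J : Finset (Fin n)) :
    Disjoint (I.image e) (J.image e) ↔ Disjoint I J := disjoint_image e.injective

/-- images of r-subsets of A under a permutation -/
theorem powersetCard_im {n : ℕ} (e : Equiv.Perm (Fin n)) (A : Finset (Fin n)) (r : ℕ)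
    (p : Finset (Fin n) → Prop) [DecidablePred p] [DecidablePred fun J : Finset (Fin n) => p (J.image e)] :
    ((A.powersetCard r).filter (fun J => p (J.image e))).card
      = (((A.image e).powersetCard r).filter p).card := by
  refine card_nbij' (fun J => J.image e) (fun J => J.image e.symm) ?_ ?_ ?_ ?_
  · intro J hJ
    simp only [mem_coe, mem_filter, mem_powersetCard] at hJ ⊢
    exact ⟨⟨image_subset_image hJ.1.1, by rw [im_card]; exact hJ.1.2⟩, hJ.2⟩
  · intro J hJ
    simp only [mem_coe, mem_filter, mem_powersetCard] at hJ ⊢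
    refine ⟨⟨?_, by rw [im_card]; exact hJ.1.2⟩, ?_⟩
    · have := image_subset_image (f := e.symm) hJ.1.1
      rw [image_image] at this
      simpa using this
    · rw [image_image]; simpa using hJ.2
  · intro J _; simp [image_image]
  · intro J _; simp [image_image]

variable {n k : ℕ} (C : Finset (Finset (Fin n)))

theorem U1 (hkn : k ≤ n) (hC : ∀ A ∈ C, A.card = k) (I : Finset (Fin n)) (hI : I.card = k) :
    pE (fun σ => pI (I.image σ ∈ C)) = C.card / (n.choose k : ℝ) := by
  classical
  have hV : (0:ℝ) < (n.choose k : ℝ) := by exact_mod_cast Nat.choose_pos hkn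
  have h1 : ∀ J ∈ (univ : Finset (Fin n)).powersetCard k,
      pE (fun σ => pI (J.image σ ∈ C)) = pE (fun σ => pI (I.image σ ∈ C)) := by
    intro J hJ
    obtain ⟨e, -, he⟩ := perm_ext ∅ I J (by simp) (by simp) (by rw [hI, (mem_powersetCard.1 hJ).2])
    rw [← pE_inv e (fun σ => pI (I.image σ ∈ C))]
    simp only [im_mul, he]
  have h2 : ∑ J ∈ (univ : Finset (Fin n)).powersetCard k, pE (fun σ => pI (J.image σ ∈ C)) = C.card := by
    rw [← pE_sum, ← pE_const (n := n) (C.card : ℝ)]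
    congr 1; ext σ
    rw [sum_pI, powersetCard_im σ univ k (fun J => J ∈ C)]
    congr 2
    rw [image_univ_of_surjective σ.surjective]
    ext J; simp only [mem_filter, mem_powersetCard, subset_univ, true_and]
    exact ⟨fun h => h.2, fun h => ⟨hC J h, h⟩⟩
  rw [sum_congr rfl h1, sum_const, card_powersetCard, card_univ, Fintype.card_fin, nsmul_eq_mul] at h2
  rw [← h2]; field_simp

theorem E1 (ψ : ℕ) (hψ : ∀ v ∈ C, (C.filter (fun u => Disjoint v u)).card ≤ ψ)
    (I J : Finset (Fin n)) (hI : I.card = k) (hJ : J.card = k) (hIJ : Disjoint I J) :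
    ((n-k).choose k : ℝ) * pE (fun σ => pI (I.image σ ∈ C ∧ J.image σ ∈ C)) ≤ ψ := by
  classical
  have h1 : ∀ J' ∈ (univ \ I).powersetCard k,
      pE (fun σ => pI (I.image σ ∈ C ∧ J'.image σ ∈ C)) = pE (fun σ => pI (I.image σ ∈ C ∧ J.image σ ∈ C)) := by
    intro J' hJ'
    have hJ' := mem_powersetCard.1 hJ'
    obtain ⟨e, he1, he⟩ := perm_ext I J J' hIJ
      (disjoint_of_subset_right hJ'.1 disjoint_sdiff) (by rw [hJ, hJ'.2])
    rw [← pE_inv e (fun σ => pI (I.image σ ∈ C ∧ J.image σ ∈ C))]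
    simp only [im_mul, he, im_fix e I he1]
  have h2 : ∑ J' ∈ (univ \ I).powersetCard k, pE (fun σ => pI (I.image σ ∈ C ∧ J'.image σ ∈ C)) ≤ ψ := by
    rw [← pE_sum, ← pE_const (n := n) (ψ : ℝ)]
    refine pE_mono fun σ => ?_
    rw [sum_pI, powersetCard_im σ _ k (fun J' => I.image σ ∈ C ∧ J' ∈ C)]
    by_cases hh : I.image σ ∈ C
    · refine le_trans ?_ (Nat.cast_le.2 (hψ _ hh))
      refine Nat.cast_le.2 (card_le_card ?_)
      intro J' hJ'
      simp only [mem_filter, mem_powersetCard] at hJ' ⊢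
      refine ⟨hJ'.2.2, disjoint_of_subset_right hJ'.1.1 ?_⟩
      rw [im_disj]; exact disjoint_sdiff
    · simp [hh]
  rw [sum_congr rfl h1, sum_const, card_powersetCard, card_sdiff_of_subset (subset_univ _), card_univ,
    Fintype.card_fin, nsmul_eq_mul, hI] at h2
  exact h2

end permavg

section arcs

/-- cyclic arc of length k starting at a -/
def arc (n k a : ℕ) : Finset (Fin n) :=
  univ.filter (fun p => (a ≤ p.val ∧ p.val < a + k) ∨ p.val + n < a + k)

theorem mem_arc {n k a : ℕ} (p : Fin n) :
    p ∈ arc n k a ↔ (a ≤ p.val ∧ p.val < a + k) ∨ p.val + n < a + k := by simp [arc]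

theorem card_arc {n k a : ℕ} (hk : k ≤ n) (ha : a < n) : (arc n k a).card = k := by
  conv_rhs => rw [← card_range k]
  symm
  refine card_nbij (fun t => if h : a + t < n then (⟨a+t, h⟩ : Fin n) else ⟨(a + t) % n, Nat.mod_lt _ (by omega)⟩) ?_ ?_ ?_
  · intro t ht
    simp only [mem_coe, mem_range] at ht
    simp only [mem_coe, mem_arc]
    split_ifs with h
    · simp; omega
    · rw [show a + t = (a+t-n) + n by omega]
      simp only [Nat.add_mod_right]
      rw [Nat.mod_eq_of_lt (by omega)]; omega
  · intro t ht t' ht' h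
    simp only [mem_coe, mem_range] at ht ht' h
    have key : ∀ t, t < k → ¬ (a + t < n) → (a+t)%n = a+t-n := by
      intro t ht h
      conv_lhs => rw [show a + t = (a+t-n) + n by omega]
      rw [Nat.add_mod_right, Nat.mod_eq_of_lt (by omega)]
    split_ifs at h with h1 h2 h2
    · simp at h; omega
    · simp [key t' ht' h2] at h; omega
    · simp [key t ht h1] at h; omega
    · simp [key t ht h1, key t' ht' h2] at h; omega
  · intro p hp
    simp only [mem_coe, mem_arc] at hp
    have := p.2
    rcases hp with hp | hp
    · refine ⟨p.val - a, by simp; omega, ?_⟩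
      simp only
      rw [dif_pos (by omega)]
      ext; simp; omega
    · refine ⟨p.val + n - a, by simp; omega, ?_⟩
      simp only
      rw [dif_neg (by omega)]
      ext; simp only
      rw [show a + (p.val + n - a) = p.val + n by omega, Nat.add_mod_right, Nat.mod_eq_of_lt this]

theorem katona {n k : ℕ} (hk : 1 ≤ k) (hn : 2 * k ≤ n) (X : Finset ℕ) (hX : X ⊆ range n)
    (h : ∀ a ∈ X, ∀ b ∈ X, a ≤ b → b - a < k ∨ n < k + (b - a)) : X.card ≤ k := by
  rcases X.eq_empty_or_nonempty with rfl | ⟨a, ha⟩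
  · simp
  have hlt : ∀ b ∈ X, b < n := fun b hb => mem_range.1 (hX hb)
  conv_rhs => rw [← card_range k]
  have key : ∀ b ∈ X, (a ≤ b → b - a < k ∨ n < k + (b - a)) ∧ (b ≤ a → a - b < k ∨ n < k + (a - b)) :=
    fun b hb => ⟨h a ha b hb, h b hb a ha⟩
  have han := hlt a ha
  refine card_le_card_of_injOn (fun b => if a ≤ b then (if b - a < k then b - a else b - a + k - n)
    else (if b + n - a < k then b + n - a else b + k - a)) ?_ ?_
  · intro b hb
    have h1 := key b hb
    have h2 := hlt b hb
    simp only [coe_range, Set.mem_Iio]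
    split_ifs <;> omega
  · intro b hb c hc hbc
    have h1 := key b hb
    have h2 := hlt b hb
    have h3 := key c hc
    have h4 := hlt c hc
    have h5 := h b hb c hc
    have h6 := h c hc b hb
    simp only at hbc
    split_ifs at hbc <;> omega

theorem arc_disj {n k a b : ℕ} (hab : a ≤ b) (hb : b < n) (h1 : k ≤ b - a) (h2 : k + (b - a) ≤ n) :
    Disjoint (arc n k a) (arc n k b) := by
  rw [disjoint_left]
  intro p hp hq
  rw [mem_arc] at hp hq
  have := p.2
  omega

/-- cyclic adjacent -/
theorem exists_adj {n k : ℕ} (hk : 1 ≤ k) (hn : k < n) (X : Finset ℕ) (hX : X ⊆ range n) (hc : X.card = k) :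
    ∃ a ∈ range n, a ∈ X ∧ (if a + 1 = n then 0 else a + 1) ∉ X := by
  by_contra hcon
  push Not at hcon
  obtain ⟨a, ha⟩ : X.Nonempty := card_pos.1 (by omega)
  have hs : ∀ a ∈ X, (if a + 1 = n then 0 else a + 1) ∈ X := fun a ha => hcon a (hX ha) ha
  have han := mem_range.1 (hX ha)
  have h1 : ∀ t, a + t < n → a + t ∈ X := by
    intro t
    induction t with
    | zero => intro _; simpa using ha
    | succ t ih =>
      intro h
      have := hs _ (ih (by omega))
      rw [if_neg (by omega)] at this
      simpa [add_assoc] using this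
  have h0 : 0 ∈ X := by
    have := hs _ (h1 (n-1-a) (by omega))
    rwa [if_pos (by omega)] at this
  have h2 : ∀ t, t < n → t ∈ X := by
    intro t
    induction t with
    | zero => intro _; exact h0
    | succ t ih =>
      intro h
      have := hs _ (ih (by omega))
      rwa [if_neg (by omega)] at this
  have : range n ⊆ X := fun t ht => h2 t (mem_range.1 ht)
  have := card_le_card this
  rw [card_range] at this; omega

end arcs

section stab
variable {n : ℕ} (k : ℕ) (C : Finset (Finset (Fin n)))

/-- arcs whose image lies in C -/
def Xs (σ : Equiv.Perm (Fin n)) : Finset ℕ := (range n).filter (fun a => (arc n k a).image σ ∈ C)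

theorem Xs_sub (σ : Equiv.Perm (Fin n)) : Xs k C σ ⊆ range n := filter_subset _ _

theorem pr_ne (hk : 1 ≤ k) (hn : 2 * k ≤ n) (u η : ℝ)
    (hU : ∀ I : Finset (Fin n), I.card = k → pE (fun σ => pI (I.image σ ∈ C)) = u)
    (hη : ∀ I J : Finset (Fin n), I.card = k → J.card = k → Disjoint I J →
      pE (fun σ => pI (I.image σ ∈ C ∧ J.image σ ∈ C)) ≤ η) :
    pE (fun σ => pI ((Xs k C σ).card ≠ k)) ≤ (k - n * u) + (n + 1) * (n^2 * η) := by
  classical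
  let S : Finset (ℕ × ℕ) := ((range n) ×ˢ (range n)).filter
    (fun q => q.1 ≤ q.2 ∧ k ≤ q.2 - q.1 ∧ k + (q.2 - q.1) ≤ n)
  have hη0 : 0 ≤ η := by
    refine le_trans (pE_nonneg fun σ => pI_nonneg _) (hη (arc n k 0) (arc n k k)
      (card_arc (by omega) (by omega)) (card_arc (by omega) (by omega)) (arc_disj (by omega) (by omega) (by omega) (by omega)))
  have key : ∀ σ : Equiv.Perm (Fin n), pI ((Xs k C σ).card ≠ k) ≤
      ((k:ℝ) - ∑ a ∈ range n, pI ((arc n k a).image σ ∈ C)) +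
      (n+1) * ∑ q ∈ S, pI ((arc n k q.1).image σ ∈ C ∧ (arc n k q.2).image σ ∈ C) := by
    intro σ
    rw [sum_pI, sum_pI]
    change _ ≤ ((k:ℝ) - ((Xs k C σ).card : ℝ)) + _
    set Y := S.filter (fun q => (arc n k q.1).image σ ∈ C ∧ (arc n k q.2).image σ ∈ C)
    by_cases hY : Y = ∅
    · rw [hY]
      have : (Xs k C σ).card ≤ k := by
        refine katona hk hn _ (Xs_sub k C σ) ?_
        intro a ha b hb hab
        by_contra hcon
        push Not at hcon
        have ha := mem_filter.1 ha
        have hb := mem_filter.1 hb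
        have : (a, b) ∈ Y := by
          simp only [Y, S, mem_filter, mem_product]
          exact ⟨⟨⟨ha.1, hb.1⟩, hab, hcon.1, hcon.2⟩, ha.2, hb.2⟩
        rw [hY] at this; simp at this
      by_cases hh : (Xs k C σ).card = k
      · rw [pI_false (by simpa using hh)]; simp [hh]
      · rw [pI_true hh]
        have : (Xs k C σ).card + 1 ≤ k := by omega
        have : ((Xs k C σ).card : ℝ) + 1 ≤ k := by exact_mod_cast this
        simp; linarith
    · have h1 : 1 ≤ Y.card := card_pos.2 (nonempty_iff_ne_empty.2 hY)
      have h1' : (1:ℝ) ≤ Y.card := by exact_mod_cast h1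
      have h2 : (Xs k C σ).card ≤ n := by simpa using card_le_card (Xs_sub k C σ)
      have h2' : ((Xs k C σ).card : ℝ) ≤ n := by exact_mod_cast h2
      have h3 := pI_le_one ((Xs k C σ).card ≠ k)
      have h4 : (n+1:ℝ) * 1 ≤ (n+1) * Y.card := by gcongr
      have : (0:ℝ) ≤ k := by positivity
      linarith
  refine (pE_mono key).trans ?_
  rw [pE_add, pE_sub, pE_const, pE_mul, pE_sum, pE_sum]
  have e1 : ∑ a ∈ range n, pE (fun σ => pI ((arc n k a).image σ ∈ C)) = n * u := by
    rw [sum_congr rfl (fun a ha => hU _ (card_arc (by omega) (mem_range.1 ha)))]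
    simp
  rw [e1]
  have e2 : ∑ q ∈ S, pE (fun σ => pI ((arc n k q.1).image σ ∈ C ∧ (arc n k q.2).image σ ∈ C)) ≤ n^2 * η := by
    calc _ ≤ ∑ q ∈ S, η := by
          refine sum_le_sum fun q hq => ?_
          simp only [S, mem_filter, mem_product, mem_range] at hq
          exact hη _ _ (card_arc (by omega) (by omega)) (card_arc (by omega) (by omega))
            (arc_disj hq.2.1 (by omega) (by omega) (by omega))
      _ = S.card * η := by simp
      _ ≤ n^2 * η := by
        refine mul_le_mul_of_nonneg_right ?_ hη0
        have : S.card ≤ n * n := by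
          refine (card_filter_le _ _).trans ?_
          simp
        rw [pow_two]; exact_mod_cast this
  have : (0:ℝ) ≤ n + 1 := by positivity
  nlinarith

/-- the exchange event -/
def Gx (P : Finset (Fin n)) (i j : Fin n) (σ : Equiv.Perm (Fin n)) : Prop :=
  (insert i P).image σ ∈ C ∧ (insert j P).image σ ∉ C

theorem im_insert (σ : Equiv.Perm (Fin n)) (i : Fin n) (P : Finset (Fin n)) :
    (insert i P).image σ = insert (σ i) (P.image σ) := image_insert _ _ _

theorem Gx_mul (P : Finset (Fin n)) (i j : Fin n) (σ e : Equiv.Perm (Fin n)) :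
    Gx C P i j (σ * e) = Gx C (P.image e) (e i) (e j) σ := by
  unfold Gx
  rw [im_mul, im_mul, im_insert e, im_insert e]

theorem step_B (hk : 1 ≤ k) (hn : 2 * k < n) (i j : Fin n) (hi : i.val = k - 1) (hj : j.val = k)
    (σ : Equiv.Perm (Fin n)) (h1 : (Xs k C σ).card = k) (h2 : (Xs k C (σ * Equiv.swap i j)).card = k)
    (h : Gx C ((arc n k 0).erase i) i j σ) : Gx C ((arc n k k).erase j) i j σ := by
  classical
  have hij : i ≠ j := by intro h; rw [h] at hi; omega
  have hi0 : i ∈ arc n k 0 := by rw [mem_arc]; omega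
  have hj0 : j ∉ arc n k 0 := by rw [mem_arc]; omega
  have hik : i ∉ arc n k k := by rw [mem_arc]; omega
  have hjk : j ∈ arc n k k := by rw [mem_arc]; omega
  set e := Equiv.swap i j with he
  have hei : e i = j := Equiv.swap_apply_left i j
  have hej : e j = i := Equiv.swap_apply_right i j
  have hfix : ∀ a, a < n → a ≠ 0 → a ≠ k → (arc n k a).image e = arc n k a := by
    intro a ha h0 hk0
    apply eq_of_subset_of_card_le
    · intro y hy
      obtain ⟨x, hx, rfl⟩ := mem_image.1 hy
      by_cases hxi : x = i
      · subst hxi; rw [hei]; rw [mem_arc] at hx ⊢; omega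
      by_cases hxj : x = j
      · subst hxj; rw [hej]; rw [mem_arc] at hx ⊢; omega
      · rw [he, Equiv.swap_apply_of_ne_of_ne hxi hxj]; exact hx
    · rw [im_card]
  have hP : ∀ P : Finset (Fin n), i ∉ P → j ∉ P → P.image e = P := by
    intro P hiP hjP
    apply im_fix
    intro a ha
    exact Equiv.swap_apply_of_ne_of_ne (fun h => hiP (h ▸ ha)) (fun h => hjP (h ▸ ha))
  have e0 : (arc n k 0).image e = insert j ((arc n k 0).erase i) := by
    conv_lhs => rw [← insert_erase hi0]
    rw [im_insert, hei, hP _ (by simp) (by simp [hj0])]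
  have ek : (arc n k k).image e = insert i ((arc n k k).erase j) := by
    conv_lhs => rw [← insert_erase hjk]
    rw [im_insert, hej, hP _ (by simp [hik]) (by simp)]
  unfold Gx at h ⊢
  rw [insert_erase hi0] at h
  rw [insert_erase hjk, ← ek, ← im_mul]
  rw [← e0, ← im_mul] at h
  set X := Xs k C σ with hX
  set Y := Xs k C (σ * e) with hY
  have m1 : 0 ∈ X := mem_filter.2 ⟨mem_range.2 (by omega), h.1⟩
  have m2 : 0 ∉ Y := fun hh => h.2 (mem_filter.1 hh).2
  have m3 : ∀ a, a ≠ 0 → a ≠ k → (a ∈ X ↔ a ∈ Y) := by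
    intro a h0 hk0
    simp only [hX, hY, Xs, mem_filter, mem_range]
    constructor
    · rintro ⟨ha, h⟩; refine ⟨ha, ?_⟩; rw [im_mul, hfix a ha h0 hk0]; exact h
    · rintro ⟨ha, h⟩; refine ⟨ha, ?_⟩; rw [im_mul, hfix a ha h0 hk0] at h; exact h
  have m4 : (k ∈ X ↔ (arc n k k).image σ ∈ C) := by
    simp only [hX, Xs, mem_filter, mem_range]
    exact ⟨fun h => h.2, fun h => ⟨by omega, h⟩⟩
  have m5 : (k ∈ Y ↔ (arc n k k).image (σ * e : Equiv.Perm (Fin n)) ∈ C) := by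
    simp only [hY, Xs, mem_filter, mem_range]
    exact ⟨fun h => h.2, fun h => ⟨by omega, h⟩⟩
  rw [← m4, ← m5]
  have hXX : (X.erase 0).erase k = (Y.erase 0).erase k := by
    ext a; simp only [mem_erase]
    constructor
    · rintro ⟨a1, a2, a3⟩; exact ⟨a1, a2, (m3 a a2 a1).1 a3⟩
    · rintro ⟨a1, a2, a3⟩; exact ⟨a1, a2, (m3 a a2 a1).2 a3⟩
  have c1 : (X.erase 0).card = k - 1 := by rw [card_erase_of_mem m1, h1]
  have c2 : (Y.erase 0).card = k := by rw [erase_eq_of_notMem m2, h2]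
  have hk0 : k ≠ 0 := by omega
  by_cases a1 : k ∈ Y
  · refine ⟨a1, fun a2 => ?_⟩
    have b1 := card_erase_of_mem (mem_erase.2 ⟨hk0, a1⟩ : k ∈ Y.erase 0)
    have b2 := card_erase_of_mem (mem_erase.2 ⟨hk0, a2⟩ : k ∈ X.erase 0)
    have b3 : 1 ≤ (X.erase 0).card := card_pos.2 ⟨k, mem_erase.2 ⟨hk0, a2⟩⟩
    rw [hXX] at b2; omega
  · have b1 : ((Y.erase 0).erase k).card = k := by
      rw [erase_eq_of_notMem (by simp [a1]), c2]
    have b2 := card_erase_le (s := X.erase 0) (a := k)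
    rw [hXX] at b2; omega

theorem step_C (hk : 1 ≤ k) (hn : 2 * k < n) (ε : ℝ)
    (hε : pE (fun σ => pI ((Xs k C σ).card ≠ k)) ≤ ε)
    (i j : Fin n) (hi : i.val = k - 1) (hj : j.val = k)
    (P Q : Finset (Fin n)) (hP : P.card = k - 1) (hQ : Q.card = k - 1) (hPQ : Disjoint P Q)
    (hPi : i ∉ P) (hPj : j ∉ P) (hQi : i ∉ Q) (hQj : j ∉ Q) :
    pE (fun σ => pI (Gx C P i j σ ∧ ¬ Gx C Q i j σ)) ≤ 2 * ε := by
  classical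
  have hij : i ≠ j := by intro h; rw [h] at hi; omega
  have hi0 : i ∈ arc n k 0 := by rw [mem_arc]; omega
  have hj0 : j ∉ arc n k 0 := by rw [mem_arc]; omega
  have hik : i ∉ arc n k k := by rw [mem_arc]; omega
  have hjk : j ∈ arc n k k := by rw [mem_arc]; omega
  have base : pE (fun σ => pI (Gx C ((arc n k 0).erase i) i j σ ∧ ¬ Gx C ((arc n k k).erase j) i j σ))
      ≤ 2 * ε := by
    have h1 : ∀ σ, pI (Gx C ((arc n k 0).erase i) i j σ ∧ ¬ Gx C ((arc n k k).erase j) i j σ) ≤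
        pI ((Xs k C σ).card ≠ k) + pI ((Xs k C (σ * Equiv.swap i j)).card ≠ k) := by
      intro σ
      apply pI_add
      rintro ⟨a, b⟩
      by_contra hcon
      push Not at hcon
      exact b (step_B k C hk hn i j hi hj σ hcon.1 hcon.2 a)
    refine (pE_mono h1).trans ?_
    rw [pE_add, pE_inv (Equiv.swap i j) (fun σ => pI ((Xs k C σ).card ≠ k))]
    linarith
  set P0 := (arc n k 0).erase i with hP0
  set Q0 := (arc n k k).erase j with hQ0
  have cP0 : P0.card = k - 1 := by rw [card_erase_of_mem hi0, card_arc (by omega) (by omega)]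
  have cQ0 : Q0.card = k - 1 := by rw [card_erase_of_mem hjk, card_arc (by omega) (by omega)]
  have dPQ0 : Disjoint P0 Q0 :=
    disjoint_of_subset_left (erase_subset _ _) (disjoint_of_subset_right (erase_subset _ _)
      (arc_disj (by omega) (by omega) (by omega) (by omega)))
  have nP0 : i ∉ P0 ∧ j ∉ P0 := ⟨by simp [hP0], by simp [hP0, hj0]⟩
  have nQ0 : i ∉ Q0 ∧ j ∉ Q0 := ⟨by simp [hQ0, hik], by simp [hQ0]⟩
  obtain ⟨e1, f1, g1⟩ := perm_ext {i, j} P0 P (by simp [nP0]) (by simp [hPi, hPj]) (by omega)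
  have e1i : e1 i = i := f1 i (by simp)
  have e1j : e1 j = j := f1 j (by simp)
  have d1 : Disjoint P (Q0.image e1) := by rw [← g1, im_disj]; exact dPQ0
  have n1 : i ∉ Q0.image e1 := by
    intro hh; obtain ⟨x, hx, hxi⟩ := mem_image.1 hh
    rw [← e1i] at hxi; exact nQ0.1 (e1.injective hxi ▸ hx)
  have n2 : j ∉ Q0.image e1 := by
    intro hh; obtain ⟨x, hx, hxi⟩ := mem_image.1 hh
    rw [← e1j] at hxi; exact nQ0.2 (e1.injective hxi ▸ hx)
  obtain ⟨e2, f2, g2⟩ := perm_ext (insert i (insert j P)) (Q0.image e1) Q (by simp [n1, n2, d1])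
    (by simp [hQi, hQj, hPQ]) (by rw [im_card]; omega)
  have e2i : e2 i = i := f2 i (by simp)
  have e2j : e2 j = j := f2 j (by simp)
  have e2P : P.image e2 = P := im_fix _ _ fun a ha => f2 a (by simp [ha])
  have := pE_inv e2 (fun σ => pI (Gx C P i j (σ * e1) ∧ ¬ Gx C Q i j (σ * e1)))
  have h3 := pE_inv (e2 * e1) (fun σ => pI (Gx C P0 i j σ ∧ ¬ Gx C Q0 i j σ))
  simp only [Gx_mul, im_mul, Equiv.Perm.mul_apply, e1i, e1j, e2i, e2j, g1, g2, e2P] at h3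
  rw [h3]; exact base

theorem chain_step (hk : 1 ≤ k) (hn : 2 * k < n) (ε : ℝ) (i j : Fin n) (hij : i ≠ j)
    (H : ∀ P Q : Finset (Fin n), P.card = k - 1 → Q.card = k - 1 → Disjoint P Q →
      i ∉ P → j ∉ P → i ∉ Q → j ∉ Q → pE (fun σ => pI (Gx C P i j σ ∧ ¬ Gx C Q i j σ)) ≤ ε)
    (m : ℕ) : ∀ (P Q : Finset (Fin n)) (hP : P.card = k - 1) (hQ : Q.card = k - 1)
    (hPi : i ∉ P) (hPj : j ∉ P) (hQi : i ∉ Q) (hQj : j ∉ Q) (hm : (P \ Q).card = m),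
    pE (fun σ => pI (Gx C P i j σ ∧ ¬ Gx C Q i j σ)) ≤ 2 * m * ε := by
  classical
  have tri : ∀ P Q R : Finset (Fin n), pE (fun σ => pI (Gx C P i j σ ∧ ¬ Gx C R i j σ)) ≤
      pE (fun σ => pI (Gx C P i j σ ∧ ¬ Gx C Q i j σ)) + pE (fun σ => pI (Gx C Q i j σ ∧ ¬ Gx C R i j σ)) := by
    intro P Q R
    rw [← pE_add]
    exact pE_mono fun σ => pI_add (by tauto)
  induction m with
  | zero =>
    intro P Q hP hQ _ _ _ _ hm
    have : P = Q := by
      have h1 : P ⊆ Q := by rw [← sdiff_eq_empty_iff_subset]; exact card_eq_zero.1 hm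
      exact eq_of_subset_of_card_le h1 (by omega)
    subst this
    have : (fun σ => pI (Gx C P i j σ ∧ ¬ Gx C P i j σ)) = fun _ => 0 := by
      ext σ; exact pI_false (by tauto)
    rw [this, pE_const]; simp
  | succ m ih =>
    intro P Q hP hQ hPi hPj hQi hQj hm
    obtain ⟨x, hx⟩ : (P \ Q).Nonempty := card_pos.1 (by omega)
    have hc := card_sdiff_comm (s := P) (t := Q) (by omega)
    obtain ⟨y, hy⟩ : (Q \ P).Nonempty := card_pos.1 (by omega)
    rw [mem_sdiff] at hx hy
    have hP1 : 1 ≤ P.card := card_pos.2 ⟨x, hx.1⟩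
    set R := insert y (P.erase x) with hR
    have yi : i ≠ y := fun h => hQi (h ▸ hy.1)
    have yj : j ≠ y := fun h => hQj (h ▸ hy.1)
    have cR : R.card = k - 1 := by
      rw [hR, card_insert_of_notMem (by simp [hy.2]), card_erase_of_mem hx.1]; omega
    have Ri : i ∉ R := by simp [hR, hPi, yi]
    have Rj : j ∉ R := by simp [hR, hPj, yj]
    have RQ : (R \ Q).card = m := by
      have : R \ Q = (P \ Q).erase x := by
        ext z; simp only [hR, mem_sdiff, mem_insert, mem_erase]
        constructor
        · rintro ⟨rfl | h, h2⟩
          · exact absurd hy.1 h2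
          · exact ⟨h.1, h.2, h2⟩
        · rintro ⟨h1, h2, h3⟩; exact ⟨Or.inr ⟨h1, h2⟩, h3⟩
      rw [this, card_erase_of_mem (mem_sdiff.2 hx), hm]; simp
    have h1 := ih R Q cR hQ Ri Rj hQi hQj RQ
    -- common disjoint set
    obtain ⟨Z, hZ, cZ⟩ : ∃ Z ⊆ univ \ insert i (insert j (insert y P)), Z.card = k - 1 := by
      apply exists_subset_card_eq
      rw [card_sdiff_of_subset (subset_univ _), card_univ, Fintype.card_fin]
      have := card_insert_le i (insert j (insert y P))
      have := card_insert_le j (insert y P)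
      have := card_insert_le y P
      omega
    have hZ' : ∀ z ∈ Z, z ≠ i ∧ z ≠ j ∧ z ≠ y ∧ z ∉ P := by
      intro z hz; simpa using hZ hz
    have Zi : i ∉ Z := fun h => (hZ' i h).1 rfl
    have Zj : j ∉ Z := fun h => (hZ' j h).2.1 rfl
    have dPZ : Disjoint P Z := disjoint_left.2 fun z hz hz' => (hZ' z hz').2.2.2 hz
    have dZR : Disjoint Z R := by
      refine disjoint_left.2 fun z hz hz' => ?_
      rcases mem_insert.1 hz' with h | h
      · exact (hZ' z hz).2.2.1 h
      · exact (hZ' z hz).2.2.2 (mem_of_mem_erase h)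
    have h2 := H P Z hP cZ dPZ hPi hPj Zi Zj
    have h3 := H Z R cZ cR dZR Zi Zj Ri Rj
    have t1 := tri P Z R
    have t2 := tri P R Q
    push_cast
    linarith

end stab

section stab2
variable {n : ℕ} (k : ℕ) (C : Finset (Finset (Fin n)))

theorem Gx_sym (P P' : Finset (Fin n)) (i j i' j' : Fin n) (hij : i ≠ j) (hij' : i' ≠ j')
    (hc : P.card = P'.card) (hi : i ∉ P) (hj : j ∉ P) (hi' : i' ∉ P') (hj' : j' ∉ P') :
    pE (fun σ => pI (Gx C P' i' j' σ)) = pE (fun σ => pI (Gx C P i j σ)) := by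
  classical
  obtain ⟨e1, -, g1⟩ := perm_ext ∅ {i} {i'} (by simp) (by simp) (by simp)
  have g1 : e1 i = i' := by simpa using g1
  obtain ⟨e2, f2, g2⟩ := perm_ext {i'} {e1 j} {j'}
    (by rw [← g1]; simp [hij]) (by simp [hij']) (by simp)
  have g2 : e2 (e1 j) = j' := by simpa using g2
  have f2 : e2 i' = i' := f2 i' (by simp)
  obtain ⟨e3, f3, g3⟩ := perm_ext {i', j'} ((P.image e1).image e2) P'
    (by
      have a1 : i' = e2 (e1 i) := by rw [g1, f2]
      rw [a1, ← g2]
      simp only [disjoint_insert_left, disjoint_singleton_left, mem_image]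
      constructor
      · rintro ⟨a, ⟨b, hb, rfl⟩, h⟩
        exact hi (e1.injective (e2.injective h) ▸ hb)
      · rintro ⟨a, ⟨b, hb, rfl⟩, h⟩
        exact hj (e1.injective (e2.injective h) ▸ hb))
    (by simp [hi', hj']) (by rw [im_card, im_card, hc])
  have f3i := f3 i' (by simp)
  have f3j := f3 j' (by simp)
  have h3 := pE_inv (e3 * e2 * e1) (fun σ => pI (Gx C P i j σ))
  simp only [Gx_mul, im_mul, Equiv.Perm.mul_apply, g1, g2, f2, g3, f3i, f3j] at h3
  exact h3

theorem adj_bound (hk : 1 ≤ k) (hn : k < n) (ε : ℝ)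
    (hε : pE (fun σ => pI ((Xs k C σ).card ≠ k)) ≤ ε)
    (P : Finset (Fin n)) (i j : Fin n) (hij : i ≠ j) (hP : P.card = k - 1) (hi : i ∉ P) (hj : j ∉ P) :
    1 - ε ≤ n * pE (fun σ => pI (Gx C P i j σ)) := by
  classical
  have h1 : ∀ σ : Equiv.Perm (Fin n), 1 - pI ((Xs k C σ).card ≠ k) ≤
      ∑ a ∈ range n, pI ((arc n k a).image σ ∈ C ∧ (arc n k (if a + 1 = n then 0 else a + 1)).image σ ∉ C) := by
    intro σ
    by_cases h : (Xs k C σ).card = k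
    · obtain ⟨a, ha, h1, h2⟩ := exists_adj hk hn _ (Xs_sub k C σ) h
      have hnn : 0 ≤ pI ((Xs k C σ).card ≠ k) := pI_nonneg _
      refine le_trans ?_ (single_le_sum (f := fun a => pI ((arc n k a).image σ ∈ C ∧
        (arc n k (if a + 1 = n then 0 else a + 1)).image σ ∉ C)) (fun b _ => pI_nonneg _) ha)
      rw [pI_true (p := _ ∧ _) ⟨(mem_filter.1 h1).2, fun hh => h2 (mem_filter.2 ⟨?_, hh⟩)⟩]
      · linarith
      · have := mem_range.1 ha
        rw [mem_range]; split_ifs <;> omega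
    · rw [pI_true h]
      simp only [sub_self]
      exact sum_nonneg fun _ _ => pI_nonneg _
  have h2 := pE_mono h1
  rw [pE_sub, pE_const, pE_sum] at h2
  have h3 : ∀ a ∈ range n, pE (fun σ => pI ((arc n k a).image σ ∈ C ∧
      (arc n k (if a + 1 = n then 0 else a + 1)).image σ ∉ C)) = pE (fun σ => pI (Gx C P i j σ)) := by
    intro a ha
    have ha := mem_range.1 ha
    let i' : Fin n := ⟨a, ha⟩
    let j' : Fin n := ⟨if a + k < n then a + k else a + k - n, by split_ifs <;> omega⟩
    have hi'v : i'.val = a := rfl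
    have hj'v : j'.val = if a + k < n then a + k else a + k - n := rfl
    have hia : i' ∈ arc n k a := by rw [mem_arc]; omega
    have hja : j' ∉ arc n k a := by rw [mem_arc, hj'v]; split_ifs <;> omega
    have hij' : i' ≠ j' := fun h => hja (h ▸ hia)
    have hs : arc n k (if a + 1 = n then 0 else a + 1) = insert j' ((arc n k a).erase i') := by
      ext p
      simp only [mem_insert, mem_erase, mem_arc, Fin.ext_iff, hi'v, hj'v, ne_eq]
      have := p.2
      split_ifs <;> omega
    rw [← Gx_sym C P ((arc n k a).erase i') i j i' j' hij hij' ?_ hi hj (by simp) (by simp [hja])]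
    · unfold Gx
      rw [hs, insert_erase hia]
    · rw [hP, card_erase_of_mem hia, card_arc (by omega) ha]
  rw [sum_congr rfl h3] at h2
  simp only [sum_const, card_range, nsmul_eq_mul] at h2
  linarith

theorem pigeon (hn : 0 < n) (i j : Fin n) (G : Equiv.Perm (Fin n) → Prop) :
    ∃ i' j' : Fin n, pE (fun σ => pI (G σ)) ≤ n^2 * pE (fun σ => pI (σ i = i' ∧ σ j = j' ∧ G σ)) := by
  classical
  have : NeZero n := ⟨by omega⟩
  have h1 : ∀ σ : Equiv.Perm (Fin n), pI (G σ) ≤ ∑ q : Fin n × Fin n, pI (σ i = q.1 ∧ σ j = q.2 ∧ G σ) := by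
    intro σ
    refine le_trans (pI_mono fun h => ?_) (single_le_sum (f := fun q : Fin n × Fin n =>
      pI (σ i = q.1 ∧ σ j = q.2 ∧ G σ)) (fun b _ => pI_nonneg _) (mem_univ (σ i, σ j)))
    exact ⟨rfl, rfl, h⟩
  have h2 := pE_mono h1
  rw [pE_sum] at h2
  have hn' : (0:ℝ) < n := by exact_mod_cast hn
  have h3 : ∑ q : Fin n × Fin n, pE (fun σ => pI (G σ)) / (n^2:ℝ) ≤
      ∑ q : Fin n × Fin n, pE (fun σ => pI (σ i = q.1 ∧ σ j = q.2 ∧ G σ)) := by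
    refine le_trans (le_of_eq ?_) h2
    simp
    field_simp
  obtain ⟨q, -, hq⟩ := exists_le_of_sum_le univ_nonempty h3
  refine ⟨q.1, q.2, ?_⟩
  rw [div_le_iff₀ (by positivity)] at hq
  linarith

/-- most exchanges are good -/
theorem exists_pair (hk : 1 ≤ k) (hn : 2 * k < n) (ε : ℝ) (hε2 : ε ≤ 1/2)
    (hε : pE (fun σ => pI ((Xs k C σ).card ≠ k)) ≤ ε) :
    ∃ i j : Fin n, i ≠ j ∧
      ((((univ : Finset (Fin n)) \ {i, j}).powersetCard (k-1)).filter
        (fun R => ¬ (insert i R ∈ C ∧ insert j R ∉ C))).card ≤ 8 * n^4 * ε * (n-2).choose (k-1) := by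
  classical
  have hn0 : (0:ℝ) < n := by exact_mod_cast (by omega : 0 < n)
  let i : Fin n := ⟨k-1, by omega⟩
  let j : Fin n := ⟨k, by omega⟩
  have hi : i.val = k - 1 := rfl
  have hj : j.val = k := rfl
  have hij : i ≠ j := by intro h; rw [h] at hi; omega
  have hi0 : i ∈ arc n k 0 := by rw [mem_arc]; omega
  have hj0 : j ∉ arc n k 0 := by rw [mem_arc]; omega
  set P0 := (arc n k 0).erase i with hP0
  have cP0 : P0.card = k - 1 := by rw [card_erase_of_mem hi0, card_arc (by omega) (by omega)]
  have nP0 : i ∉ P0 ∧ j ∉ P0 := ⟨by simp [hP0], by simp [hP0, hj0]⟩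
  have hε0 : 0 ≤ ε := le_trans (pE_nonneg fun σ => pI_nonneg _) hε
  have hA := adj_bound k C hk (by omega) ε hε P0 i j hij cP0 nP0.1 nP0.2
  obtain ⟨i', j', hp⟩ := pigeon (by omega) i j (Gx C P0 i j)
  set θ := pE (fun σ => pI (σ i = i' ∧ σ j = j' ∧ Gx C P0 i j σ)) with hθ
  have hθ1 : 1 ≤ 2 * n^3 * θ := by
    have : n * pE (fun σ => pI (Gx C P0 i j σ)) ≤ n * (n^2 * θ) := by gcongr
    nlinarith
  have hij' : i' ≠ j' := by
    intro h
    have : (fun σ : Equiv.Perm (Fin n) => pI (σ i = i' ∧ σ j = j' ∧ Gx C P0 i j σ)) = fun _ => 0 := by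
      ext σ
      apply pI_false
      rintro ⟨h1, h2, -⟩
      exact hij (σ.injective (by rw [h1, h2, h]))
    rw [hθ, this, pE_const] at hθ1
    norm_num at hθ1
  refine ⟨i', j', hij', ?_⟩
  set b := ((((univ : Finset (Fin n)) \ {i', j'}).powersetCard (k-1)).filter
        (fun R => ¬ (insert i' R ∈ C ∧ insert j' R ∉ C))).card with hb
  have hch : ∀ P ∈ ((univ : Finset (Fin n)) \ {i, j}).powersetCard (k-1),
      pE (fun σ => pI ((σ i = i' ∧ σ j = j' ∧ Gx C P0 i j σ) ∧ ¬ Gx C P i j σ)) ≤ 4 * n * ε := by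
    intro P hP
    have hP := mem_powersetCard.1 hP
    have hPi : i ∉ P := fun h => by have := hP.1 h; simp at this
    have hPj : j ∉ P := fun h => by have := hP.1 h; simp at this
    have := chain_step k C hk hn (2*ε) i j hij (fun P Q h1 h2 h3 h4 h5 h6 h7 =>
      step_C k C hk hn ε hε i j hi hj P Q h1 h2 h3 h4 h5 h6 h7) _ P0 P cP0 hP.2 nP0.1 nP0.2 hPi hPj rfl
    refine le_trans (pE_mono fun σ => pI_mono ?_) (this.trans ?_)
    · tauto
    · have : (P0 \ P).card ≤ n := by
        simpa using card_le_univ (P0 \ P)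
      have : ((P0 \ P).card : ℝ) ≤ n := by exact_mod_cast this
      nlinarith
  have hsum := sum_le_sum hch
  rw [sum_const, card_powersetCard, card_sdiff_of_subset (subset_univ _), card_univ, Fintype.card_fin,
    card_pair hij, nsmul_eq_mul, ← pE_sum] at hsum
  have hlow : (b:ℝ) * θ ≤ pE (fun σ => ∑ P ∈ ((univ : Finset (Fin n)) \ {i, j}).powersetCard (k-1),
      pI ((σ i = i' ∧ σ j = j' ∧ Gx C P0 i j σ) ∧ ¬ Gx C P i j σ)) := by
    rw [hθ, ← pE_mul]
    refine pE_mono fun σ => ?_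
    by_cases hE : σ i = i' ∧ σ j = j' ∧ Gx C P0 i j σ
    · rw [pI_true hE, mul_one, sum_pI]
      have h1 := powersetCard_im σ ((univ : Finset (Fin n)) \ {i, j}) (k-1)
        (fun R => ¬ (insert i' R ∈ C ∧ insert j' R ∉ C))
      have h2 : ((univ : Finset (Fin n)) \ {i, j}).image σ = univ \ {i', j'} := by
        rw [image_sdiff _ _ σ.injective, image_univ_of_surjective σ.surjective]
        simp [image_insert, hE.1, hE.2.1]
      rw [h2] at h1
      rw [hb, ← h1]
      refine le_of_eq ?_
      congr 2
      ext P
      have hg : Gx C P i j σ ↔ (insert i' (P.image σ) ∈ C ∧ insert j' (P.image σ) ∉ C) := by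
        unfold Gx
        rw [im_insert, im_insert, hE.1, hE.2.1]
      rw [mem_filter, mem_filter, hg]
      tauto
    · rw [pI_false hE, mul_zero]
      exact sum_nonneg fun _ _ => pI_nonneg _
  have hbθ := hlow.trans hsum
  have hb0 : (0:ℝ) ≤ b := by positivity
  calc (b:ℝ) ≤ b * (2 * n^3 * θ) := le_mul_of_one_le_right hb0 hθ1
    _ = 2 * n^3 * (b * θ) := by ring
    _ ≤ 2 * n^3 * ((n-2).choose (k-1) * (4 * n * ε)) := by gcongr
    _ = _ := by ring

theorem count_off (hk : 1 ≤ k) (hC : ∀ A ∈ C, A.card = k) (ψ : ℕ)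
    (hψ : ∀ v ∈ C, (C.filter (fun u => Disjoint v u)).card ≤ ψ) (i j : Fin n) :
    (C.filter (fun v => i ∉ v)).card * ((n-k-2).choose (k-1) - ψ) ≤
    ((((univ : Finset (Fin n)) \ {i, j}).powersetCard (k-1)).filter
        (fun R => ¬ (insert i R ∈ C ∧ insert j R ∉ C))).card * (n-k).choose k := by
  classical
  refine card_mul_le_card_mul (fun v R => Disjoint v R) ?_ ?_
  · intro v hv
    have hv := mem_filter.1 hv
    let A := ((univ : Finset (Fin n)) \ ({i,j} ∪ v)).powersetCard (k-1)
    have hA : (n-k-2).choose (k-1) ≤ A.card := by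
      rw [card_powersetCard, card_sdiff_of_subset (subset_univ _), card_univ, Fintype.card_fin]
      apply Nat.choose_le_choose
      have h1 := card_union_le {i,j} v
      have h2 : ({i,j} : Finset (Fin n)).card ≤ 2 := card_le_two
      have := hC v hv.1
      omega
    have hAm : ∀ R ∈ A, R.card = k-1 ∧ i ∉ R ∧ j ∉ R ∧ Disjoint v R := by
      intro R hR
      have hR := mem_powersetCard.1 hR
      refine ⟨hR.2, fun h => ?_, fun h => ?_, disjoint_left.2 fun x hx h => ?_⟩
      · have := hR.1 h; simp at this
      · have := hR.1 h; simp at this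
      · have := hR.1 h; simp [hx] at this
    have hsm : (A.filter (fun R => insert i R ∈ C)).card ≤ ψ := by
      refine le_trans (card_le_card_of_injOn (fun R => insert i R) ?_ ?_) (hψ v hv.1)
      · intro R hR
        simp only [mem_coe, mem_filter] at hR ⊢
        exact ⟨hR.2, by rw [disjoint_insert_right]; exact ⟨hv.2, (hAm R hR.1).2.2.2⟩⟩
      · intro R hR R' hR' h
        simp only [mem_coe, mem_filter] at hR hR' h
        rw [← erase_insert (hAm R hR.1).2.1, h, erase_insert (hAm R' hR'.1).2.1]
    have hsp := card_filter_add_card_filter_not (s := A) (fun R => insert i R ∈ C)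
    have : (A.filter (fun R => ¬ insert i R ∈ C)).card ≤ (bipartiteAbove (fun v R => Disjoint v R)
      ((((univ : Finset (Fin n)) \ {i, j}).powersetCard (k-1)).filter
        (fun R => ¬ (insert i R ∈ C ∧ insert j R ∉ C))) v).card := by
      refine card_le_card ?_
      intro R hR
      have hR := mem_filter.1 hR
      obtain ⟨a1, a2, a3, a4⟩ := hAm R hR.1
      simp only [bipartiteAbove, mem_filter, mem_powersetCard]
      refine ⟨⟨⟨?_, a1⟩, fun h => hR.2 h.1⟩, a4⟩
      intro x hx
      simp only [mem_sdiff, mem_univ, true_and, mem_insert, mem_singleton, not_or]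
      exact ⟨fun h => a2 (h ▸ hx), fun h => a3 (h ▸ hx)⟩
    omega
  · intro R hR
    have hR := (mem_powersetCard.1 (mem_filter.1 hR).1)
    have hiR : i ∉ R := fun h => by have := hR.1 h; simp at this
    have : (bipartiteBelow (fun v R => Disjoint v R) (C.filter (fun v => i ∉ v)) R) ⊆
        ((univ : Finset (Fin n)) \ insert i R).powersetCard k := by
      intro v hv
      simp only [bipartiteBelow, mem_filter] at hv
      refine mem_powersetCard.2 ⟨fun x hx => ?_, hC v hv.1.1⟩
      simp only [mem_sdiff, mem_univ, true_and, mem_insert, not_or]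
      exact ⟨fun h => hv.1.2 (h ▸ hx), disjoint_left.1 hv.2 hx⟩
    refine (card_le_card this).trans ?_
    rw [card_powersetCard, card_sdiff_of_subset (subset_univ _), card_univ, Fintype.card_fin,
      card_insert_of_notMem hiR, hR.2, Nat.sub_add_cancel hk]

end stab2

theorem D_le (n k : ℕ) (hk : 1 ≤ k) (hn : 2 * k < n) :
    (n-k).choose k ≤ n^2 * (n-k-2).choose (k-1) := by
  obtain ⟨l, rfl⟩ : ∃ l, k = l + 1 := ⟨k-1, by omega⟩
  obtain ⟨m, hm⟩ : ∃ m, n - (l+1) = m + 2 := ⟨n-(l+1)-2, by omega⟩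
  rw [hm]
  simp only [Nat.add_sub_cancel]
  have h1 := Nat.add_one_mul_choose_eq (m+1) l
  have h2 := Nat.choose_mul_succ_eq m l
  have h3 : 1 ≤ m + 1 - l := by omega
  have h4 : (m+1+1).choose (l+1) ≤ (m+2) * (m+1).choose l := by
    rw [h1]; exact Nat.le_mul_of_pos_right _ (by omega)
  have h5 : (m+1).choose l ≤ m.choose l * (m+1) := by
    rw [h2]; exact Nat.le_mul_of_pos_right _ (by omega)
  calc (m+2).choose (l+1) ≤ (m+2) * (m.choose l * (m+1)) := h4.trans (Nat.mul_le_mul_left _ h5)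
    _ = (m+2) * (m+1) * m.choose l := by ring
    _ ≤ n^2 * m.choose l := by
      apply Nat.mul_le_mul_right
      rw [pow_two]
      exact Nat.mul_le_mul (by omega) (by omega)

theorem stability (n k ψ : ℕ) (hk : 1 ≤ k) (hn : 2 * k < n) (C : Finset (Finset (Fin n)))
    (hC : ∀ A ∈ C, A.card = k)
    (hψ : ∀ v ∈ C, (C.filter (fun u => Disjoint v u)).card ≤ ψ)
    (hD : ψ * (2^13 * n^10) ≤ (n-k).choose k)
    (hbig : (1 - 1 / (2^11 * (n:ℝ)^8)) * ((n-1).choose (k-1) : ℝ) ≤ C.card) :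
    ∃ i : Fin n, 32 * n * (C.filter (fun v => i ∉ v)).card ≤ (n-1).choose (k-1) := by
  have hn1 : (1:ℝ) ≤ n := by exact_mod_cast (by omega : 1 ≤ n)
  have hn0 : (0:ℝ) < n := by linarith
  set N : ℝ := ((n-1).choose (k-1) : ℝ) with hN
  set V : ℝ := (n.choose k : ℝ) with hV
  set D : ℝ := ((n-k).choose k : ℝ) with hDD
  set D2 : ℝ := ((n-k-2).choose (k-1) : ℝ) with hD2
  have hVpos : 0 < V := by rw [hV]; exact_mod_cast Nat.choose_pos (by omega)
  have hDpos : 0 < D := by rw [hDD]; exact_mod_cast Nat.choose_pos (by omega)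
  have hD2pos : 0 < D2 := by rw [hD2]; exact_mod_cast Nat.choose_pos (by omega)
  have hNpos : 0 < N := by rw [hN]; exact_mod_cast Nat.choose_pos (by omega)
  have hNV : n * N = V * k := by
    have := Nat.add_one_mul_choose_eq (n-1) (k-1)
    rw [Nat.sub_add_cancel (by omega), Nat.sub_add_cancel hk] at this
    rw [hN, hV]; exact_mod_cast this
  set η : ℝ := ψ / D with hη
  have hDψ : (ψ:ℝ) * (2^13 * n^10) ≤ D := by rw [hDD]; exact_mod_cast hD
  have hη1 : η * (2^13 * n^10) ≤ 1 := by
    rw [hη, div_mul_eq_mul_div, div_le_one hDpos]; exact hDψ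
  have hη0 : 0 ≤ η := by positivity
  have hne := pr_ne k C hk (by omega) (C.card / V) η (fun I hI => U1 C (by omega) hC I hI)
    (fun I J hI hJ hIJ => by
      rw [hη, le_div_iff₀ hDpos, mul_comm]
      exact E1 C ψ hψ I J hI hJ hIJ)
  set ε : ℝ := 1 / (2^11 * n^7) with hε
  have hk2 : (k:ℝ) ≤ n / 2 := by
    have : (2 * k : ℝ) ≤ n := by exact_mod_cast (by omega : 2 * k ≤ n)
    linarith
  have hk0 : (0:ℝ) ≤ k := by positivity
  have hne2 : pE (fun σ => pI ((Xs k C σ).card ≠ k)) ≤ ε := by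
    refine hne.trans ?_
    have h1 : (k:ℝ) - n * (C.card / V) ≤ 1 / (2^12 * n^7) := by
      have h2 : (n:ℝ) * (C.card / V) ≥ k * (1 - 1 / (2^11 * (n:ℝ)^8)) := by
        rw [ge_iff_le, mul_div_assoc', le_div_iff₀ hVpos]
        calc k * (1 - 1 / (2^11 * (n:ℝ)^8)) * V = (1 - 1 / (2^11 * (n:ℝ)^8)) * (V * k) := by ring
          _ = n * ((1 - 1 / (2^11 * (n:ℝ)^8)) * N) := by rw [← hNV]; ring
          _ ≤ _ := by gcongr
      have h3 : (k:ℝ) * (1 / (2^11 * (n:ℝ)^8)) ≤ n / 2 * (1 / (2^11 * (n:ℝ)^8)) := by gcongr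
      have h4 : (n:ℝ) / 2 * (1 / (2^11 * (n:ℝ)^8)) = 1 / (2^12 * n^7) := by field_simp
      linarith
    have h5 : ((n:ℝ)+1) * (n^2 * η) ≤ 1 / (2^12 * n^7) := by
      rw [le_div_iff₀ (by positivity)]
      calc ((n:ℝ)+1) * (n^2 * η) * (2^12 * n^7) ≤ (n+n) * (n^2 * η) * (2^12 * n^7) := by gcongr
        _ = η * (2^13 * n^10) := by ring
        _ ≤ 1 := hη1
    have h6 : ε = 1 / (2^12 * n^7) + 1 / (2^12 * n^7) := by rw [hε]; field_simp; norm_num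
    linarith
  have hε2 : ε ≤ 1/2 := by
    rw [hε]
    apply one_div_le_one_div_of_le (by norm_num)
    have : (1:ℝ) ≤ n^7 := one_le_pow₀ hn1
    linarith
  obtain ⟨i, j, hij, hb⟩ := exists_pair k C hk hn ε hε2 hne2
  refine ⟨i, ?_⟩
  have hc := count_off k C hk hC ψ hψ i j
  set b := ((((univ : Finset (Fin n)) \ {i, j}).powersetCard (k-1)).filter
        (fun R => ¬ (insert i R ∈ C ∧ insert j R ∉ C))).card
  set c := (C.filter (fun v => i ∉ v)).card
  have hDle : D ≤ n^2 * D2 := by rw [hDD, hD2]; exact_mod_cast D_le n k hk hn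
  have hψ2 : (ψ:ℝ) ≤ D2 / 2 := by
    have h1 : (ψ:ℝ) * (2^13 * n^10) ≤ n^2 * D2 := hDψ.trans hDle
    have h2 : (ψ:ℝ) * (2 * n^2) ≤ ψ * (2^13 * n^10) := by
      gcongr
      · norm_num
      · norm_num
    have h3 : (ψ:ℝ) * 2 * n^2 ≤ D2 * n^2 := by linarith
    have := le_of_mul_le_mul_right h3 (by positivity)
    linarith
  have hc' : (c:ℝ) * (D2 - ψ) ≤ b * D := by
    have h1 : ((n-k-2).choose (k-1) : ℝ) - ψ ≤ (((n-k-2).choose (k-1) - ψ : ℕ) : ℝ) := by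
      have : (n-k-2).choose (k-1) ≤ ((n-k-2).choose (k-1) - ψ) + ψ := by omega
      have : ((n-k-2).choose (k-1) : ℝ) ≤ (((n-k-2).choose (k-1) - ψ : ℕ) : ℝ) + ψ := by exact_mod_cast this
      linarith
    calc (c:ℝ) * (D2 - ψ) ≤ c * (((n-k-2).choose (k-1) - ψ : ℕ) : ℝ) := by gcongr
      _ ≤ b * D := by rw [hDD]; exact_mod_cast hc
  have hM : ((n-2).choose (k-1) : ℝ) ≤ N := by
    rw [hN]; exact_mod_cast Nat.choose_le_choose _ (by omega)
  have hb2 : (b:ℝ) * (2^8 * n^3) ≤ N := by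
    calc (b:ℝ) * (2^8 * n^3) ≤ (8 * n^4 * ε * N) * (2^8 * n^3) := by
          refine mul_le_mul_of_nonneg_right (hb.trans ?_) (by positivity)
          gcongr
      _ = N := by rw [hε]; field_simp; norm_num
  have hc2 : (c:ℝ) ≤ 2 * n^2 * b := by
    have h1 : (c:ℝ) * (D2/2) ≤ b * (n^2 * D2) := by
      calc (c:ℝ) * (D2/2) ≤ c * (D2 - ψ) := by gcongr; linarith
        _ ≤ b * D := hc'
        _ ≤ _ := by gcongr
    have h3 : (c:ℝ) * D2 ≤ (2 * n^2 * b) * D2 := by linarith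
    exact le_of_mul_le_mul_right h3 hD2pos
  have fin : (32 * n * c : ℝ) ≤ N := by
    calc (32 * n * c : ℝ) ≤ 32 * n * (2 * n^2 * b) := by gcongr
      _ = 64 * (b * n^3) := by ring
      _ ≤ b * (2^8 * n^3) := by
        have : (0:ℝ) ≤ b * n^3 := by positivity
        linarith
      _ ≤ N := hb2
  rw [hN] at fin
  exact_mod_cast fin

theorem assemble (n p s d : ℕ) (hn : n = 2*p+4+d) (hs : 3 * s ≤ d) (hd : 1 ≤ d)
    (h4 : 4 * n * (4 * n ^ 2) ≤ (p+1+s).choose (p+1))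
    (hD : 2^13 * n^10 * (2^13 * n^10) ≤ (n-(p+2)).choose (p+2))
    (hN : 2^13 * n^9 ≤ (n-1).choose (p+1)) :
    (Nat.card {F : Finset (Finset (Fin n)) //
          (∀ A ∈ F, A.card = p+2) ∧
          (∀ A ∈ F, ∀ B ∈ F, (A ∩ B).Nonempty) ∧
          ¬ ∃ x : Fin n, ∀ A ∈ F, x ∈ A} : ℝ) ≤
      2 ^ ((n-1).choose (p+1)) * ((1 + 3 * n) / 2 ^ n) := by
  classical
  set N := (n-1).choose (p+1) with hNdef
  set V := n.choose (p+2) with hV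
  set ψ := 2^13 * n^10 with hψ
  have hn0 : 0 < n := by omega
  have hψ0 : 0 < ψ := by positivity
  set b := V / ψ with hb
  set L := N / (2^11 * n^8) with hL
  have hVN : V ≤ n * N := by
    have := Nat.add_one_mul_choose_eq (n-1) (p+1)
    rw [Nat.sub_add_cancel hn0] at this
    rw [hNdef, this]
    exact Nat.le_mul_of_pos_right _ (by omega)
  have hnbL : n * b + n ≤ L := by
    rw [hL, Nat.le_div_iff_mul_le (by positivity)]
    have h1 : b * ψ ≤ V := Nat.div_mul_le_self _ _
    have h2 : n * (b * (2^13 * n^9)) ≤ n * N := by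
      calc n * (b * (2^13 * n^9)) = b * ψ := by rw [hψ]; ring
        _ ≤ _ := h1.trans hVN
    have h3 := Nat.le_of_mul_le_mul_left h2 hn0
    have h5 : (n * b + n) * (2^11 * n^8) * 4 ≤ N + N := by
      calc (n * b + n) * (2^11 * n^8) * 4 = b * (2^13 * n^9) + 2^13 * n^9 := by ring
        _ ≤ _ := Nat.add_le_add h3 hN
    omega
  let K : Finset (Finset (Fin n)) := univ.powersetCard (p+2)
  have hK : K.card = V := by simp [K, hV]
  have hKm : ∀ A : Finset (Fin n), A ∈ K ↔ A.card = p+2 := fun A => by simp [K, mem_powersetCard]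
  let nb : Finset (Fin n) → Finset (Finset (Fin n)) := fun v => K.filter (fun u => Disjoint v u)
  let NT : Finset (Finset (Fin n)) → Finset (Finset (Fin n)) := fun T => T.biUnion nb
  let CT : Finset (Finset (Fin n)) → Finset (Finset (Fin n)) := fun T =>
    (K \ NT T).filter (fun v => (nb v \ NT T).card < ψ)
  let 𝓕 : Finset (Finset (Finset (Fin n))) := univ.filter (fun F => (∀ A ∈ F, A.card = p+2) ∧
          (∀ A ∈ F, ∀ B ∈ F, (A ∩ B).Nonempty) ∧ ¬ ∃ x : Fin n, ∀ A ∈ F, x ∈ A)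
  let 𝒯 := (K.powerset.filter (fun T => T.card ≤ b)).filter (fun T => (CT T).card + L ≤ N)
  obtain ⟨𝓕1, m1⟩ : ∃ 𝓕1 : Finset (Finset (Finset (Fin n))), ∀ F, F ∈ 𝓕1 ↔ F ∈ 𝓕 ∧ ∃ T ∈ 𝒯, F ⊆ CT T :=
    ⟨𝓕.filter (fun F => ∃ T ∈ 𝒯, F ⊆ CT T), fun F => by simp only [mem_filter]⟩
  let 𝓕2 : Fin n → Finset (Finset (Finset (Fin n))) := fun x =>
    𝓕.filter (fun F => 32 * n * (F.filter (fun A => x ∉ A)).card ≤ N)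
  have hcard : Nat.card {F : Finset (Finset (Fin n)) //
          (∀ A ∈ F, A.card = p+2) ∧
          (∀ A ∈ F, ∀ B ∈ F, (A ∩ B).Nonempty) ∧
          ¬ ∃ x : Fin n, ∀ A ∈ F, x ∈ A} = 𝓕.card := by
    rw [Nat.card_eq_fintype_card, Fintype.card_subtype]
  rw [hcard]
  have hcover : 𝓕 ⊆ 𝓕1 ∪ univ.biUnion 𝓕2 := by
    intro F hF
    obtain ⟨hk, hinter, hnt⟩ := (mem_filter.1 hF).2
    obtain ⟨T, hTF, hTc, hTv⟩ := container nb F ψ hψ0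
    have hFC : F ⊆ CT T := by
      intro v hv
      simp only [CT, mem_filter, mem_sdiff, hKm]
      refine ⟨⟨hk v hv, ?_⟩, hTv v hv⟩
      intro hh
      obtain ⟨t, ht, hvt⟩ := mem_biUnion.1 hh
      have h1 := (mem_filter.1 hvt).2
      have h2 := hinter t (hTF ht) v hv
      rw [disjoint_iff_inter_eq_empty.1 h1] at h2
      exact not_nonempty_empty h2
    have hTK : T ⊆ K := fun t ht => (hKm t).2 (hk t (hTF ht))
    have hTb : T.card ≤ b := by
      rw [hb, Nat.le_div_iff_mul_le hψ0]
      refine hTc.trans ?_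
      rw [← hK]
      exact card_le_card (biUnion_subset.2 fun t _ => filter_subset _ _)
    by_cases hsz : (CT T).card + L ≤ N
    · refine mem_union_left _ ((m1 F).2 ⟨hF, T, ?_, hFC⟩)
      exact mem_filter.2 ⟨mem_filter.2 ⟨mem_powerset.2 hTK, hTb⟩, hsz⟩
    · refine mem_union_right _ (mem_biUnion.2 ?_)
      obtain ⟨x, hx⟩ := stability n (p+2) ψ (by omega) (by omega) (CT T)
        (fun A hA => (hKm A).1 (mem_sdiff.1 (mem_filter.1 hA).1).1)
        (fun v hv => by
          refine le_trans (card_le_card ?_) (mem_filter.1 hv).2.le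
          intro u hu
          have hu := mem_filter.1 hu
          have hu1 := mem_sdiff.1 (mem_filter.1 hu.1).1
          exact mem_sdiff.2 ⟨mem_filter.2 ⟨hu1.1, hu.2⟩, hu1.2⟩)
        hD
        (by
          rw [show p + 2 - 1 = p + 1 by omega, ← hNdef]
          have h1 : N ≤ (CT T).card + L := by omega
          have h1' : (N:ℝ) ≤ (CT T).card + L := by exact_mod_cast h1
          have h2 : (L:ℝ) ≤ N / (2^11 * n^8) := by
            have := Nat.cast_div_le (α := ℝ) (m := N) (n := 2^11 * n^8)
            rw [hL]
            refine this.trans (le_of_eq ?_)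
            push_cast; norm_num
          have h3 : (1 - 1 / (2^11 * (n:ℝ)^8)) * (N:ℝ) = N - N / (2^11 * n^8) := by ring
          rw [h3]; linarith)
      rw [show p + 2 - 1 = p + 1 by omega, ← hNdef] at hx
      refine ⟨x, mem_univ _, mem_filter.2 ⟨hF, le_trans (Nat.mul_le_mul_left _ (card_le_card ?_)) hx⟩⟩
      exact filter_subset_filter _ hFC
  have hc1 : (𝓕1.card : ℝ) ≤ 2 ^ N * (1 / 2 ^ n) := by
    have h1 := card_families_le 𝓕1 𝒯 CT (fun F hF => ((m1 F).1 hF).2)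
    have h2 : 𝓕1.card ≤ (V+1)^b * 2 ^ (N - L) := by
      refine h1.trans ?_
      refine (sum_le_card_nsmul _ _ (2 ^ (N - L)) ?_).trans ?_
      · intro T hT
        have := (mem_filter.1 hT).2
        exact Nat.pow_le_pow_right (by norm_num) (by omega)
      · rw [smul_eq_mul]
        apply Nat.mul_le_mul_right
        refine (card_filter_le _ _).trans ?_
        rw [← hK]
        exact count_small K b
    have h3 : (V+1)^b ≤ 2^(n*b) := by
      rw [pow_mul]
      exact Nat.pow_le_pow_left (Nat.choose_lt_two_pow n (p+2) hn0) b
    have hLN : L ≤ N := Nat.div_le_self _ _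
    have h5 : 𝓕1.card * 2^n ≤ 2^N := by
      calc 𝓕1.card * 2^n ≤ (2^(n*b) * 2^(N-L)) * 2^n :=
            Nat.mul_le_mul_right _ (h2.trans (Nat.mul_le_mul_right _ h3))
        _ = 2^(n*b + (N-L) + n) := by rw [pow_add, pow_add]
        _ ≤ 2^N := Nat.pow_le_pow_right (by norm_num) (by omega)
    rw [mul_one_div, le_div_iff₀ (by positivity)]
    exact_mod_cast h5
  have hc2 : ∀ x, ((𝓕2 x).card : ℝ) ≤ 2 ^ N * (3 / 2 ^ n) := by
    intro x
    refine part3 n p s d hn hs hd h4 ?_ x (𝓕2 x) ?_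
    · refine le_trans ?_ hN
      calc 64 * n ≤ 2^13 * n := by omega
        _ = 2^13 * n^1 := by ring
        _ ≤ 2^13 * n^9 := Nat.mul_le_mul_left _ (Nat.pow_le_pow_right hn0 (by norm_num))
    · intro F hF
      have hF := mem_filter.1 hF
      obtain ⟨hk, hinter, hnt⟩ := (mem_filter.1 hF.1).2
      push Not at hnt
      exact ⟨hk, hinter, hnt x, hF.2⟩
  have h1 : (𝓕.card : ℝ) ≤ 𝓕1.card + ∑ x, ((𝓕2 x).card : ℝ) := by
    have := (card_le_card hcover).trans (card_union_le _ _)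
    have h2 := this.trans (Nat.add_le_add_left card_biUnion_le _)
    exact_mod_cast h2
  have h2 : ∑ x, ((𝓕2 x).card : ℝ) ≤ n * (2 ^ N * (3 / 2 ^ n)) := by
    refine (sum_le_sum fun x _ => hc2 x).trans (le_of_eq ?_)
    simp
  have h3 : (2:ℝ) ^ N * ((1 + 3 * n) / 2 ^ n) = 2 ^ N * (1 / 2 ^ n) + n * (2 ^ N * (3 / 2 ^ n)) := by ring
  rw [h3]; linarith

theorem choose_mono_half (m r a : ℕ) (hra : r ≤ a) (ha : 2 * a ≤ m) : m.choose r ≤ m.choose a := by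
  induction a, hra using Nat.le_induction with
  | base => exact le_rfl
  | succ a h ih =>
    exact (ih (by omega)).trans (Nat.choose_le_succ_of_lt_half_left (by omega))

theorem exists_fact : ∃ f : ℕ, 0 < f ∧ ∀ m : ℕ, (m+1-25)^25 ≤ f * m.choose 25 := by
  refine ⟨Nat.factorial 25, Nat.factorial_pos _, fun m => ?_⟩
  have h := Nat.pow_le_choose (α := ℚ) 25 m
  have hf0 : 0 < Nat.factorial 25 := Nat.factorial_pos _
  rw [div_le_iff₀' (by exact_mod_cast hf0)] at h
  exact_mod_cast h

theorem big_choose (f : ℕ) (hf0 : 0 < f) (hf : ∀ m : ℕ, (m+1-25)^25 ≤ f * m.choose 25)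
    (n a b : ℕ) (hn0 : 192 ≤ n) (hn : f * 8^25 * 2^26 ≤ n) (ha : 25 ≤ a) (hb : 25 ≤ b)
    (h : n ≤ 4 * (a + b)) : 2^26 * n^20 ≤ (a+b).choose a := by
  have h1 : (a+b).choose 25 ≤ (a+b).choose a := by
    rcases le_total a b with hab | hab
    · exact choose_mono_half _ _ _ ha (by omega)
    · rw [Nat.choose_symm_add]
      exact choose_mono_half _ _ _ hb (by omega)
  refine le_trans ?_ h1
  set c := (a+b).choose 25 with hc
  have h2' : (a+b+1-25)^25 ≤ f * c := hf (a+b)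
  clear_value c
  have h3 : n ≤ 8 * (a+b+1-25) := by omega
  have h4 : n^25 ≤ 8^25 * (f * c) := by
    calc n^25 ≤ (8 * (a+b+1-25))^25 := Nat.pow_le_pow_left h3 25
      _ = 8^25 * (a+b+1-25)^25 := mul_pow _ _ _
      _ ≤ _ := Nat.mul_le_mul_left _ h2'
  have h5 : (f * 8^25) * (2^26 * n^20) ≤ (f * 8^25) * c := by
    calc (f * 8^25) * (2^26 * n^20) = (f * 8^25 * 2^26) * n^20 := by ring
      _ ≤ n * n^20 := Nat.mul_le_mul_right _ hn
      _ = n^21 := by ring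
      _ ≤ n^25 := Nat.pow_le_pow_right (by omega) (by norm_num)
      _ ≤ 8^25 * (f * c) := h4
      _ = _ := by ring
  exact Nat.le_of_mul_le_mul_left h5 (by positivity)

theorem fin_num (n : ℕ) (hn : 4 ≤ n) (ε : ℝ) (hε : 0 < ε) (h : 4 / ε ≤ n) :
    (1 + 3 * (n:ℝ)) / 2 ^ n ≤ ε := by
  have h1 : n^2 ≤ 2^n := by
    induction n, hn using Nat.le_induction with
    | base => norm_num
    | succ m hm ih =>
      clear h
      have ih : m^2 ≤ 2^m := by
        clear ih
        induction m, hm using Nat.le_induction with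
        | base => norm_num
        | succ l hl ih2 => rw [pow_succ 2]; nlinarith
      rw [pow_succ 2]; nlinarith
  have h1' : (n:ℝ)^2 ≤ 2^n := by exact_mod_cast h1
  have hn' : (4:ℝ) ≤ n := by exact_mod_cast hn
  rw [div_le_iff₀ hε] at h
  rw [div_le_iff₀ (by positivity)]
  calc 1 + 3 * (n:ℝ) ≤ 4 * n := by linarith
    _ ≤ (n * ε) * n := by gcongr
    _ = ε * n^2 := by ring
    _ ≤ _ := by gcongr

theorem main_aux :
    ∀ ε : ℝ, 0 < ε → ∃ K : ℕ, ∀ k : ℕ, K ≤ k → ∀ n : ℕ,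
      (2 * k + 100 * Real.log k : ℝ) ≤ n →
      (Nat.card {F : Finset (Finset (Fin n)) //
          (∀ A ∈ F, A.card = k) ∧
          (∀ A ∈ F, ∀ B ∈ F, (A ∩ B).Nonempty) ∧
          ¬ ∃ x : Fin n, ∀ A ∈ F, x ∈ A} : ℝ) ≤
        ε * 2 ^ ((n - 1).choose (k - 1)) := by
  intro ε hε
  obtain ⟨f, hf0, hf⟩ := exists_fact
  refine ⟨192 + f * 8^25 * 2^26 + ⌈4/ε⌉₊, fun k hk n hn => ?_⟩
  have hbig : ∀ m, k ≤ m → 192 ≤ m ∧ f * 8^25 * 2^26 ≤ m ∧ ⌈4/ε⌉₊ ≤ m := by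
    intro m hm
    generalize f * 8^25 * 2^26 = q at hk ⊢
    omega
  have hk192 : 192 ≤ k := (hbig k le_rfl).1
  have hlog : 1 ≤ Real.log k := by
    rw [Real.le_log_iff_exp_le (by exact_mod_cast (by omega : 0 < k))]
    have h1 := Real.exp_one_lt_d9
    have h2 : (192:ℝ) ≤ k := by exact_mod_cast hk192
    linarith
  have hn2 : 2 * k + 100 ≤ n := by
    have : (2 * k + 100 : ℝ) ≤ n := by linarith
    exact_mod_cast this
  obtain ⟨p, rfl⟩ : ∃ p, k = p + 2 := ⟨k - 2, by omega⟩
  obtain ⟨d, hd⟩ : ∃ d, n = 2 * p + 4 + d := ⟨n - (2*p+4), by omega⟩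
  obtain ⟨b1, b2, b3⟩ := hbig n (by omega)
  have hA := big_choose f hf0 hf n (p+1) (d/3) b1 b2 (by omega) (by omega) (by omega)
  have hB := big_choose f hf0 hf n (p+2) d b1 b2 (by omega) (by omega) (by omega)
  have hC := big_choose f hf0 hf n (p+1) (p+2+d) b1 b2 (by omega) (by omega) (by omega)
  have := assemble n p (d/3) d hd (by omega) (by omega)
    (by
      refine le_trans ?_ hA
      calc 4 * n * (4 * n^2) = 16 * n^3 := by ring
        _ ≤ 2^26 * n^20 := Nat.mul_le_mul (by norm_num) (Nat.pow_le_pow_right (by omega) (by norm_num)))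
    (by
      rw [show n - (p+2) = p+2+d by omega]
      refine le_trans (le_of_eq ?_) hB
      ring)
    (by
      rw [show n - 1 = p+1+(p+2+d) by omega]
      refine le_trans ?_ hC
      exact Nat.mul_le_mul (by norm_num) (Nat.pow_le_pow_right (by omega) (by norm_num)))
  refine this.trans ?_
  rw [show p + 2 - 1 = p + 1 by omega, mul_comm]
  refine mul_le_mul_of_nonneg_right ?_ (by positivity)
  exact fin_num n (by omega) ε hε ((Nat.le_ceil _).trans (by exact_mod_cast b3))
end helpers

/-- For every ε > 0 there exists K such that for all k ≥ K and all
integers n ≥ 2k + 100·ln k, the number of non-trivial intersecting families of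
k-element subsets of [n] is at most ε · 2^(C(n-1,k-1)). -/
theorem almost_all_intersecting_families_trivial :
    ∀ ε : ℝ, 0 < ε → ∃ K : ℕ, ∀ k : ℕ, K ≤ k → ∀ n : ℕ,
      (2 * k + 100 * Real.log k : ℝ) ≤ n →
      (Nat.card {F : Finset (Finset (Fin n)) //
          (∀ A ∈ F, A.card = k) ∧
          (∀ A ∈ F, ∀ B ∈ F, (A ∩ B).Nonempty) ∧
          ¬ ∃ x : Fin n, ∀ A ∈ F, x ∈ A} : ℝ) ≤
        ε * 2 ^ ((n - 1).choose (k - 1)) := by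
  exact main_aux
end

section
/- There exists K such that the following holds for all k ≥ K. Let 1 ≤ r ≤ 2+2√(k·ln k), n = 2k+r, and d = \binom{k+r-1}{k-1}. Let A be a family of (k+r−1)-element subsets of [n−1] and let N(A) be the family of all (k−1)-element subsets of [n−1] contained in some member of A. If |A| ≤ d³, then |N(A)| ≥ d·|A|/(5e)^r. -/
open Finset Finset.Colex in
lemma aux_initSeg_exists {n s : ℕ} (c : ℕ) : ∀ (t : ℕ) (P : Finset (Finset (Fin n))),
    IsInitSeg P s → P.card = c + t → ∃ C ⊆ P, IsInitSeg C s ∧ C.card = c := by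
  intro t
  induction t with
  | zero => intro P hP h; exact ⟨P, Subset.rfl, hP, by simpa using h⟩
  | succ t ih =>
    intro P hP h
    have hne : P.Nonempty := by
      rw [← Finset.card_pos]; omega
    obtain ⟨M, hM, hmax⟩ := Finset.exists_max_image P (fun S => toColex S) hne
    have hI : IsInitSeg (P.erase M) s := by
      refine ⟨fun a ha => hP.1 (Finset.mem_of_mem_erase ha), ?_⟩
      intro a b ha hb
      have ha' := Finset.mem_of_mem_erase ha
      refine Finset.mem_erase.2 ⟨?_, hP.2 ha' hb⟩
      rintro rfl
      exact absurd (hmax a ha') (not_le.2 hb.1)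
    obtain ⟨C, hC, h1, h2⟩ := ih (P.erase M) hI (by rw [Finset.card_erase_of_mem hM]; omega)
    exact ⟨C, hC.trans (Finset.erase_subset _ _), h1, h2⟩

open Finset Finset.Colex in
lemma aux_initSeg_powerset {n m s : ℕ} (hm : m ≤ n) :
    ∃ R : Finset (Fin n), R.card = m ∧ IsInitSeg (Finset.powersetCard s R) s := by
  refine ⟨attachFin (range m) fun x hx => lt_of_lt_of_le (mem_range.1 hx) hm, by simp,
    Set.sized_powersetCard _ _, ?_⟩
  simp_rw [mem_powersetCard]
  rintro A B hA ⟨HB₁, HB₂⟩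
  refine ⟨fun t ht ↦ ?_, ‹_›⟩
  rw [mem_attachFin, mem_range]
  have : toColex (image Fin.val B) < toColex (image Fin.val A) := by
    rwa [toColex_image_lt_toColex_image Fin.val_strictMono]
  apply Colex.forall_lt_mono this.le _ t (mem_image.2 ⟨t, ht, rfl⟩)
  simp_rw [mem_image]
  rintro _ ⟨a, ha, hab⟩
  simpa [hab] using hA.1 ha

open Finset in
lemma aux_biUnion {n q r : ℕ} (A : Finset (Finset (Fin n))) (hA : ∀ S ∈ A, S.card = q + r) :
    (A.biUnion fun S => Finset.powersetCard q S) = Finset.shadow^[r] A := by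
  ext B
  rw [mem_shadow_iterate_iff_exists_sdiff]
  simp only [mem_biUnion, mem_powersetCard]
  refine exists_congr fun S => and_congr_right fun hS => and_congr_right fun hB => ?_
  have h1 := card_sdiff_of_subset hB
  have h2 := card_le_card hB
  have h3 := hA S hS
  omega

open Finset in
lemma aux_count {n q r : ℕ} (R : Finset (Fin n)) (C : Finset (Finset (Fin n)))
    (hC : C ⊆ powersetCard (q + r) R) :
    C.card * (q + r).choose q ≤
      (C.biUnion fun S => powersetCard q S).card * (R.card - q).choose r := by
  classical
  refine card_mul_le_card_mul (fun S T => T ⊆ S) ?_ ?_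
  · intro S hS
    have h := (mem_powersetCard.1 (hC hS)).2
    rw [← h, ← card_powersetCard]
    refine card_le_card fun T hT => ?_
    rw [mem_bipartiteAbove, mem_biUnion]
    exact ⟨⟨S, hS, hT⟩, (mem_powersetCard.1 hT).1⟩
  · intro T hT
    obtain ⟨S, hS, hTS⟩ := mem_biUnion.1 hT
    obtain ⟨hTS, hTc⟩ := mem_powersetCard.1 hTS
    have hTR : T ⊆ R := hTS.trans (mem_powersetCard.1 (hC hS)).1
    rw [← hTc, ← card_sdiff_of_subset hTR, ← card_powersetCard]
    refine card_le_card_of_injOn (fun S => S \ T) ?_ ?_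
    · intro S hS
      obtain ⟨hSC, hST⟩ := (mem_bipartiteBelow _).1 (mem_coe.1 hS)
      obtain ⟨h1, h2⟩ := mem_powersetCard.1 (hC hSC)
      refine mem_coe.2 (mem_powersetCard.2 ⟨sdiff_subset_sdiff h1 Subset.rfl, ?_⟩)
      rw [card_sdiff_of_subset hST]; omega
    · intro S hS S' hS' h
      have hS1 := ((mem_bipartiteBelow _).1 (mem_coe.1 hS)).2
      have hS2 := ((mem_bipartiteBelow _).1 (mem_coe.1 hS')).2
      have h : S \ T = S' \ T := h
      rw [← sdiff_union_of_subset hS1, h, sdiff_union_of_subset hS2]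

lemma aux_shadow {n m q r : ℕ} (hm : m ≤ n) (A : Finset (Finset (Fin n)))
    (hA : ∀ S ∈ A, S.card = q + r) (hc : A.card ≤ m.choose (q + r)) :
    A.card * (q + r).choose q ≤
      (A.biUnion fun S => Finset.powersetCard q S).card * (m - q).choose r := by
  obtain ⟨R, hR, hI⟩ := aux_initSeg_powerset (s := q + r) hm
  obtain ⟨t, ht⟩ := Nat.exists_eq_add_of_le hc
  obtain ⟨C, hCP, hCI, hCc⟩ := aux_initSeg_exists A.card t _ hI
    (by rw [Finset.card_powersetCard, hR, ht])
  have h1 := aux_count R C hCP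
  rw [hCc, hR] at h1
  refine h1.trans (Nat.mul_le_mul_right _ ?_)
  rw [aux_biUnion A hA, aux_biUnion C (fun S hS => (Finset.mem_powersetCard.1 (hCP hS)).2)]
  exact Finset.iterated_kk (r := q + r) (fun S hS => hA S hS) hCc.le hCI

lemma aux_choose5 (r : ℕ) : ((5 * r).choose r : ℝ) ≤ (5 * Real.exp 1) ^ r := by
  have h1 : ((5 * r).choose r : ℝ) ≤ ((5 * r : ℕ) : ℝ) ^ r / (r.factorial : ℝ) :=
    Nat.choose_le_pow_div r (5 * r)
  have h2 : (r : ℝ) ^ r / (r.factorial : ℝ) ≤ Real.exp r :=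
    Real.pow_div_factorial_le_exp _ (Nat.cast_nonneg r) r
  refine h1.trans ?_
  push_cast
  rw [mul_pow, mul_pow, ← Real.exp_nat_mul, mul_one, mul_div_assoc]
  gcongr

lemma aux_two (r : ℕ) : (2 * r).factorial ≤ 4 ^ r * r.factorial ^ 2 := by
  have h := Nat.add_choose_mul_factorial_mul_factorial r r
  have h2 : (r + r).choose r ≤ 4 ^ r := by
    rw [← two_mul, show 4 = 2 ^ 2 by rfl, ← pow_mul]
    exact Nat.choose_le_two_pow _ _
  rw [two_mul, ← h, mul_assoc, ← sq]
  exact Nat.mul_le_mul_right _ h2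

lemma aux_four (r : ℕ) : (4 * r).factorial ≤ 256 ^ r * r.factorial ^ 4 := by
  have h1 := aux_two (2 * r)
  have h2 := aux_two r
  calc (4 * r).factorial = (2 * (2 * r)).factorial := by congr 1; ring
    _ ≤ 4 ^ (2 * r) * (2 * r).factorial ^ 2 := h1
    _ ≤ 4 ^ (2 * r) * (4 ^ r * r.factorial ^ 2) ^ 2 := by gcongr
    _ = (4 ^ 4) ^ r * r.factorial ^ 4 := by rw [← pow_mul]; ring
    _ = _ := by norm_num

lemma aux_choose3 (N r : ℕ) (h : 256 * r ≤ N) :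
    (N.choose r) ^ 3 ≤ (N + 4 * r).choose (4 * r) := by
  have hf : 0 < (4 * r).factorial * r.factorial ^ 3 := by positivity
  refine Nat.le_of_mul_le_mul_right ?_ hf
  have h1 : N.choose r * r.factorial ≤ N ^ r := by
    rw [mul_comm, ← Nat.descFactorial_eq_factorial_mul_choose]
    exact Nat.descFactorial_le_pow _ _
  have h2 : N ^ (4 * r) ≤ (N + 4 * r).choose (4 * r) * (4 * r).factorial := by
    rw [mul_comm (Nat.choose _ _), ← Nat.ascFactorial_eq_factorial_mul_choose]
    exact (Nat.pow_le_pow_left (Nat.le_succ N) _).trans (Nat.pow_succ_le_ascFactorial _ _)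
  have h3 : (4 * r).factorial ≤ N ^ r * r.factorial ^ 3 := by
    calc (4 * r).factorial ≤ 256 ^ r * r.factorial ^ 4 := aux_four r
      _ = 256 ^ r * r.factorial * r.factorial ^ 3 := by ring
      _ ≤ 256 ^ r * r ^ r * r.factorial ^ 3 := by
        gcongr; exact Nat.factorial_le_pow r
      _ = (256 * r) ^ r * r.factorial ^ 3 := by rw [mul_pow]
      _ ≤ _ := by gcongr
  calc N.choose r ^ 3 * ((4 * r).factorial * r.factorial ^ 3)
      = (N.choose r * r.factorial) ^ 3 * (4 * r).factorial := by ring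
    _ ≤ (N ^ r) ^ 3 * (N ^ r * r.factorial ^ 3) := by gcongr
    _ = N ^ (4 * r) * r.factorial ^ 3 := by ring
    _ ≤ (N + 4 * r).choose (4 * r) * (4 * r).factorial * r.factorial ^ 3 := by gcongr
    _ = _ := by ring

lemma aux_large : ∃ K : ℕ, ∀ k : ℕ, K ≤ k → 1 ≤ k ∧
    256 * (2 + 2 * Real.sqrt (k * Real.log k)) ≤ (k : ℝ) := by
  have h := (Real.isLittleO_log_id_atTop.bound (show (0 : ℝ) < 1 / 2 ^ 22 by positivity))
  have h' := tendsto_natCast_atTop_atTop (R := ℝ) |>.eventually h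
  obtain ⟨K, hK⟩ := Filter.eventually_atTop.1 h'
  refine ⟨max K 4096, fun k hk => ?_⟩
  have hk1 : K ≤ k := le_trans (le_max_left _ _) hk
  have hk2 : 4096 ≤ k := le_trans (le_max_right _ _) hk
  have hk3 : (4096 : ℝ) ≤ k := by exact_mod_cast hk2
  refine ⟨by omega, ?_⟩
  have h1 := hK k hk1
  simp only [id, Real.norm_eq_abs] at h1
  rw [abs_of_nonneg (by linarith : (0 : ℝ) ≤ k)] at h1
  have h2 := (le_abs_self _).trans h1
  have h3 : Real.sqrt (k * Real.log k) ≤ k / 2 ^ 11 := by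
    rw [Real.sqrt_le_left (by positivity)]
    nlinarith
  linarith

/-- Isoperimetry (ii). There is K such that for all k ≥ K,
1 ≤ r ≤ 2+2√(k ln k), n = 2k+r and d = C(k+r-1,k-1): any family A of
(k+r-1)-subsets of [n-1] with |A| ≤ d³ satisfies |N(A)| ≥ d·|A|/(5e)^r,
where N(A) is the (k-1)-shadow of A. -/
theorem isoperimetry_shadow_ii : ∃ K : ℕ, ∀ k : ℕ, K ≤ k → ∀ r n : ℕ,
    1 ≤ r → ((r : ℝ) ≤ 2 + 2 * Real.sqrt (k * Real.log k)) → n = 2 * k + r →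
    ∀ A : Finset (Finset (Fin (n - 1))), (∀ S ∈ A, S.card = k + r - 1) →
    A.card ≤ ((k + r - 1).choose (k - 1)) ^ 3 →
    ((k + r - 1).choose (k - 1) : ℝ) * A.card / (5 * Real.exp 1) ^ r ≤
      ((A.biUnion fun S => Finset.powersetCard (k - 1) S).card : ℝ) := by
  obtain ⟨K, hK⟩ := aux_large
  refine ⟨K, fun k hk r n hr hrk hn A hA hc => ?_⟩
  obtain ⟨hk1, hk2⟩ := hK k hk
  have hrk' : 256 * r ≤ k := by
    have : (256 : ℝ) * r ≤ k := by linarith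
    exact_mod_cast this
  have e : k + r - 1 = k - 1 + r := by omega
  rw [e] at hA hc ⊢
  have hb := aux_choose3 (k - 1 + r) r (by omega)
  have hs : (k - 1 + r).choose (k - 1) = (k - 1 + r).choose r := Nat.choose_symm_add
  have hc' : A.card ≤ (k - 1 + r + 4 * r).choose (k - 1 + r) := by
    rw [Nat.choose_symm_add]
    rw [hs] at hc
    exact hc.trans hb
  have key := aux_shadow (m := k - 1 + r + 4 * r) (by omega) A hA hc'
  rw [show k - 1 + r + 4 * r - (k - 1) = 5 * r by omega] at key
  have key' : (A.card : ℝ) * ((k - 1 + r).choose (k - 1) : ℝ) ≤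
      ((A.biUnion fun S => Finset.powersetCard (k - 1) S).card : ℝ) * ((5 * r).choose r : ℝ) := by
    exact_mod_cast key
  rw [div_le_iff₀ (by positivity), mul_comm]
  exact key'.trans (mul_le_mul_of_nonneg_left (aux_choose5 r) (Nat.cast_nonneg _))
end

section
/- There exists K such that the following holds for all k ≥ K. Let 100·ln k ≤ r ≤ 2+2√(k·ln k) and n = 2k+r. Then the number of intersecting families F ⊆ \binom{[n]}{k} satisfying |[φ(F) ∩ L_{k+r−1}]| > \binom{2k+⌊3r/4⌋}{k+r-1} is at most 2^{\binom{n-1}{k-1} − (1/2)·n·\binom{2k}{k}}. -/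
open Finset

/-- The frequency of the element `x` in the family `F`. -/
def freq (F : Finset (Finset ℕ)) (x : ℕ) : ℕ := (F.filter fun S => x ∈ S).card

/-- The most frequent element of `[n] = Icc 1 n` among the sets of `F`,
ties broken by taking the largest label. -/
noncomputable def mostFreq (n : ℕ) (F : Finset (Finset ℕ)) : ℕ := by
  classical
  exact
    let S := (Finset.Icc 1 n).filter fun x => ∀ y ∈ Finset.Icc 1 n, freq F y ≤ freq F x
    if h : S.Nonempty then S.max' h else 0

/-- The neighborhood in `H` of a family `A` of (k+r-1)-sets:
its (k-1)-shadow, the family of all (k-1)-subsets of members of `A`. -/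
def nbhdH (k : ℕ) (A : Finset (Finset ℕ)) : Finset (Finset ℕ) :=
  A.biUnion fun S => Finset.powersetCard (k - 1) S

/-- The closure `[A]` of a family `A ⊆ L_{k+r-1}` over the ground set `g`:
all (k+r-1)-subsets `v` of the ground set with `N(v) ⊆ N(A)`. -/
def closureH (g : Finset ℕ) (k r : ℕ) (A : Finset (Finset ℕ)) : Finset (Finset ℕ) :=
  (Finset.powersetCard (k + r - 1) g).filter fun v =>
    Finset.powersetCard (k - 1) v ⊆ nbhdH k A


/-- Binomial polynomial. -/
noncomputable def PB (k : ℕ) (x : ℝ) : ℝ := ∏ i ∈ Finset.range k, ((x - i) / (i + 1))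

lemma PB_zero (x : ℝ) : PB 0 x = 1 := by simp [PB]

lemma PB_succ (k : ℕ) (x : ℝ) : PB (k + 1) x = PB k x * ((x - k) / (k + 1)) := by
  unfold PB
  rw [Finset.prod_range_succ]

lemma PB_nat (k N : ℕ) : PB k (N : ℝ) = (N.choose k : ℝ) := by
  induction k with
  | zero => simp [PB_zero]
  | succ k ih =>
    rw [PB_succ, ih]
    have h := Nat.choose_succ_right_eq N k
    have h' : ((N.choose (k + 1) : ℝ)) * (k + 1) = (N.choose k : ℝ) * ((N : ℝ) - k) := by
      rcases le_or_gt k N with hk | hk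
      · rw [← Nat.cast_sub hk]; exact_mod_cast h
      · rw [Nat.choose_eq_zero_of_lt hk, Nat.choose_eq_zero_of_lt (by omega)]; simp
    have : (0 : ℝ) < k + 1 := by positivity
    field_simp
    linarith

lemma PB_pascal (k : ℕ) (x : ℝ) : PB (k + 1) (x + 1) = PB (k + 1) x + PB k x := by
  induction k with
  | zero => simp [PB_zero, PB_succ]
  | succ k ih =>
    rw [PB_succ (k + 1) (x + 1), ih, PB_succ (k + 1) x, PB_succ k x]
    have : (0 : ℝ) < k + 1 := by positivity
    have : (0 : ℝ) < k + 1 + 1 := by positivity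
    push_cast
    field_simp
    ring

lemma PB_mono (k : ℕ) {x y : ℝ} (hx : (k : ℝ) - 1 ≤ x) (hxy : x ≤ y) : PB k x ≤ PB k y := by
  unfold PB
  apply Finset.prod_le_prod
  · intro i hi
    have : ((i + 1 : ℕ) : ℝ) ≤ k := by exact_mod_cast Finset.mem_range.1 hi
    push_cast at this
    exact div_nonneg (by linarith) (by positivity)
  · intro i hi
    gcongr

lemma PB_pos (k : ℕ) {x : ℝ} (hx : (k : ℝ) - 1 < x) : 0 < PB k x := by
  unfold PB
  apply Finset.prod_pos
  intro i hi
  have : ((i + 1 : ℕ) : ℝ) ≤ k := by exact_mod_cast Finset.mem_range.1 hi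
  push_cast at this
  exact div_pos (by linarith) (by positivity)

lemma PB_nonneg (k : ℕ) {x : ℝ} (hx : (k : ℝ) - 1 ≤ x) : 0 ≤ PB k x := by
  unfold PB
  apply Finset.prod_nonneg
  intro i hi
  have : ((i + 1 : ℕ) : ℝ) ≤ k := by exact_mod_cast Finset.mem_range.1 hi
  push_cast at this
  exact div_nonneg (by linarith) (by positivity)

lemma PB_continuous (k : ℕ) : Continuous (PB k) := by
  unfold PB
  fun_prop

section lovasz
open Finset Finset.Colex
open scoped FinsetFamily

lemma exists_initSeg_card {n : ℕ} (r c : ℕ) (hc : c ≤ #(powersetCard r (univ : Finset (Fin n)))) :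
    ∃ C : Finset (Finset (Fin n)), IsInitSeg C r ∧ #C = c := by
  induction c with
  | zero => exact ⟨∅, isInitSeg_empty, rfl⟩
  | succ c ih =>
    obtain ⟨C, hC, hcard⟩ := ih (by omega)
    have hsub : C ⊆ powersetCard r univ := fun s hs => by
      simp [mem_powersetCard, hC.1 hs]
    have hne : (powersetCard r (univ : Finset (Fin n)) \ C).Nonempty := by
      rw [← card_pos, card_sdiff_of_subset hsub]; omega
    obtain ⟨s, hs, hmin⟩ := exists_min_image _ (fun s => toColex s) hne
    rw [mem_sdiff, mem_powersetCard] at hs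
    refine ⟨insert s C, ⟨?_, ?_⟩, by rw [card_insert_of_notMem hs.2, hcard]⟩
    · intro t ht
      simp only [coe_insert, Set.mem_insert_iff, mem_coe] at ht
      rcases ht with rfl | ht
      · exact hs.1.2
      · exact hC.1 ht
    · intro u t hu ht
      rw [mem_insert] at hu ⊢
      rcases hu with rfl | hu
      · right
        by_contra hcon
        have := hmin t (by simp [mem_powersetCard, ht.2, hcon])
        exact absurd ht.1 (not_lt.2 this)
      · right; exact hC.2 hu ht

lemma lovasz_aux {n : ℕ} (N : ℕ) : ∀ (k : ℕ) (A : Finset (Finset (Fin (n + 1)))) (x : ℝ),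
    k + #A ≤ N → (A : Set (Finset (Fin (n + 1)))).Sized (k + 1) → ((k : ℝ) + 1 ≤ x) →
    PB (k + 1) x ≤ #A → PB k x ≤ #(∂ A) := by
  induction N with
  | zero =>
    intro k A x hN hA hx hP
    have h1 : #A = 0 := by omega
    have := PB_pos (k + 1) (x := x) (by push_cast; linarith)
    rw [h1] at hP; push_cast at hP; linarith
  | succ N ih =>
    intro k A x hN hA hx hP
    have hsub : A ⊆ powersetCard (k + 1) univ := fun s hs => by
      simp [mem_powersetCard, hA hs]
    obtain ⟨C, hC, hcard⟩ := exists_initSeg_card (n := n + 1) (k + 1) (#A) (card_le_card hsub)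
    have hCA : #(∂ C) ≤ #(∂ A) := kruskal_katona hA hcard.le hC
    refine le_trans ?_ (Nat.cast_le.2 hCA)
    rw [← hcard] at hP hN
    clear hCA hcard hsub hA
    have hCpos : 0 < #C := by
      have := PB_pos (k + 1) (x := x) (by push_cast; linarith)
      exact_mod_cast this.trans_le hP
    -- structure
    set C1 := C.memberSubfamily 0 with hC1
    set C0 := C.nonMemberSubfamily 0 with hC0
    have hsum : #C1 + #C0 = #C := card_memberSubfamily_add_card_nonMemberSubfamily 0 C
    have hshift : ∀ s ∈ C, (0 : Fin (n + 1)) ∉ s → ∀ i ∈ s, insert 0 (s.erase i) ∈ C := by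
      intro s hs h0 i hi
      apply hC.2 hs
      have hc : #(insert 0 (s.erase i)) = k + 1 := by
        rw [card_insert_of_notMem (by simp [h0]), card_erase_of_mem hi, hC.1 hs]; omega
      refine ⟨?_, hc⟩
      rw [toColex_lt_toColex]
      refine ⟨fun h => h0 (h ▸ mem_insert_self _ _), ?_⟩
      intro a ha has
      refine ⟨i, hi, ?_, ?_⟩
      · simp only [mem_insert, mem_erase, ne_eq, not_true_eq_false, false_and, or_false]
        rintro rfl; exact h0 hi
      · rcases mem_insert.1 ha with rfl | ha
        · exact Fin.zero_le _
        · exact absurd (mem_of_mem_erase ha) has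
    have h0sub : ∂ C0 ⊆ C1 := by
      intro t ht
      obtain ⟨s, hs, i, hi, rfl⟩ := mem_shadow_iff.1 ht
      rw [hC0, mem_nonMemberSubfamily] at hs
      rw [hC1, mem_memberSubfamily]
      exact ⟨hshift s hs.1 hs.2 i hi, fun h => hs.2 (mem_of_mem_erase h)⟩
    have hC1s : (C1 : Set (Finset (Fin (n + 1)))).Sized k := by
      intro s hs
      rw [mem_coe, hC1, mem_memberSubfamily] at hs
      have := hC.1 hs.1
      rw [card_insert_of_notMem hs.2] at this; omega
    have hC0s : (C0 : Set (Finset (Fin (n + 1)))).Sized (k + 1) := by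
      intro s hs
      rw [mem_coe, hC0, mem_nonMemberSubfamily] at hs
      exact hC.1 hs.1
    have hC1ne : C1.Nonempty := by
      obtain ⟨s, hs⟩ := card_pos.1 hCpos
      by_cases h0 : (0 : Fin (n + 1)) ∈ s
      · exact ⟨s.erase 0, by rw [hC1, mem_memberSubfamily]; simp [insert_erase h0, hs]⟩
      · have hsne : s.Nonempty := by rw [← card_pos, hC.1 hs]; omega
        obtain ⟨i, hi⟩ := hsne
        exact ⟨s.erase i, by
          rw [hC1, mem_memberSubfamily]; exact ⟨hshift s hs h0 i hi, fun h => h0 (mem_of_mem_erase h)⟩⟩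
    have hshadow : #C1 + #(∂ C1) ≤ #(∂ C) := by
      have himg : #((∂ C1).image (insert 0)) = #(∂ C1) := by
        apply card_image_of_injOn
        intro s hs t ht hst
        have h1 : ∀ s ∈ ∂ C1, (0 : Fin (n + 1)) ∉ s := by
          intro s hs h
          obtain ⟨u, hu, i, hi, rfl⟩ := mem_shadow_iff.1 hs
          rw [hC1, mem_memberSubfamily] at hu
          exact hu.2 (mem_of_mem_erase h)
        rw [← erase_insert (h1 s hs), ← erase_insert (h1 t ht)]
        rw [hst]
      rw [← himg, ← card_union_of_disjoint]
      · apply card_le_card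
        apply union_subset
        · intro s hs
          rw [hC1, mem_memberSubfamily] at hs
          exact mem_shadow_iff_insert_mem.2 ⟨0, hs.2, hs.1⟩
        · intro s hs
          obtain ⟨t, ht, rfl⟩ := mem_image.1 hs
          obtain ⟨u, hu, i, hi, rfl⟩ := mem_shadow_iff.1 ht
          rw [hC1, mem_memberSubfamily] at hu
          refine mem_shadow_iff.2 ⟨_, hu.1, i, mem_insert_of_mem hi, ?_⟩
          rw [erase_insert_of_ne]
          rintro rfl; exact hu.2 hi
      · rw [disjoint_left]
        intro s hs hs'
        rw [hC1, mem_memberSubfamily] at hs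
        obtain ⟨t, ht, rfl⟩ := mem_image.1 hs'
        exact hs.2 (mem_insert_self _ _)
    have hC1pos := card_pos.2 hC1ne
    rcases k with _ | k
    · rw [PB_zero]
      have : 1 ≤ #(∂ C) := by omega
      exact_mod_cast this
    have hpas1 := PB_pascal (k + 1) (x - 1)
    have hpas0 := PB_pascal k (x - 1)
    rw [sub_add_cancel] at hpas1 hpas0
    push_cast at hx
    have hkey : PB (k + 1) (x - 1) ≤ #C1 := by
      by_contra hcon
      push Not at hcon
      have hC0c : PB (k + 1 + 1) (x - 1) < #C0 := by
        have : ((#C1 : ℝ) + #C0) = #C := by exact_mod_cast hsum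
        linarith
      have hnn : 0 ≤ PB (k + 1 + 1) (x - 1) := PB_nonneg _ (by push_cast; linarith)
      have hC0pos : 1 ≤ #C0 := by
        have : (0 : ℝ) < #C0 := by linarith
        exact_mod_cast this
      have h2 : PB (k + 1) (max (x - 1) (k + 2)) ≤ #(∂ C0) := by
        apply ih (k + 1) C0 _ (by omega) hC0s
        · push_cast
          exact le_trans (by linarith) (le_max_right _ _)
        · rcases le_total (x - 1) (k + 2) with h | h
          · rw [max_eq_right h]
            have h3 := PB_nat (k + 1 + 1) (k + 2)
            rw [Nat.choose_self] at h3
            push_cast at h3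
            rw [h3]; exact_mod_cast hC0pos
          · rw [max_eq_left h]; exact hC0c.le
      have h3 : PB (k + 1) (x - 1) ≤ PB (k + 1) (max (x - 1) (k + 2)) :=
        PB_mono _ (by push_cast; linarith) (le_max_left _ _)
      have h4 : (#(∂ C0) : ℝ) ≤ #C1 := by exact_mod_cast card_le_card h0sub
      linarith
    have h5 : PB k (x - 1) ≤ #(∂ C1) := by
      apply ih k C1 (x - 1) (by omega) hC1s (by linarith) hkey
    have h6 : ((#C1 : ℝ) + #(∂ C1)) ≤ #(∂ C) := by exact_mod_cast hshadow
    linarith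

lemma lovasz_iter {n : ℕ} (r : ℕ) : ∀ (k : ℕ) (A : Finset (Finset (Fin (n + 1)))) (x : ℝ),
    (A : Set (Finset (Fin (n + 1)))).Sized (k + r) → ((k : ℝ) + r ≤ x) →
    PB (k + r) x ≤ #A → PB k x ≤ #(∂^[r] A) := by
  induction r with
  | zero => intro k A x _ _ h; simpa using h
  | succ r ih =>
    intro k A x hA hx h
    rw [Function.iterate_succ_apply]
    push_cast at hx
    apply ih k (∂ A) x
    · have := hA.shadow; simpa [← add_assoc] using this
    · linarith
    · exact lovasz_aux _ (k + r) A x le_rfl hA (by push_cast; linarith) h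

end lovasz

lemma PB_core1 (b r : ℕ) (ε : ℝ) (h0 : 0 ≤ ε) (h1 : ε ≤ 1) :
    (1 - ε) * PB b (2 * b + r) ≤ PB b (2 * b + r - ε) := by
  have hb : (0 : ℝ) < b + 1 := by positivity
  have hle : ε / (b + 1) ≤ 1 := by
    rw [div_le_one hb]; linarith [(Nat.cast_nonneg b : (0 : ℝ) ≤ b)]
  have hq : 0 ≤ ε / ((b : ℝ) + 1) := by positivity
  have hP : 0 ≤ PB b (2 * b + r : ℝ) := by
    apply PB_nonneg
    have : (0 : ℝ) ≤ b := by positivity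
    have : (0 : ℝ) ≤ r := by positivity
    linarith
  have hbern : 1 - ε ≤ (1 - ε / (b + 1)) ^ b := by
    have h := one_add_mul_le_pow (a := -(ε / ((b : ℝ) + 1))) (by linarith) b
    rw [← sub_eq_add_neg] at h
    refine le_trans ?_ h
    have : (b : ℝ) * (ε / (b + 1)) ≤ ε := by
      rw [mul_div_assoc', div_le_iff₀ hb]; nlinarith
    linarith
  refine le_trans (mul_le_mul_of_nonneg_right hbern hP) ?_
  unfold PB
  rw [← Finset.card_range b, ← Finset.prod_const, Finset.card_range, ← Finset.prod_mul_distrib]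
  apply Finset.prod_le_prod
  · intro i hi
    have : ((i + 1 : ℕ) : ℝ) ≤ b := by exact_mod_cast Finset.mem_range.1 hi
    push_cast at this
    have : (0 : ℝ) ≤ r := by positivity
    have : (0 : ℝ) ≤ i := by positivity
    exact mul_nonneg (by linarith) (div_nonneg (by linarith) (by positivity))
  · intro i hi
    have : ((i + 1 : ℕ) : ℝ) ≤ b := by exact_mod_cast Finset.mem_range.1 hi
    push_cast at this
    have : (0 : ℝ) ≤ r := by positivity
    rw [mul_div_assoc']
    gcongr
    have h3 : ε = ε / (b + 1) * (b + 1) := by field_simp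
    have h4 : ε / (b + 1) * (b + 1) ≤ ε / (b + 1) * (2 * b + r - i) :=
      mul_le_mul_of_nonneg_left (by linarith) hq
    linarith

lemma PB_core2 (b r : ℕ) (x ε : ℝ) (h0 : 0 ≤ ε) (hx : (b : ℝ) + r ≤ x)
    (hx' : x ≤ 2 * b + (r + 1) - ε) :
    PB (b + (r + 1)) x ≤ (1 - ε / (b + (r + 1))) * PB b x := by
  have hP : 0 ≤ PB b x := by
    apply PB_nonneg
    have : (0 : ℝ) ≤ r := by positivity
    linarith
  have hsplit : PB (b + (r + 1)) x =
      PB b x * ∏ i ∈ Finset.range (r + 1), ((x - (b + i)) / ((b : ℝ) + (r + 1) - i)) := by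
    unfold PB
    rw [Finset.prod_range_add]
    congr 1
    rw [Finset.prod_div_distrib, Finset.prod_div_distrib]
    congr 1
    · simp
    · rw [← Finset.prod_range_reflect]
      apply Finset.prod_congr rfl
      intro i hi
      have h := Finset.mem_range.1 hi
      have : ((r + 1 - 1 - i : ℕ) : ℝ) = r - i := by
        rw [Nat.add_sub_cancel, Nat.cast_sub (by omega)]
      rw [Nat.cast_add, this]
      ring
  rw [hsplit, mul_comm]
  refine mul_le_mul_of_nonneg_right ?_ hP
  rw [Finset.prod_range_succ']
  have hden : (0 : ℝ) < (b : ℝ) + (r + 1) := by positivity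
  have hfirst : (x - (b + ((0 : ℕ) : ℝ))) / ((b : ℝ) + (r + 1) - ((0 : ℕ) : ℝ)) ≤ 1 - ε / (b + (r + 1)) := by
    rw [Nat.cast_zero, sub_zero, add_zero, div_le_iff₀ hden, sub_mul, div_mul_cancel₀ _ hden.ne']
    linarith
  have hrest : ∏ i ∈ Finset.range r, ((x - (b + ((i + 1 : ℕ) : ℝ))) / ((b : ℝ) + (r + 1) - ((i + 1 : ℕ) : ℝ))) ≤ 1 := by
    apply Finset.prod_le_one
    · intro i hi
      have : ((i + 1 : ℕ) : ℝ) ≤ r := by exact_mod_cast Finset.mem_range.1 hi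
      have : (0 : ℝ) ≤ b := by positivity
      exact div_nonneg (by linarith) (by linarith)
    · intro i hi
      have : ((i + 1 : ℕ) : ℝ) ≤ r := by exact_mod_cast Finset.mem_range.1 hi
      have : (0 : ℝ) ≤ b := by positivity
      rw [div_le_one (by linarith)]
      linarith
  have hfn : 0 ≤ (x - (b + ((0 : ℕ) : ℝ))) / ((b : ℝ) + (r + 1) - ((0 : ℕ) : ℝ)) := by
    have : (0 : ℝ) ≤ r := by positivity
    rw [Nat.cast_zero, sub_zero, add_zero]
    exact div_nonneg (by linarith) hden.le
  calc _ ≤ 1 * ((x - (b + ((0 : ℕ) : ℝ))) / ((b : ℝ) + (r + 1) - ((0 : ℕ) : ℝ))) :=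
        mul_le_mul_of_nonneg_right hrest hfn
    _ ≤ _ := by rw [one_mul]; exact hfirst

/-- Analytic core of the stability argument. -/
lemma PB_gap (b r m n : ℕ) (Q x : ℝ) (hn : n = 2 * (b + 1) + (r + 1)) (hm : r ≤ b + 2 + m)
    (hmr : m + 2 ≤ r + 1)
    (hQ : 1 ≤ Q)
    (hx0 : (2 * (b + 1) + m : ℝ) ≤ x)
    (hbig : 8 * (n : ℝ) ^ 3 * Q ≤ PB b (2 * (b + 1) + m))
    (hup : PB b x ≤ PB b (2 * b + (r + 1)) * ((n - 1) / n) + 2 * n * Q) :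
    2 * n * Q ≤ PB b x - PB (b + (r + 1)) x := by
  have hb0 : (0 : ℝ) ≤ b := by positivity
  have hr0 : (0 : ℝ) ≤ r := by positivity
  have hm0 : (0 : ℝ) ≤ m := by positivity
  have hn' : (n : ℝ) = 2 * (b + 1) + (r + 1) := by rw [hn]; push_cast; ring
  have hn3 : (3 : ℝ) ≤ n := by linarith
  have hmr' : (m : ℝ) + 2 ≤ r + 1 := by exact_mod_cast hmr
  have hm' : (r : ℝ) ≤ b + 2 + m := by exact_mod_cast hm
  set Y := PB b (2 * b + (r + 1)) with hY
  have hYbig : 8 * (n : ℝ) ^ 3 * Q ≤ Y := by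
    refine hbig.trans (PB_mono b (by linarith) (by linarith))
  have hYpos : 0 < Y := lt_of_lt_of_le (by positivity) hYbig
  have hxe : x ≤ 2 * b + (r + 1) - 1 / (4 * n) := by
    by_contra hcon
    push Not at hcon
    have h14 : 1 / (4 * (n : ℝ)) ≤ 1 := by
      rw [div_le_one (by linarith)]; linarith
    have h1 := PB_core1 b (r + 1) (1 / (4 * n)) (by positivity) h14
    push_cast at h1
    rw [← hY] at h1
    have h2 : PB b (2 * b + (r + 1) - 1 / (4 * n)) ≤ PB b x :=
      PB_mono b (by linarith) hcon.le
    have h3 : (1 - 1 / (4 * (n : ℝ))) * Y ≤ Y * ((n - 1) / n) + 2 * n * Q := by linarith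
    have h4 : (3 / (4 * (n : ℝ))) * Y ≤ 2 * n * Q := by
      have : (3 / (4 * (n : ℝ))) * Y = (1 - 1 / (4 * (n : ℝ))) * Y - Y * ((n - 1) / n) := by
        field_simp; ring
      linarith
    rw [div_mul_eq_mul_div, div_le_iff₀ (by linarith)] at h4
    have h5 : (n : ℝ) ^ 3 ≥ n ^ 2 := by nlinarith [sq_nonneg (n : ℝ)]
    have h6 : (n : ℝ) ^ 3 * Q ≥ n ^ 2 * Q := mul_le_mul_of_nonneg_right h5 (by linarith)
    have h7 : 0 < (n : ℝ) ^ 2 * Q := by positivity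
    nlinarith
  have h1 := PB_core2 b r x (1 / (4 * n)) (by positivity) (by linarith) hxe
  have h2 : PB b (2 * (b + 1) + m) ≤ PB b x := PB_mono b (by linarith) hx0
  have h3 : 1 / (4 * (n : ℝ) ^ 2) ≤ 1 / (4 * n) / (b + (r + 1)) := by
    rw [div_div]
    apply one_div_le_one_div_of_le (by positivity)
    nlinarith
  have h4 : 8 * (n : ℝ) ^ 3 * Q ≤ PB b x := hbig.trans h2
  have hxnn : 0 ≤ PB b x := le_trans (by positivity) h4
  have h5 : 1 / (4 * (n : ℝ) ^ 2) * PB b x ≤ PB b x - PB (b + (r + 1)) x := by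
    have := mul_le_mul_of_nonneg_right h3 hxnn
    linarith
  refine le_trans ?_ h5
  have h6 := mul_le_mul_of_nonneg_left h4 (show 0 ≤ 1 / (4 * (n : ℝ) ^ 2) by positivity)
  refine le_trans (le_of_eq ?_) h6
  field_simp
  ring

section transport
open Finset
open scoped FinsetFamily

lemma lovasz_nat (N b r : ℕ) (A : Finset (Finset ℕ))
    (hA : ∀ S ∈ A, S ⊆ range (N + 1) ∧ #S = b + r) (x : ℝ) (hx : (b : ℝ) + r ≤ x)
    (hP : PB (b + r) x ≤ #A) : PB b x ≤ #(A.biUnion fun S => powersetCard b S) := by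
  classical
  let e : Fin (N + 1) ↪ ℕ := Fin.valEmbedding
  let A' : Finset (Finset (Fin (N + 1))) := univ.filter fun T => T.map e ∈ A
  have hinj : Function.Injective (fun T : Finset (Fin (N + 1)) => T.map e) := map_injective e
  have himg : A'.image (fun T => T.map e) = A := by
    ext S
    simp only [mem_image, A', mem_filter, mem_univ, true_and]
    constructor
    · rintro ⟨T, hT, rfl⟩; exact hT
    · intro hS
      have : (univ.filter fun i : Fin (N + 1) => (i : ℕ) ∈ S).map e = S := by
        ext a
        simp only [mem_map, mem_filter, mem_univ, true_and, e, Fin.valEmbedding_apply]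
        constructor
        · rintro ⟨i, hi, rfl⟩; exact hi
        · intro ha
          exact ⟨⟨a, mem_range.1 ((hA S hS).1 ha)⟩, ha, rfl⟩
      exact ⟨_, by rw [this]; exact hS, this⟩
  have hcard : #A' = #A := by
    rw [← himg, card_image_of_injective _ hinj]
  have hsized : (A' : Set (Finset (Fin (N + 1)))).Sized (b + r) := by
    intro T hT
    have : T.map e ∈ A := by simpa [A'] using hT
    rw [← (hA _ this).2, card_map]
  have h1 := lovasz_iter r b A' x hsized hx (by rw [hcard]; exact hP)
  refine h1.trans ?_
  rw [← card_image_of_injective _ hinj]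
  apply Nat.cast_le.2
  apply card_le_card
  intro S hS
  obtain ⟨T, hT, rfl⟩ := mem_image.1 hS
  obtain ⟨U, hU, hTU, hc⟩ := mem_shadow_iterate_iff_exists_mem_card_add.1 hT
  have hUA : U.map e ∈ A := by simpa [A'] using hU
  rw [mem_biUnion]
  refine ⟨_, hUA, ?_⟩
  rw [mem_powersetCard, card_map]
  refine ⟨map_subset_map.2 hTU, ?_⟩
  have := hsized hU
  omega

lemma sum_freq (n k : ℕ) (G : Finset (Finset ℕ))
    (hG : ∀ S ∈ G, S ⊆ Icc 1 n ∧ #S = k) : ∑ y ∈ Icc 1 n, freq G y = k * #G := by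
  have h0 := Finset.sum_card_bipartiteAbove_eq_sum_card_bipartiteBelow (s := Icc 1 n) (t := G)
    (fun y S => y ∈ S)
  change ∑ y ∈ Icc 1 n, freq G y = _ at h0
  rw [h0]
  rw [sum_const_nat (m := k), mul_comm]
  intro S hS
  have : bipartiteBelow (fun (y : ℕ) (S : Finset ℕ) => y ∈ S) (Icc 1 n) S = S := by
    ext a
    simp only [bipartiteBelow, mem_filter]
    exact ⟨fun h => h.2, fun h => ⟨(hG S hS).1 h, h⟩⟩
  rw [this]; exact (hG S hS).2

/-- The transversal family `A` of `φ(F)`. -/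
def famA (n j : ℕ) (F : Finset (Finset ℕ)) : Finset (Finset ℕ) :=
  (F.filter fun S => j ∉ S).image fun S => (Icc 1 n).erase j \ S

lemma famA_card (n k j : ℕ) (F : Finset (Finset ℕ)) 
    (hF : ∀ S ∈ F, S ⊆ Icc 1 n ∧ #S = k) : #(famA n j F) = #(F.filter fun S => j ∉ S) := by
  apply card_image_of_injOn
  intro S hS T hT h
  simp only [coe_filter, Set.mem_ofPred_eq] at hS hT
  have hS' : S ⊆ (Icc 1 n).erase j := fun a ha =>
    mem_erase.2 ⟨fun h => hS.2 (h ▸ ha), (hF S hS.1).1 ha⟩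
  have hT' : T ⊆ (Icc 1 n).erase j := fun a ha =>
    mem_erase.2 ⟨fun h => hT.2 (h ▸ ha), (hF T hT.1).1 ha⟩
  have h' : (Icc 1 n).erase j \ S = (Icc 1 n).erase j \ T := h
  rw [← Finset.sdiff_sdiff_eq_self hS', h', Finset.sdiff_sdiff_eq_self hT']

lemma famA_sub_closure (n k r j : ℕ) (F : Finset (Finset ℕ)) (hn : n = 2 * k + r) (hj : j ∈ Icc 1 n)
    (hF : ∀ S ∈ F, S ⊆ Icc 1 n ∧ #S = k) :
    famA n j F ⊆ closureH ((Icc 1 n).erase j) k r (famA n j F) := by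
  intro v hv
  unfold closureH
  rw [mem_filter, mem_powersetCard]
  refine ⟨⟨?_, ?_⟩, ?_⟩
  · obtain ⟨S, hS, rfl⟩ := mem_image.1 hv
    exact sdiff_subset
  · obtain ⟨S, hS, rfl⟩ := mem_image.1 hv
    rw [mem_filter] at hS
    rw [card_sdiff_of_subset, card_erase_of_mem hj, Nat.card_Icc, (hF S hS.1).2]
    · omega
    · exact fun a ha =>
        mem_erase.2 ⟨fun h => hS.2 (h ▸ ha), (hF S hS.1).1 ha⟩
  · intro t ht
    exact mem_biUnion.2 ⟨v, hv, ht⟩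

lemma closureH_mono (g : Finset ℕ) (k r : ℕ) {A B : Finset (Finset ℕ)} (h : A ⊆ B) :
    closureH g k r A ⊆ closureH g k r B := by
  intro v hv
  unfold closureH at *
  rw [mem_filter] at *
  exact ⟨hv.1, hv.2.trans (biUnion_subset_biUnion_of_subset_left _ h)⟩

lemma stability_s8 (b r m n : ℕ) (hn : n = 2 * (b + 1) + (r + 1)) (hm : r + 1 ≤ b + 2 + m)
    (hmr : m + 2 ≤ r + 1)
    (hbig : 8 * n ^ 3 * 4 ^ (b + 1) ≤ (2 * (b + 1) + m).choose b)
    (G : Finset (Finset ℕ)) (hG : ∀ S ∈ G, S ⊆ Icc 1 n ∧ #S = b + 1)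
    (hint : ∀ S ∈ G, ∀ T ∈ G, (S ∩ T).Nonempty) (j : ℕ) (hj : j ∈ Icc 1 n)
    (hmax : ∀ y ∈ Icc 1 n, freq G y ≤ freq G j)
    (hlarge : (n - 1).choose b < #G + 2 * n * 4 ^ (b + 1)) :
    #(closureH ((Icc 1 n).erase j) (b + 1) (r + 1) (famA n j G)) ≤
      (2 * (b + 1) + m).choose (b + (r + 1)) := by
  by_contra hcon
  push Not at hcon
  set g := (Icc 1 n).erase j with hg
  have hgc : #g = n - 1 := by rw [hg, card_erase_of_mem hj, Nat.card_Icc]; omega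
  set cA := closureH g (b + 1) (r + 1) (famA n j G) with hcA
  set NA := nbhdH (b + 1) (famA n j G) with hNA
  have hcAmem : ∀ v ∈ cA, v ⊆ g ∧ #v = b + (r + 1) ∧ powersetCard b v ⊆ NA := by
    intro v hv
    rw [hcA, closureH, mem_filter, mem_powersetCard] at hv
    exact ⟨hv.1.1, by rw [hv.1.2]; omega, hv.2⟩
  -- the point x
  have hle : #cA ≤ (n - 1).choose (b + (r + 1)) := by
    rw [← hgc, ← card_powersetCard]
    apply card_le_card
    intro v hv
    rw [mem_powersetCard]
    exact ⟨(hcAmem v hv).1, (hcAmem v hv).2.1⟩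
  have hivt : ((#cA : ℕ) : ℝ) ∈ PB (b + (r + 1)) '' Set.Icc (((2 * (b + 1) + m : ℕ)) : ℝ) ((n - 1 : ℕ) : ℝ) := by
    apply intermediate_value_Icc
    · exact_mod_cast (by omega : 2 * (b + 1) + m ≤ n - 1)
    · exact (PB_continuous _).continuousOn
    · rw [PB_nat, PB_nat]
      exact ⟨by exact_mod_cast hcon.le, by exact_mod_cast hle⟩
  obtain ⟨x, ⟨hx0, -⟩, hx⟩ := hivt
  have hm' : (r : ℝ) + 1 ≤ b + 2 + m := by exact_mod_cast hm
  have hmr' : (m : ℝ) + 2 ≤ r + 1 := by exact_mod_cast hmr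
  have hxge : (b : ℝ) + ((r + 1 : ℕ) : ℝ) ≤ x := by
    push_cast at hx0 ⊢
    linarith
  have hlov := lovasz_nat n b (r + 1) cA (by
    intro S hS
    refine ⟨fun a ha => ?_, (hcAmem S hS).2.1⟩
    have := mem_of_mem_erase ((hcAmem S hS).1 ha)
    rw [mem_Icc] at this
    rw [mem_range]; omega) x hxge hx.le
  have hNle : #(cA.biUnion fun S => powersetCard b S) ≤ #NA := by
    apply card_le_card
    intro t ht
    obtain ⟨v, hv, htv⟩ := mem_biUnion.1 ht
    exact (hcAmem v hv).2.2 htv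
  have hPN : PB b x ≤ #NA := hlov.trans (by exact_mod_cast hNle)
  -- B is disjoint from N(A)
  set B := (G.filter fun S => j ∈ S).image (fun S => S.erase j) with hB
  have hBc : #B = freq G j := by
    rw [hB, freq]
    apply card_image_of_injOn
    intro S hS T hT h
    simp only [coe_filter, Set.mem_ofPred_eq] at hS hT
    have h' : S.erase j = T.erase j := h
    rw [← insert_erase hS.2, ← insert_erase hT.2, h']
  have hdisj : Disjoint B NA := by
    rw [disjoint_left]
    intro t htB htN
    obtain ⟨S, hS, rfl⟩ := mem_image.1 htB
    rw [mem_filter] at hS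
    rw [hNA, nbhdH, mem_biUnion] at htN
    obtain ⟨v, hv, hvt⟩ := htN
    obtain ⟨T, hT, rfl⟩ := mem_image.1 hv
    rw [mem_filter] at hT
    rw [mem_powersetCard] at hvt
    obtain ⟨a, ha⟩ := hint S hS.1 T hT.1
    rw [mem_inter] at ha
    have haj : a ≠ j := by rintro rfl; exact hT.2 ha.2
    have := hvt.1 (mem_erase.2 ⟨haj, ha.1⟩)
    exact (mem_sdiff.1 this).2 ha.2
  have hBN : freq G j + #NA ≤ (n - 1).choose b := by
    rw [← hBc, ← card_union_of_disjoint hdisj, ← hgc, ← card_powersetCard]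
    apply card_le_card
    apply union_subset
    · intro t ht
      obtain ⟨S, hS, rfl⟩ := mem_image.1 ht
      rw [mem_filter] at hS
      rw [mem_powersetCard, card_erase_of_mem hS.2, (hG S hS.1).2]
      exact ⟨erase_subset_erase _ (hG S hS.1).1, rfl⟩
    · intro t ht
      rw [hNA, nbhdH, mem_biUnion] at ht
      obtain ⟨v, hv, hvt⟩ := ht
      rw [mem_powersetCard] at hvt ⊢
      refine ⟨hvt.1.trans ?_, hvt.2⟩
      obtain ⟨T, hT, rfl⟩ := mem_image.1 hv
      exact sdiff_subset
  have hGc : #G ≤ freq G j + #cA := by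
    have h1 := card_filter_add_card_filter_not (s := G) (fun S => j ∈ S)
    have h2 := famA_card n (b + 1) j G hG
    have h3 := card_le_card (famA_sub_closure n (b + 1) (r + 1) j G hn hj hG)
    rw [← hg, ← hcA] at h3
    have h4 : freq G j = #(G.filter fun S => j ∈ S) := rfl
    omega
  have hdeg : (b + 1) * #G ≤ n * freq G j := by
    rw [← sum_freq n (b + 1) G hG]
    have := sum_le_card_nsmul (Icc 1 n) (fun y => freq G y) (freq G j) hmax
    simpa using this
  -- now the numbers
  have hnpos : (0 : ℝ) < n := by exact_mod_cast (by omega : 0 < n)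
  set Cn : ℝ := ((n - 1).choose b : ℝ) with hCn
  set Q : ℝ := 4 ^ (b + 1) with hQ
  have hn' : (n : ℝ) = 2 * (b + 1) + (r + 1) := by rw [hn]; push_cast; ring
  have hY : PB b (2 * b + (r + 1)) * ((n : ℝ) - 1) = Cn * (n - (b + 1)) := by
    have h1 : PB b (2 * b + (r + 1)) = ((n - 2).choose b : ℝ) := by
      rw [← PB_nat, Nat.cast_sub (by omega), hn']; push_cast; congr 1; ring
    rw [h1, hCn]
    have h2 := Nat.choose_mul_succ_eq (n - 2) b
    have h3 : n - 2 + 1 = n - 1 := by omega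
    rw [h3] at h2
    have h4 : ((n - 1 - b : ℕ) : ℝ) = n - (b + 1) := by
      rw [Nat.cast_sub (by omega), Nat.cast_sub (by omega)]; push_cast; ring
    have h5 : ((n - 1 : ℕ) : ℝ) = n - 1 := by rw [Nat.cast_sub (by omega)]; simp
    rw [← h4, ← h5]
    exact_mod_cast h2
  have e1 : (freq G j : ℝ) + #NA ≤ Cn := by rw [hCn]; exact_mod_cast hBN
  have e2 : (#G : ℝ) ≤ freq G j + #cA := by exact_mod_cast hGc
  have e3 : ((b : ℝ) + 1) * #G ≤ n * freq G j := by exact_mod_cast hdeg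
  have e4 : Cn < #G + 2 * n * Q := by rw [hCn, hQ]; exact_mod_cast hlarge
  have hb0 : (0 : ℝ) ≤ b := by positivity
  have hQ1 : 1 ≤ Q := by rw [hQ]; exact one_le_pow₀ (by norm_num)
  have hup : PB b x ≤ PB b (2 * b + (r + 1)) * ((n - 1) / n) + 2 * n * Q := by
    have h1 : PB b x ≤ Cn - freq G j := by linarith
    refine h1.trans ?_
    rw [← mul_div_assoc, hY, ← sub_le_iff_le_add, le_div_iff₀ hnpos]
    have hDpos : 0 ≤ 2 * (n : ℝ) * Q := by positivity
    have h2 : ((b : ℝ) + 1) * (Cn - 2 * n * Q) ≤ (b + 1) * #G :=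
      mul_le_mul_of_nonneg_left (by linarith) (by positivity)
    have h3 : ((b : ℝ) + 1) * (2 * n * Q) ≤ n * (2 * n * Q) :=
      mul_le_mul_of_nonneg_right (by linarith [(Nat.cast_nonneg r : (0 : ℝ) ≤ r)]) hDpos
    nlinarith
  have hbig' : 8 * (n : ℝ) ^ 3 * Q ≤ PB b (2 * (b + 1) + m) := by
    have : PB b (2 * (b + 1) + m) = ((2 * (b + 1) + m).choose b : ℝ) := by
      rw [← PB_nat]; push_cast; rfl
    rw [this, hQ]; exact_mod_cast hbig
  have hfin := PB_gap b r m n Q x hn (by omega) hmr hQ1 (by push_cast at hx0; exact hx0) hbig' hup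
  rw [hx] at hfin
  linarith

end transport

section counting
open Finset

lemma card_small_subsets {α : Type*} [DecidableEq α] (W : Finset α) (s : ℕ) :
    #(W.powerset.filter fun E => #E ≤ s) ≤ (#W + 1) ^ s := by
  induction s with
  | zero =>
    rw [pow_zero, card_le_one]
    intro a ha b hb
    simp only [mem_filter, Nat.le_zero, card_eq_zero] at ha hb
    rw [ha.2, hb.2]
  | succ s ih =>
    have hsub : (W.powerset.filter fun E => #E ≤ s + 1) ⊆
        ((W.powerset.filter fun E => #E ≤ s) ×ˢ (insertNone W)).image
          (fun p => p.2.elim p.1 (fun a => insert a p.1)) := by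
      intro E hE
      rw [mem_filter, mem_powerset] at hE
      rw [mem_image]
      rcases E.eq_empty_or_nonempty with rfl | ⟨a, ha⟩
      · exact ⟨(∅, none), by simp, rfl⟩
      · refine ⟨(E.erase a, some a), ?_, ?_⟩
        · rw [mem_product, mem_filter, mem_powerset, some_mem_insertNone, card_erase_of_mem ha]
          exact ⟨⟨(erase_subset _ _).trans hE.1, by omega⟩, hE.1 ha⟩
        · simp [insert_erase ha]
    refine (card_le_card hsub).trans (card_image_le.trans ?_)
    rw [card_product, card_insertNone, pow_succ]
    exact Nat.mul_le_mul_right _ ih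

/-- Sets of `W` meeting every member of `T`. -/
def meetAll (W T : Finset (Finset ℕ)) : Finset (Finset ℕ) :=
  W.filter fun H => ∀ S ∈ T, (H ∩ S).Nonempty

lemma exists_generator (n k : ℕ) (hk : 1 ≤ k) (hn : 2 * k ≤ n) (F : Finset (Finset ℕ))
    (hF : F ⊆ powersetCard k (Icc 1 n)) (hint : ∀ S ∈ F, ∀ T ∈ F, (S ∩ T).Nonempty) :
    ∃ T ⊆ powersetCard k (Icc 1 n), #T ≤ 4 ^ k ∧
      F ⊆ meetAll (powersetCard k (Icc 1 n)) T ∧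
      (∀ S ∈ meetAll (powersetCard k (Icc 1 n)) T,
        ∀ S' ∈ meetAll (powersetCard k (Icc 1 n)) T, (S ∩ S').Nonempty) := by
  classical
  set W := powersetCard k (Icc 1 n) with hW
  have hWm : ∀ S ∈ W, S ⊆ Icc 1 n ∧ #S = k := fun S hS => mem_powersetCard.1 hS
  -- a maximal intersecting family
  obtain ⟨G, hG, hGmax⟩ := exists_max_image
    (W.powerset.filter fun G => F ⊆ G ∧ ∀ S ∈ G, ∀ T ∈ G, (S ∩ T).Nonempty) card
    ⟨F, by simp only [mem_filter, mem_powerset]; exact ⟨hF, Subset.refl _, hint⟩⟩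
  simp only [mem_filter, mem_powerset] at hG hGmax
  obtain ⟨hGW, hFG, hGint⟩ := hG
  have hGI : meetAll W G = G := by
    ext H
    simp only [meetAll, mem_filter]
    constructor
    · rintro ⟨hHW, hH⟩
      by_contra hHG
      have hHne : H.Nonempty := by rw [← card_pos, (hWm H hHW).2]; omega
      have := hGmax (insert H G) ⟨insert_subset hHW hGW, hFG.trans (subset_insert _ _), by
        intro S hS T hT
        rw [mem_insert] at hS hT
        rcases hS with rfl | hS <;> rcases hT with rfl | hT
        · simpa using hHne
        · exact hH _ hT
        · rw [inter_comm]; exact hH _ hS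
        · exact hGint _ hS _ hT⟩
      rw [card_insert_of_notMem hHG] at this
      omega
    · intro hH
      exact ⟨hGW hH, fun S hS => hGint _ hH _ hS⟩
  obtain ⟨T, hT, hTmin⟩ := exists_min_image
    (G.powerset.filter fun T => meetAll W T = G) card
    ⟨G, by simp only [mem_filter, mem_powerset]; exact ⟨Subset.refl _, hGI⟩⟩
  simp only [mem_filter, mem_powerset] at hT hTmin
  obtain ⟨hTG, hTI⟩ := hT
  refine ⟨T, hTG.trans hGW, ?_, by rw [hTI]; exact hFG, by rw [hTI]; exact hGint⟩
  have hex : ∀ S ∈ T, ∃ H, H ∈ W ∧ (∀ S' ∈ T, S' ≠ S → (H ∩ S').Nonempty) ∧ ¬ (H ∩ S).Nonempty := by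
    intro S hS
    have hne : meetAll W (T.erase S) ≠ G := by
      intro h
      have := hTmin (T.erase S) ⟨(erase_subset _ _).trans hTG, h⟩
      rw [card_erase_of_mem hS] at this
      have := card_pos.2 ⟨S, hS⟩
      omega
    have hsub : G ⊆ meetAll W (T.erase S) := by
      rw [← hTI]
      intro H hH
      simp only [meetAll, mem_filter] at hH ⊢
      exact ⟨hH.1, fun S' hS' => hH.2 S' (mem_of_mem_erase hS')⟩
    obtain ⟨H, hH, hHG⟩ := exists_of_ssubset (hsub.ssubset_of_ne hne.symm)
    simp only [meetAll, mem_filter] at hH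
    refine ⟨H, hH.1, fun S' hS' hne => hH.2 S' (mem_erase.2 ⟨hne, hS'⟩), fun hHS => hHG ?_⟩
    rw [← hTI]
    simp only [meetAll, mem_filter]
    refine ⟨hH.1, fun S' hS' => ?_⟩
    by_cases h : S' = S
    · rw [h]; exact hHS
    · exact hH.2 S' (mem_erase.2 ⟨h, hS'⟩)
  choose! h hhW hhne hhS using hex
  have hdisj : (T : Set (Finset ℕ)).PairwiseDisjoint
      (fun S => Finset.Icc S (Icc 1 n \ h S)) := by
    intro S hS S' hS' hne
    rw [Function.onFun, disjoint_left]
    intro V hV hV'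
    rw [Finset.mem_Icc] at hV hV'
    obtain ⟨a, ha⟩ := hhne S hS S' hS' hne.symm
    rw [mem_inter] at ha
    have := hV.2 (hV'.1 ha.2)
    exact (mem_sdiff.1 this).2 ha.1
  have hcard : ∀ S ∈ T, #(Finset.Icc S (Icc 1 n \ h S)) = 2 ^ (n - 2 * k) := by
    intro S hS
    have hSW := hWm S (hGW (hTG hS))
    have hhW' := hWm _ (hhW S hS)
    rw [card_Icc_finset, card_sdiff_of_subset hhW'.1, hhW'.2, hSW.2, Nat.card_Icc]
    · congr 1; omega
    · intro a ha
      exact mem_sdiff.2 ⟨hSW.1 ha, fun hah => hhS S hS ⟨a, mem_inter.2 ⟨hah, ha⟩⟩⟩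
  have hle : #(T.biUnion fun S => Finset.Icc S (Icc 1 n \ h S)) ≤ 2 ^ n := by
    have : #((Icc 1 n).powerset) = 2 ^ n := by rw [card_powerset, Nat.card_Icc]; simp
    rw [← this]
    apply card_le_card
    intro V hV
    obtain ⟨S, hS, hV⟩ := mem_biUnion.1 hV
    rw [Finset.mem_Icc] at hV
    exact mem_powerset.2 (hV.2.trans sdiff_subset)
  rw [card_biUnion hdisj, sum_const_nat hcard] at hle
  have h4 : 2 ^ n = 4 ^ k * 2 ^ (n - 2 * k) := by
    rw [show (4 : ℕ) = 2 ^ 2 by norm_num, ← pow_mul, ← pow_add]; congr 1; omega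
  rw [h4] at hle
  exact Nat.le_of_mul_le_mul_right hle (by positivity)

/-- Membership in a filter, with the decidability instance as an explicit argument. -/
lemma mem_filter_inst (p : ℕ → Prop) (i : DecidablePred p) (s : Finset ℕ) (a : ℕ) :
    a ∈ @Finset.filter ℕ p i s ↔ a ∈ s ∧ p a := mem_filter

lemma mostFreq_spec (n : ℕ) (hn : 1 ≤ n) (F : Finset (Finset ℕ)) :
    mostFreq n F ∈ Icc 1 n ∧ ∀ y ∈ Icc 1 n, freq F y ≤ freq F (mostFreq n F) := by
  classical
  obtain ⟨x, hx, hm⟩ := exists_max_image (Icc 1 n) (freq F) ⟨1, by simp [hn]⟩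
  unfold mostFreq
  simp only
  split_ifs with h
  · exact (mem_filter_inst _ _ _ _).1 (max'_mem _ h)
  · exact absurd ⟨x, (mem_filter_inst _ _ _ _).2 ⟨hx, hm⟩⟩ h

/-- The condition on `F` in the theorem. -/
def Bad (n k r s : ℕ) (F : Finset (Finset ℕ)) : Prop :=
  s < #(closureH ((Icc 1 n).erase (mostFreq n F)) k r (famA n (mostFreq n F) F))

lemma card_two_point (n c j f : ℕ) (hj : j ∈ Icc 1 n) (hf : f ∈ Icc 1 n) (hfj : f ≠ j) :
    #((powersetCard (c + 2) (Icc 1 n)).filter fun S => j ∈ S ∧ f ∈ S) ≤ (n - 2).choose c := by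
  have hg : #(((Icc 1 n).erase j).erase f) = n - 2 := by
    rw [card_erase_of_mem (mem_erase.2 ⟨hfj, hf⟩), card_erase_of_mem hj, Nat.card_Icc]; omega
  rw [← hg, ← card_powersetCard]
  apply card_le_card_of_injOn (fun S => (S.erase j).erase f)
  · intro S hS
    simp only [coe_filter, Set.mem_ofPred_eq, mem_powersetCard] at hS
    simp only [mem_coe, mem_powersetCard]
    refine ⟨erase_subset_erase _ (erase_subset_erase _ hS.1.1), ?_⟩
    rw [card_erase_of_mem (mem_erase.2 ⟨hfj, hS.2.2⟩), card_erase_of_mem hS.2.1, hS.1.2]; rfl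
  · intro S hS T hT h
    simp only [coe_filter, Set.mem_ofPred_eq, mem_powersetCard] at hS hT
    have h' : (S.erase j).erase f = (T.erase j).erase f := h
    rw [← insert_erase hS.2.1, ← insert_erase hT.2.1,
      ← insert_erase (mem_erase.2 ⟨hfj, hS.2.2⟩), ← insert_erase (mem_erase.2 ⟨hfj, hT.2.2⟩), h']

open Classical in
lemma count_in_G (c r m n : ℕ) (hn : n = 2 * (c + 1 + 1) + (r + 1)) (hm : r + 1 ≤ c + 1 + 2 + m)
    (hmr : m + 2 ≤ r + 1)
    (hbig : 8 * n ^ 3 * 4 ^ (c + 1 + 1) ≤ (2 * (c + 1 + 1) + m).choose (c + 1))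
    (hbig2 : n + 2 * n * (2 * (c + 1 + 1) + m).choose (c + 1 + (r + 1)) + 2 * n * 4 ^ (c + 1 + 1) ≤
      (n - 2).choose (c + 1))
    (G : Finset (Finset ℕ)) (hG : G ⊆ powersetCard (c + 1 + 1) (Icc 1 n))
    (hint : ∀ S ∈ G, ∀ T ∈ G, (S ∩ T).Nonempty) :
    #(G.powerset.filter (Bad n (c + 1 + 1) (r + 1) ((2 * (c + 1 + 1) + m).choose (c + 1 + (r + 1)))))
      * 2 ^ (2 * n * 4 ^ (c + 1 + 1)) ≤ 2 ^ ((n - 1).choose (c + 1)) := by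
  set k := c + 1 + 1 with hk
  set s := (2 * k + m).choose (c + 1 + (r + 1)) with hs
  set W := powersetCard k (Icc 1 n) with hW
  have hG' : ∀ S ∈ G, S ⊆ Icc 1 n ∧ #S = k := fun S hS => mem_powersetCard.1 (hG hS)
  by_cases hsmall : #G + 2 * n * 4 ^ k ≤ (n - 1).choose (c + 1)
  · calc _ ≤ 2 ^ #G * 2 ^ (2 * n * 4 ^ k) := by
          apply Nat.mul_le_mul_right
          rw [← card_powerset]
          exact card_le_card (filter_subset _ _)
      _ = 2 ^ (#G + 2 * n * 4 ^ k) := (pow_add _ _ _).symm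
      _ ≤ _ := Nat.pow_le_pow_right (by norm_num) hsmall
  push Not at hsmall
  obtain ⟨hj, hjmax⟩ := mostFreq_spec n (by omega) G
  set j := mostFreq n G with hjdef
  have hstab := stability_s8 (c + 1) r m n hn hm hmr hbig G hG' hint j hj hjmax hsmall
  rw [← hk] at hstab
  rw [← hs] at hstab
  have hsc : #(G.filter fun S => j ∉ S) ≤ s := by
    rw [← famA_card n k j G hG']
    exact (card_le_card (famA_sub_closure n k (r + 1) j G hn hj hG')).trans hstab
  set R : ℕ → Finset (Finset ℕ) := fun f => W.filter fun S => j ∈ S ∧ f ∈ S with hR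
  have hsub : G.powerset.filter (Bad n k (r + 1) s) ⊆
      ((Icc 1 n).erase j).biUnion fun f =>
        ((W.powerset.filter fun E => #E ≤ 2 * s) ×ˢ (R f).powerset).image fun p => p.1 ∪ p.2 := by
    intro F hF
    rw [mem_filter, mem_powerset] at hF
    obtain ⟨hFG, hbad⟩ := hF
    obtain ⟨hf, hfmax⟩ := mostFreq_spec n (by omega) F
    unfold Bad at hbad
    set f := mostFreq n F with hfdef
    have hfj : f ≠ j := by
      intro h
      rw [h] at hbad
      have h1 : famA n j F ⊆ famA n j G := image_subset_image (filter_subset_filter _ hFG)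
      have h2 := card_le_card (closureH_mono ((Icc 1 n).erase j) k (r + 1) h1)
      omega
    rw [mem_biUnion]
    refine ⟨f, mem_erase.2 ⟨hfj, hf⟩, ?_⟩
    rw [mem_image]
    refine ⟨(F.filter fun S => ¬ (j ∈ S ∧ f ∈ S), F.filter fun S => j ∈ S ∧ f ∈ S), ?_, ?_⟩
    · rw [mem_product, mem_filter, mem_powerset, mem_powerset]
      refine ⟨⟨(filter_subset _ _).trans (hFG.trans hG), ?_⟩,
        filter_subset_filter _ (hFG.trans hG)⟩
      have h1 : #(F.filter fun S => j ∉ S) ≤ s :=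
        (card_le_card (filter_subset_filter _ hFG)).trans hsc
      have h2 : #(F.filter fun S => ¬ (j ∈ S ∧ f ∈ S)) ≤
          #(F.filter fun S => j ∉ S) + #(F.filter fun S => j ∈ S ∧ f ∉ S) := by
        rw [← card_union_of_disjoint]
        · apply card_le_card
          intro S hS
          simp only [mem_union, mem_filter] at hS ⊢
          tauto
        · rw [disjoint_left]
          intro S hS hS'
          simp only [mem_filter] at hS hS'
          exact hS.2 hS'.2.1
      have h3 : freq F j = #(F.filter fun S => j ∈ S ∧ f ∈ S) + #(F.filter fun S => j ∈ S ∧ f ∉ S) := by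
        have := card_filter_add_card_filter_not (s := F.filter fun S => j ∈ S) (fun S => f ∈ S)
        rw [filter_filter, filter_filter] at this
        exact this.symm
      have h4 : freq F f = #(F.filter fun S => f ∈ S ∧ j ∈ S) + #(F.filter fun S => f ∈ S ∧ j ∉ S) := by
        have := card_filter_add_card_filter_not (s := F.filter fun S => f ∈ S) (fun S => j ∈ S)
        rw [filter_filter, filter_filter] at this
        exact this.symm
      have h5 : (F.filter fun S => f ∈ S ∧ j ∈ S) = (F.filter fun S => j ∈ S ∧ f ∈ S) :=
        filter_congr (fun S _ => and_comm)
      have h6 : #(F.filter fun S => f ∈ S ∧ j ∉ S) ≤ #(F.filter fun S => j ∉ S) := by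
        apply card_le_card
        intro S hS
        simp only [mem_filter] at hS ⊢
        exact ⟨hS.1, hS.2.2⟩
      have h7 := hfmax j hj
      rw [h5] at h4
      change #(F.filter fun S => ¬ (j ∈ S ∧ f ∈ S)) ≤ 2 * s
      omega
    · ext S
      simp only [mem_union, mem_filter]
      tauto
  have hW1 : #W + 1 ≤ 2 ^ n := by
    have h1 : #((Icc 1 n).powerset) = 2 ^ n := by rw [card_powerset, Nat.card_Icc]; simp
    rw [← h1]
    apply card_lt_card
    rw [ssubset_iff_of_subset (fun S hS => mem_powerset.2 (mem_powersetCard.1 hS).1)]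
    exact ⟨∅, by simp, by rw [mem_powersetCard]; simp [hk]⟩
  have hcount : #(G.powerset.filter (Bad n k (r + 1) s)) ≤
      n * (2 ^ (2 * n * s) * 2 ^ ((n - 2).choose c)) := by
    refine (card_le_card hsub).trans ?_
    refine (card_biUnion_le_card_mul _ _ (2 ^ (2 * n * s) * 2 ^ ((n - 2).choose c)) ?_).trans ?_
    · intro f hf
      refine card_image_le.trans ?_
      rw [card_product, card_powerset]
      apply Nat.mul_le_mul
      · refine (card_small_subsets W (2 * s)).trans ?_
        refine (Nat.pow_le_pow_left hW1 _).trans (le_of_eq ?_)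
        rw [← pow_mul]; congr 1; ring
      · apply Nat.pow_le_pow_right (by norm_num)
        exact card_two_point n c j f hj (mem_of_mem_erase hf) (ne_of_mem_erase hf)
    · apply Nat.mul_le_mul_right
      rw [card_erase_of_mem hj, Nat.card_Icc]; omega
  have hpas : (n - 1).choose (c + 1) = (n - 2).choose c + (n - 2).choose (c + 1) := by
    have : n - 1 = (n - 2) + 1 := by omega
    rw [this, Nat.choose_succ_succ]
  calc _ ≤ (n * (2 ^ (2 * n * s) * 2 ^ ((n - 2).choose c))) * 2 ^ (2 * n * 4 ^ k) :=
        Nat.mul_le_mul_right _ hcount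
    _ ≤ (2 ^ n * (2 ^ (2 * n * s) * 2 ^ ((n - 2).choose c))) * 2 ^ (2 * n * 4 ^ k) := by
        gcongr
        exact Nat.lt_two_pow_self.le
    _ = 2 ^ (n + (2 * n * s + (n - 2).choose c) + 2 * n * 4 ^ k) := by
        generalize 4 ^ k = q
        rw [pow_add, pow_add, pow_add]
    _ ≤ _ := by
        apply Nat.pow_le_pow_right (by norm_num)
        rw [hpas]; omega

open Classical in
lemma count_all (c r m n : ℕ) (hn : n = 2 * (c + 1 + 1) + (r + 1)) (hm : r + 1 ≤ c + 1 + 2 + m)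
    (hmr : m + 2 ≤ r + 1)
    (hbig : 8 * n ^ 3 * 4 ^ (c + 1 + 1) ≤ (2 * (c + 1 + 1) + m).choose (c + 1))
    (hbig2 : n + 2 * n * (2 * (c + 1 + 1) + m).choose (c + 1 + (r + 1)) + 2 * n * 4 ^ (c + 1 + 1) ≤
      (n - 2).choose (c + 1)) :
    #((powersetCard (c + 1 + 1) (Icc 1 n)).powerset.filter fun F =>
        (∀ S ∈ F, ∀ T ∈ F, (S ∩ T).Nonempty) ∧
        Bad n (c + 1 + 1) (r + 1) ((2 * (c + 1 + 1) + m).choose (c + 1 + (r + 1))) F)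
      * 2 ^ (n * 4 ^ (c + 1 + 1)) ≤ 2 ^ ((n - 1).choose (c + 1)) := by
  set k := c + 1 + 1 with hk
  set s := (2 * k + m).choose (c + 1 + (r + 1)) with hs
  set W := powersetCard k (Icc 1 n) with hW
  set X := W.powerset.filter fun T => #T ≤ 4 ^ k ∧
    ∀ S ∈ meetAll W T, ∀ S' ∈ meetAll W T, (S ∩ S').Nonempty with hX
  have hsub : (W.powerset.filter fun F => (∀ S ∈ F, ∀ T ∈ F, (S ∩ T).Nonempty) ∧
      Bad n k (r + 1) s F) ⊆
      X.biUnion fun T => (meetAll W T).powerset.filter (Bad n k (r + 1) s) := by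
    intro F hF
    rw [mem_filter, mem_powerset] at hF
    obtain ⟨T, hTW, hTc, hFT, hTint⟩ := exists_generator n k (by omega) (by omega) F hF.1 hF.2.1
    rw [mem_biUnion]
    exact ⟨T, mem_filter.2 ⟨mem_powerset.2 hTW, hTc, hTint⟩,
      mem_filter.2 ⟨mem_powerset.2 hFT, hF.2.2⟩⟩
  have hW1 : #W + 1 ≤ 2 ^ n := by
    have h1 : #((Icc 1 n).powerset) = 2 ^ n := by rw [card_powerset, Nat.card_Icc]; simp
    rw [← h1]
    apply card_lt_card
    rw [ssubset_iff_of_subset (fun S hS => mem_powerset.2 (mem_powersetCard.1 hS).1)]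
    exact ⟨∅, by simp, by rw [mem_powersetCard]; simp [hk]⟩
  have hXc : #X ≤ 2 ^ (n * 4 ^ k) := by
    refine le_trans (card_le_card ?_) ((card_small_subsets W (4 ^ k)).trans
      ((Nat.pow_le_pow_left hW1 _).trans (le_of_eq (by rw [← pow_mul]))))
    intro T hT
    rw [hX, mem_filter] at hT
    exact mem_filter.2 ⟨hT.1, hT.2.1⟩
  have h1 := card_le_card hsub
  have h2 := card_biUnion_le (s := X) (t := fun T => (meetAll W T).powerset.filter (Bad n k (r + 1) s))
  have h3 : (∑ T ∈ X, #((meetAll W T).powerset.filter (Bad n k (r + 1) s))) * 2 ^ (2 * n * 4 ^ k) ≤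
      2 ^ (n * 4 ^ k) * 2 ^ ((n - 1).choose (c + 1)) := by
    rw [sum_mul]
    refine (sum_le_card_nsmul X _ (2 ^ ((n - 1).choose (c + 1))) ?_).trans ?_
    · intro T hT
      rw [hX, mem_filter] at hT
      exact count_in_G c r m n hn hm hmr hbig hbig2 _ (filter_subset _ _) hT.2.2
    · rw [smul_eq_mul]
      exact Nat.mul_le_mul_right _ hXc
  have h4 : 2 ^ (2 * n * 4 ^ k) = 2 ^ (n * 4 ^ k) * 2 ^ (n * 4 ^ k) := by
    rw [← pow_add]; congr 1; ring
  have h5 := (Nat.mul_le_mul_right (2 ^ (2 * n * 4 ^ k)) (h1.trans h2)).trans h3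
  rw [h4, ← mul_assoc, mul_comm (2 ^ (n * 4 ^ k)) (2 ^ ((n - 1).choose (c + 1)))] at h5
  exact Nat.le_of_mul_le_mul_right h5 (by positivity)

end counting

section numeric

lemma choose_grow1 (k m : ℕ) (hk : 1 ≤ k) (hm : m + 4 ≤ k) :
    3 ^ m * (2 * k).choose (k - 1) ≤ 2 ^ m * (2 * k + m).choose (k - 1) := by
  induction m with
  | zero => simp
  | succ m ih =>
    have h1 := ih (by omega)
    have h2 := Nat.choose_mul_succ_eq (2 * k + m) (k - 1)
    have h3 : 2 * k + m + 1 - (k - 1) = k + m + 2 := by omega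
    rw [h3] at h2
    have h4 : 3 * (2 * k + m).choose (k - 1) ≤ 2 * (2 * k + (m + 1)).choose (k - 1) := by
      apply Nat.le_of_mul_le_mul_right (c := k + m + 2) _ (by omega)
      have : 3 * (k + m + 2) ≤ 2 * (2 * k + m + 1) := by omega
      calc 3 * (2 * k + m).choose (k - 1) * (k + m + 2)
          = (2 * k + m).choose (k - 1) * (3 * (k + m + 2)) := by ring
        _ ≤ (2 * k + m).choose (k - 1) * (2 * (2 * k + m + 1)) := Nat.mul_le_mul_left _ this
        _ = 2 * ((2 * k + m).choose (k - 1) * (2 * k + m + 1)) := by ring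
        _ = 2 * (2 * k + (m + 1)).choose (k - 1) * (k + m + 2) := by rw [h2, ← add_assoc]; ring
    calc 3 ^ (m + 1) * (2 * k).choose (k - 1) = 3 * (3 ^ m * (2 * k).choose (k - 1)) := by ring
      _ ≤ 3 * (2 ^ m * (2 * k + m).choose (k - 1)) := Nat.mul_le_mul_left _ h1
      _ = 2 ^ m * (3 * (2 * k + m).choose (k - 1)) := by ring
      _ ≤ 2 ^ m * (2 * (2 * k + (m + 1)).choose (k - 1)) := Nat.mul_le_mul_left _ h4
      _ = _ := by ring

lemma choose_grow2 (N a t : ℕ) (h : N + t ≤ 2 * a) (ha : a ≤ N + 1) :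
    2 ^ t * N.choose a ≤ (N + t).choose a := by
  induction t with
  | zero => simp
  | succ t ih =>
    have h1 := ih (by omega)
    have h2 := Nat.choose_mul_succ_eq (N + t) a
    have h4 : 2 * (N + t).choose a ≤ (N + (t + 1)).choose a := by
      rcases Nat.eq_zero_or_pos (N + t + 1 - a) with h0 | h0
      · rw [Nat.choose_eq_zero_of_lt (by omega : N + t < a)]; simp
      apply Nat.le_of_mul_le_mul_right (c := N + t + 1 - a) _ h0
      have : 2 * (N + t + 1 - a) ≤ N + t + 1 := by omega
      calc 2 * (N + t).choose a * (N + t + 1 - a)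
          = (N + t).choose a * (2 * (N + t + 1 - a)) := by ring
        _ ≤ (N + t).choose a * (N + t + 1) := Nat.mul_le_mul_left _ this
        _ = _ := by rw [h2, ← add_assoc]
    calc 2 ^ (t + 1) * N.choose a = 2 * (2 ^ t * N.choose a) := by ring
      _ ≤ 2 * (N + t).choose a := Nat.mul_le_mul_left _ h1
      _ ≤ _ := h4

lemma numeric_nat (k r m t n : ℕ) (hn : n = 2 * k + r) (hk : 2 ≤ k) (hr : m + t + 2 = r)
    (hrk : r ≤ k) (hmk : m + 4 ≤ k) (h3 : 864 * k ^ 4 * 2 ^ m ≤ 3 ^ m) (h2 : 24 * k ≤ 2 ^ t) :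
    8 * n ^ 3 * 4 ^ k ≤ (2 * k + m).choose (k - 1) ∧
    n + 2 * n * (2 * k + m).choose (k - 1 + r) + 2 * n * 4 ^ k ≤ (n - 2).choose (k - 1) := by
  have hn3 : n ≤ 3 * k := by omega
  have hc : (4 : ℕ) ^ k ≤ 4 * k * (2 * k).choose (k - 1) := by
    have h1 := Nat.four_pow_le_two_mul_self_mul_centralBinom k (by omega)
    have h4 := Nat.choose_succ_right_eq (2 * k) (k - 1)
    have h5 : k - 1 + 1 = k := by omega
    have h6 : 2 * k - (k - 1) = k + 1 := by omega
    rw [h5, h6] at h4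
    rw [Nat.centralBinom_eq_two_mul_choose] at h1
    have h7 : (2 * k).choose k ≤ 2 * (2 * k).choose (k - 1) := by
      apply Nat.le_of_mul_le_mul_right (c := k) _ (by omega)
      rw [h4]
      calc (2 * k).choose (k - 1) * (k + 1) ≤ (2 * k).choose (k - 1) * (2 * k) :=
            Nat.mul_le_mul_left _ (by omega)
        _ = _ := by ring
    calc 4 ^ k ≤ 2 * k * (2 * k).choose k := h1
      _ ≤ 2 * k * (2 * (2 * k).choose (k - 1)) := Nat.mul_le_mul_left _ h7
      _ = _ := by ring
  have hg := choose_grow1 k m (by omega) hmk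
  have H1 : 8 * n ^ 3 * 4 ^ k ≤ (2 * k + m).choose (k - 1) := by
    refine le_of_mul_le_mul_left (a := 2 ^ m) ?_ (by positivity)
    calc 2 ^ m * (8 * n ^ 3 * 4 ^ k) ≤ 2 ^ m * (8 * (3 * k) ^ 3 * (4 * k * (2 * k).choose (k - 1))) := by
          gcongr
      _ = (864 * k ^ 4 * 2 ^ m) * (2 * k).choose (k - 1) := by ring
      _ ≤ 3 ^ m * (2 * k).choose (k - 1) := Nat.mul_le_mul_right _ h3
      _ ≤ _ := hg
  refine ⟨H1, ?_⟩
  have hmono : (2 * k + m).choose (k - 1) ≤ (n - 2).choose (k - 1) :=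
    Nat.choose_le_choose _ (by omega)
  have hg2 := choose_grow2 (2 * k + m) (k - 1 + r) t (by omega) (by omega)
  have h5 : 2 * k + m + t = n - 2 := by omega
  have h6 : (n - 2).choose (k - 1 + r) = (n - 2).choose (k - 1) := by
    apply Nat.choose_symm_of_eq_add; omega
  rw [h5, h6] at hg2
  set C := (n - 2).choose (k - 1)
  set s := (2 * k + m).choose (k - 1 + r)
  have h7 : 8 * n * s ≤ C := by
    refine le_trans (Nat.mul_le_mul_right _ ?_) hg2
    omega
  have h8 : n ≤ n ^ 3 * 4 ^ k := by
    calc n ≤ n ^ 3 := Nat.le_self_pow (by norm_num) n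
      _ ≤ _ := Nat.le_mul_of_pos_right _ (by positivity)
  have h9 : n * 4 ^ k ≤ n ^ 3 * 4 ^ k := Nat.mul_le_mul_right _ (Nat.le_self_pow (by norm_num) n)
  have h10 : 8 * (n ^ 3 * 4 ^ k) ≤ C := by rw [← mul_assoc]; exact H1.trans hmono
  have h11 : 2 * n * 4 ^ k = 2 * (n * 4 ^ k) := by ring
  have h12 : 8 * n * s = 8 * (n * s) := by ring
  have h13 : 2 * n * s = 2 * (n * s) := by ring
  rw [h11, h13]
  rw [h12] at h7
  generalize n ^ 3 * 4 ^ k = u at *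
  generalize n * 4 ^ k = v at *
  generalize n * s = w at *
  omega

lemma analytic (k r : ℕ) (hk : 16384 ≤ k) (h1 : 100 * Real.log k ≤ (r : ℝ))
    (h2 : (r : ℝ) ≤ 2 + 2 * Real.sqrt (k * Real.log k)) :
    ∃ t, 3 * r / 4 + t + 2 = r ∧ r ≤ k ∧ 3 * r / 4 + 4 ≤ k ∧
      864 * k ^ 4 * 2 ^ (3 * r / 4) ≤ 3 ^ (3 * r / 4) ∧ 24 * k ≤ 2 ^ t := by
  have hkR : (16384 : ℝ) ≤ k := by exact_mod_cast hk
  have hkpos : (0 : ℝ) < k := by linarith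
  have hlog1 : 1 ≤ Real.log k := by
    rw [Real.le_log_iff_exp_le hkpos]
    have := Real.exp_one_lt_d9
    linarith
  have hlogk : Real.log k ≤ k / 64 := by
    have hs : (128 : ℝ) ≤ Real.sqrt k := by
      apply Real.le_sqrt_of_sq_le; norm_num; linarith
    have h3 := Real.log_le_sub_one_of_pos (show 0 < Real.sqrt k by linarith)
    rw [Real.log_sqrt hkpos.le] at h3
    have h4 := Real.mul_self_sqrt hkpos.le
    nlinarith
  have hsq : Real.sqrt (k * Real.log k) ≤ k / 8 := by
    apply Real.sqrt_le_iff.2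
    refine ⟨by positivity, ?_⟩
    nlinarith
  have hrk : (r : ℝ) ≤ k / 2 := by linarith
  have hrk' : 2 * r ≤ k := by
    have : (2 * r : ℝ) ≤ k := by linarith
    exact_mod_cast this
  have hr100 : 100 ≤ r := by
    have : (100 : ℝ) ≤ r := by linarith
    exact_mod_cast this
  obtain ⟨t, ht⟩ : ∃ t, 3 * r / 4 + t + 2 = r := ⟨r - 2 - 3 * r / 4, by omega⟩
  set m := 3 * r / 4 with hm
  have hmlow : (3 * r : ℝ) ≤ 4 * m + 3 := by
    have : 3 * r ≤ 4 * m + 3 := by omega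
    exact_mod_cast this
  have htlow : (r : ℝ) ≤ 4 * t + 8 := by
    have : r ≤ 4 * t + 8 := by omega
    exact_mod_cast this
  refine ⟨t, ht, by omega, by omega, ?_, ?_⟩
  · have h32 : (1 : ℝ) / 3 ≤ Real.log (3 / 2) := by
      have := Real.one_sub_inv_le_log_of_pos (show (0 : ℝ) < 3 / 2 by norm_num)
      norm_num at this ⊢; linarith
    have h4 : (k : ℝ) ^ 5 ≤ (3 / 2 : ℝ) ^ m := by
      rw [← Real.log_le_log_iff (by positivity) (by positivity), Real.log_pow, Real.log_pow]
      push_cast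
      have hm0 : (0 : ℝ) ≤ m := by positivity
      nlinarith
    rw [div_pow, le_div_iff₀ (by positivity)] at h4
    have h5 : k ^ 5 * 2 ^ m ≤ 3 ^ m := by exact_mod_cast h4
    refine le_trans (Nat.mul_le_mul_right _ ?_) h5
    calc 864 * k ^ 4 ≤ k * k ^ 4 := Nat.mul_le_mul_right _ (by omega)
      _ = k ^ 5 := by ring
  · have h12 : (1 : ℝ) / 2 ≤ Real.log 2 := by
      have := Real.one_sub_inv_le_log_of_pos (show (0 : ℝ) < 2 by norm_num)
      norm_num at this ⊢; linarith
    have h4 : (k : ℝ) ^ 2 ≤ (2 : ℝ) ^ t := by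
      rw [← Real.log_le_log_iff (by positivity) (by positivity), Real.log_pow, Real.log_pow]
      push_cast
      have ht0 : (0 : ℝ) ≤ t := by positivity
      nlinarith
    have h5 : k ^ 2 ≤ 2 ^ t := by exact_mod_cast h4
    nlinarith

end numeric


/-- There exists K such that for all k ≥ K, 100 ln k ≤ r ≤ 2+2√(k ln k)
and n = 2k+r, the number of intersecting families F of k-subsets of [n] with
|[φ(F) ∩ L_{k+r-1}]| > C(2k+⌊3r/4⌋, k+r-1) is at most
2^(C(n-1,k-1) - (1/2)·n·C(2k,k)). -/
theorem count_families_with_large_closure : ∃ K : ℕ, ∀ k : ℕ, K ≤ k → ∀ r n : ℕ,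
    (100 * Real.log k ≤ (r : ℝ)) → ((r : ℝ) ≤ 2 + 2 * Real.sqrt (k * Real.log k)) →
    n = 2 * k + r →
    (Nat.card {F : Finset (Finset ℕ) //
        (∀ S ∈ F, S ⊆ Finset.Icc 1 n ∧ S.card = k) ∧
        (∀ S ∈ F, ∀ T ∈ F, (S ∩ T).Nonempty) ∧
        (2 * k + 3 * r / 4).choose (k + r - 1) <
          (closureH ((Finset.Icc 1 n).erase (mostFreq n F)) k r
            ((F.filter fun S => mostFreq n F ∉ S).image
              fun S => (Finset.Icc 1 n).erase (mostFreq n F) \ S)).card} : ℝ) ≤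
      (2 : ℝ) ^ (((n - 1).choose (k - 1) : ℝ) - (n : ℝ) * ((2 * k).choose k : ℝ) / 2) := by
  classical
  refine ⟨16384, fun k hk r n h1 h2 hn => ?_⟩
  obtain ⟨t, ht, hrk, hmk, h3, h4⟩ := analytic k r hk h1 h2
  obtain ⟨H1, H2⟩ := numeric_nat k r (3 * r / 4) t n hn (by omega) ht hrk hmk h3 h4
  set m := 3 * r / 4 with hm
  obtain ⟨c, rfl⟩ : ∃ c, k = c + 1 + 1 := ⟨k - 2, by omega⟩
  obtain ⟨r, rfl⟩ : ∃ r', r = r' + 1 := ⟨r - 1, by omega⟩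
  have hcount := count_all c r m n hn (by omega) (by omega) H1 H2
  have hidx : c + 1 + 1 + (r + 1) - 1 = c + 1 + (r + 1) := by omega
  rw [hidx]
  rw [Nat.subtype_card ((powersetCard (c + 1 + 1) (Icc 1 n)).powerset.filter fun F =>
        (∀ S ∈ F, ∀ T ∈ F, (S ∩ T).Nonempty) ∧
        Bad n (c + 1 + 1) (r + 1) ((2 * (c + 1 + 1) + m).choose (c + 1 + (r + 1))) F) (by
    intro F
    rw [mem_filter, mem_powerset]
    refine and_congr ?_ Iff.rfl
    constructor
    · intro h S hS; exact mem_powersetCard.1 (h hS)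
    · intro h S hS; exact mem_powersetCard.2 (h S hS))]
  generalize #((powersetCard (c + 1 + 1) (Icc 1 n)).powerset.filter fun F =>
        (∀ S ∈ F, ∀ T ∈ F, (S ∩ T).Nonempty) ∧
        Bad n (c + 1 + 1) (r + 1) ((2 * (c + 1 + 1) + m).choose (c + 1 + (r + 1))) F) = X at hcount ⊢
  have hc4 : (2 * (c + 1 + 1)).choose (c + 1 + 1) ≤ 4 ^ (c + 1 + 1) := by
    rw [show (4 : ℕ) = 2 ^ 2 by norm_num, ← pow_mul]
    exact Nat.choose_le_two_pow _ _
  have hc4' : ((2 * (c + 1 + 1)).choose (c + 1 + 1) : ℝ) ≤ ((4 ^ (c + 1 + 1) : ℕ) : ℝ) := by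
    exact_mod_cast hc4
  have hcr : (X : ℝ) * (2 : ℝ) ^ (n * 4 ^ (c + 1 + 1)) ≤ (2 : ℝ) ^ ((n - 1).choose (c + 1)) := by
    exact_mod_cast hcount
  have hle : (X : ℝ) ≤
      (2 : ℝ) ^ ((((n - 1).choose (c + 1) : ℕ) : ℝ) - ((n * 4 ^ (c + 1 + 1) : ℕ) : ℝ)) := by
    rw [Real.rpow_sub (by norm_num), Real.rpow_natCast, Real.rpow_natCast,
      le_div_iff₀ (by positivity)]
    exact hcr
  refine hle.trans ?_
  apply Real.rpow_le_rpow_of_exponent_le (by norm_num)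
  have hn0 : (0 : ℝ) ≤ n := by positivity
  have h5 : (n : ℝ) * ((2 * (c + 1 + 1)).choose (c + 1 + 1) : ℝ) ≤
      n * ((4 ^ (c + 1 + 1) : ℕ) : ℝ) := mul_le_mul_of_nonneg_left hc4' hn0
  have h6 : 0 ≤ (n : ℝ) * ((2 * (c + 1 + 1)).choose (c + 1 + 1) : ℝ) := by positivity
  rw [Nat.cast_mul]
  have h7 : c + 1 + 1 - 1 = c + 1 := rfl
  rw [h7]
  linarith
end
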